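/- arXiv:2010.06153 — 9 statements merged into one kernel-verified Lean document; each statement's English description precedes it below -/
import Mathlib

section
/- Let θ ∈ ℝ, α > 0, b > 0, c ≥ 0 with θ²·c < b², and set β = √(θ²(1+α²) + b²). Then for every s ≥ α, the derivative of the phase function φ(s) = β·√(1 + c + s²) + αθs is strictly positive: φ′(s) = β·s/√(1 + c + s²) + αθ > 0. Consequently φ is strictly increasing on [α, ∞). -/
/-- The phase function φ(s) = β·√(1 + c + s²) + αθs, with β = √(θ²(1+α²) + b²),
has strictly positive derivative φ′(s) = β·s/√(1 + c + s²) + αθ at every s ≥ α,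
and consequently φ is strictly increasing on [α, ∞). Here c plays the role of a²/x²
and the hypothesis θ²c < b² corresponds to |x| > |θa|/b. -/
theorem stmt_2 (θ α b c : ℝ) (hα : 0 < α) (hb : 0 < b) (hc : 0 ≤ c)
    (hcb : θ ^ 2 * c < b ^ 2)
    (β : ℝ) (hβ : β = Real.sqrt (θ ^ 2 * (1 + α ^ 2) + b ^ 2))
    (φ : ℝ → ℝ) (hφ : ∀ s, φ s = β * Real.sqrt (1 + c + s ^ 2) + α * θ * s) :
    (∀ s, α ≤ s →
        HasDerivAt φ (β * s / Real.sqrt (1 + c + s ^ 2) + α * θ) s ∧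
          0 < β * s / Real.sqrt (1 + c + s ^ 2) + α * θ) ∧
      StrictMonoOn φ (Set.Ici α) := by
  have key : ∀ s, α ≤ s →
        HasDerivAt φ (β * s / Real.sqrt (1 + c + s ^ 2) + α * θ) s ∧
          0 < β * s / Real.sqrt (1 + c + s ^ 2) + α * θ := by
    intro s hs
    have hs0 : 0 < s := lt_of_lt_of_le hα hs
    have hR : 0 < 1 + c + s ^ 2 := by positivity
    have hRs : 0 < Real.sqrt (1 + c + s ^ 2) := Real.sqrt_pos.2 hR
    have hR2 := Real.sq_sqrt hR.le
    have hβ0 : 0 ≤ β := by rw [hβ]; exact Real.sqrt_nonneg _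
    have hβ2 : β ^ 2 = θ ^ 2 * (1 + α ^ 2) + b ^ 2 := by
      rw [hβ]; exact Real.sq_sqrt (by positivity)
    constructor
    · have h1 : HasDerivAt (fun x : ℝ => 1 + c + x ^ 2) (2 * s) s := by
        simpa using (hasDerivAt_pow 2 s).const_add (1 + c)
      have h2 := ((h1.sqrt hR.ne').const_mul β).add ((hasDerivAt_id s).const_mul (α * θ))
      have he : φ = (fun x => β * Real.sqrt (1 + c + x ^ 2)) + fun x => α * θ * id x := by
        funext x; simp [hφ]
      rw [he]
      have h6 : β * s / Real.sqrt (1 + c + s ^ 2) + α * θ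
          = β * (2 * s / (2 * Real.sqrt (1 + c + s ^ 2))) + α * θ * 1 := by
        rw [mul_div_mul_left _ _ (two_ne_zero), mul_one, mul_div_assoc]
      rw [h6]
      exact h2
    · have hsq : α ^ 2 ≤ s ^ 2 := by gcongr
      have h3 : (α * θ * Real.sqrt (1 + c + s ^ 2)) ^ 2 < (β * s) ^ 2 := by
        rw [mul_pow, hR2, mul_pow β, hβ2]
        have e1 : 0 ≤ θ ^ 2 * (s ^ 2 - α ^ 2) := mul_nonneg (sq_nonneg _) (by linarith)
        have e2 : 0 ≤ b ^ 2 * (s ^ 2 - α ^ 2) := mul_nonneg (sq_nonneg _) (by linarith)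
        have e3 : 0 < α ^ 2 * (b ^ 2 - θ ^ 2 * c) := mul_pos (by positivity) (by linarith)
        nlinarith
      have h4 := (abs_lt_of_sq_lt_sq' h3 (by positivity)).1
      have h5 : β * s / Real.sqrt (1 + c + s ^ 2) + α * θ
          = (β * s + α * θ * Real.sqrt (1 + c + s ^ 2)) / Real.sqrt (1 + c + s ^ 2) := by
        field_simp
      rw [h5]
      exact div_pos (by linarith) hRs
  refine ⟨key, strictMonoOn_of_deriv_pos (convex_Ici α) ?_ ?_⟩
  · intro s hs
    exact (key s hs).1.continuousAt.continuousWithinAt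
  · intro s hs
    have hs' := key s (interior_subset hs)
    rw [hs'.1.deriv]
    exact hs'.2
end

section
/- Let r ∈ ℝ and q > 0. Then for every s > 0, |∫_s^∞ y^{r−1}·e^{−qy} dy − (1/q)·s^{r−1}·e^{−qs}| ≤ (|r−1|/(q·s))·∫_s^∞ y^{r−1}·e^{−qy} dy. -/
open MeasureTheory Real Set

lemma aux_int (p q s : ℝ) (hq : 0 < q) (hs : 0 < s) :
    IntegrableOn (fun y : ℝ => y ^ p * Real.exp (-q * y)) (Ioi s) := by
  apply integrable_of_isBigO_exp_neg (half_pos hq)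
  · intro x hx
    have hx0 : x ≠ 0 := (lt_of_lt_of_le hs hx).ne'
    apply ContinuousAt.continuousWithinAt
    exact (Real.continuousAt_rpow_const x p (Or.inl hx0)).mul (by fun_prop)
  · have h := (isLittleO_rpow_exp_pos_mul_atTop p (half_pos hq)).isBigO.mul
      (Asymptotics.isBigO_refl (fun x : ℝ => Real.exp (-q * x)) Filter.atTop)
    refine h.congr_right fun x => ?_
    rw [← Real.exp_add]
    congr 1
    ring

/-- Relative-error bound for the incomplete-gamma-type integral: for any r ∈ ℝ, q > 0
and s > 0,
|∫_s^∞ y^{r−1}e^{−qy} dy − (1/q)s^{r−1}e^{−qs}| ≤ (|r−1|/(qs))·∫_s^∞ y^{r−1}e^{−qy} dy. -/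
theorem stmt_8 (r q : ℝ) (hq : 0 < q) :
    ∀ s : ℝ, 0 < s →
      |(∫ y in Ioi s, y ^ (r - 1) * Real.exp (-q * y)) -
          (1 / q) * s ^ (r - 1) * Real.exp (-q * s)| ≤
        (|r - 1| / (q * s)) * ∫ y in Ioi s, y ^ (r - 1) * Real.exp (-q * y) := by
  intro s hs
  have hI := aux_int (r - 1) q s hq hs
  have hJ := aux_int (r - 1 - 1) q s hq hs
  have hF := integral_Ioi_of_hasDerivAt_of_tendsto'
    (f := fun y : ℝ => y ^ (r - 1) * Real.exp (-q * y))
    (f' := fun y : ℝ => (r - 1) * (y ^ (r - 1 - 1) * Real.exp (-q * y))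
      - q * (y ^ (r - 1) * Real.exp (-q * y))) (a := s) (m := 0)
    (by
      intro x hx
      have hx0 : x ≠ 0 := (lt_of_lt_of_le hs hx).ne'
      have h1 := Real.hasDerivAt_rpow_const (x := x) (p := r - 1) (Or.inl hx0)
      have h2 := ((hasDerivAt_id x).const_mul (-q)).exp
      refine (h1.mul h2).congr_deriv ?_
      simp only [id]
      ring)
    ((hJ.const_mul _).sub (hI.const_mul _))
    (tendsto_rpow_mul_exp_neg_mul_atTop_nhds_zero _ _ hq)
  rw [integral_sub (hJ.const_mul _) (hI.const_mul _), integral_const_mul,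
    integral_const_mul] at hF
  have hJ0 : 0 ≤ ∫ y in Ioi s, y ^ (r - 1 - 1) * Real.exp (-q * y) :=
    setIntegral_nonneg measurableSet_Ioi fun y hy =>
      mul_nonneg (Real.rpow_nonneg (hs.trans hy).le _) (Real.exp_pos _).le
  have hle : (∫ y in Ioi s, y ^ (r - 1 - 1) * Real.exp (-q * y)) ≤
      ∫ y in Ioi s, s⁻¹ * (y ^ (r - 1) * Real.exp (-q * y)) := by
    refine setIntegral_mono_on hJ (hI.const_mul _) measurableSet_Ioi fun y hy => ?_
    have hy0 : 0 < y := hs.trans hy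
    rw [← mul_assoc]
    refine mul_le_mul_of_nonneg_right ?_ (Real.exp_pos _).le
    rw [Real.rpow_sub_one hy0.ne', div_eq_inv_mul]
    exact mul_le_mul_of_nonneg_right (inv_anti₀ hs (le_of_lt hy)) (Real.rpow_nonneg hy0.le _)
  rw [integral_const_mul] at hle
  set I := ∫ y in Ioi s, y ^ (r - 1) * Real.exp (-q * y)
  set J := ∫ y in Ioi s, y ^ (r - 1 - 1) * Real.exp (-q * y)
  have key : I - (1 / q) * s ^ (r - 1) * Real.exp (-q * s) = (r - 1) / q * J := by
    field_simp
    simp only [neg_mul] at hF ⊢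
    linarith
  rw [key, abs_mul, abs_div, abs_of_pos hq, abs_of_nonneg hJ0]
  calc |r - 1| / q * J ≤ |r - 1| / q * (s⁻¹ * I) := by gcongr
    _ = _ := by field_simp
end

section
/- Let p ∈ ℝ, θ ∈ ℝ, α > 0, b > 0, and set β = √(θ²(1+α²) + b²), γ = β + θ·√(1+α²), φ(s) = β·√(1+s²) + αθ·s (so φ(α) = β·√(1+α²) + α²θ). Then as v → ∞, ∫_α^∞ (1+s²)^{(p−3/2)/2}·e^{−v·φ(s)} ds = [(1+α²)^{(2p−1)/4}/(α·γ)]·v^{−1}·e^{−v·φ(α)}·(1 + O(1/v)); that is, there exist M > 0 and v₀ > 0 such that for all v ≥ v₀, the ratio of the left side to (1+α²)^{(2p−1)/4}/(αγ)·v^{−1}e^{−vφ(α)} differs from 1 by at most M/v. -/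
open MeasureTheory Real Set

lemma aux_laplace (α c L K g : ℝ) (hc : 0 < c) (hL : 0 ≤ L) (hK : 0 ≤ K) (hg : 0 < g)
    (f φ φ' : ℝ → ℝ) (hfm : Continuous f) (hφm : Continuous φ) (hφ'm : Continuous φ')
    (hd : ∀ s, HasDerivAt φ (φ' s) s)
    (hφ' : ∀ s, α ≤ s → 0 ≤ φ' s)
    (hlow : ∀ s, α ≤ s → φ α + c * (s - α) ≤ φ s)
    (hk : ∀ s, α ≤ s → |f s - g * φ' s| ≤ L * (s - α) * Real.exp (K * (s - α))) :
    ∃ M > (0 : ℝ), ∃ v₀ > (0 : ℝ), ∀ v, v₀ ≤ v →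
      |(∫ s in Ioi α, f s * Real.exp (-v * φ s)) / (g * v⁻¹ * Real.exp (-v * φ α)) - 1|
        ≤ M / v := by
  refine ⟨16 * L / (c ^ 2 * g) + 1, by positivity, 2 * K / c + 1, by positivity, ?_⟩
  intro v hv
  have hv0 : 0 < v := lt_of_lt_of_le (by positivity) hv
  have hvK : K ≤ v * c / 2 := by
    have h1 : 2 * K / c ≤ v := by linarith
    rw [div_le_iff₀ hc] at h1
    linarith
  set E := Real.exp (-v * φ α) with hE
  have hEpos : 0 < E := Real.exp_pos _
  -- exact integral
  have hder : ∀ s ∈ Ici α, HasDerivAt (fun s => -(v⁻¹ * Real.exp (-v * φ s)))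
      (φ' s * Real.exp (-v * φ s)) s := by
    intro s _
    have h := (((hd s).const_mul (-v)).exp.const_mul v⁻¹).neg
    refine HasDerivAt.congr_deriv h ?_
    field_simp
  have hpos : ∀ s ∈ Ioi α, 0 ≤ φ' s * Real.exp (-v * φ s) := fun s hs =>
    mul_nonneg (hφ' s (le_of_lt hs)) (Real.exp_pos _).le
  have htφ : Filter.Tendsto φ Filter.atTop Filter.atTop := by
    have h1 : Filter.Tendsto (fun s : ℝ => φ α + c * (s - α)) Filter.atTop Filter.atTop :=
      Filter.tendsto_atTop_add_const_left _ _
        ((Filter.tendsto_atTop_add_const_right _ (-α) Filter.tendsto_id).const_mul_atTop hc)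
    refine Filter.tendsto_atTop_mono' _ ?_ h1
    filter_upwards [Filter.eventually_ge_atTop α] with s hs using hlow s hs
  have ht : Filter.Tendsto (fun s => -(v⁻¹ * Real.exp (-v * φ s))) Filter.atTop (nhds 0) := by
    have h1 : Filter.Tendsto (fun s => Real.exp (-v * φ s)) Filter.atTop (nhds 0) :=
      Real.tendsto_exp_atBot.comp (htφ.const_mul_atTop_of_neg (by linarith))
    simpa using (h1.const_mul v⁻¹).neg
  have hint1 : IntegrableOn (fun s => φ' s * Real.exp (-v * φ s)) (Ioi α) :=
    integrableOn_Ioi_deriv_of_nonneg' hder hpos ht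
  have hval1 : ∫ s in Ioi α, φ' s * Real.exp (-v * φ s) = v⁻¹ * E := by
    rw [integral_Ioi_of_hasDerivAt_of_nonneg' hder hpos ht]
    simp [hE]
  -- remainder
  have hm : -(v * c / 4) < 0 := by
    have : 0 < v * c / 4 := by positivity
    linarith
  have hbd : ∀ s ∈ Ioi α, ‖(f s - g * φ' s) * Real.exp (-v * φ s)‖ ≤
      (4 * L / (v * c) * E * Real.exp (v * c / 4 * α)) * Real.exp (-(v * c / 4) * s) := by
    intro s hs
    have hs' : α ≤ s := le_of_lt hs
    have ht0 : 0 ≤ s - α := by linarith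
    rw [Real.norm_eq_abs, abs_mul, abs_of_pos (Real.exp_pos _)]
    have h1 : Real.exp (-v * φ s) ≤ E * Real.exp (-(v * c) * (s - α)) := by
      rw [hE, ← Real.exp_add]
      apply Real.exp_le_exp.2
      nlinarith [mul_le_mul_of_nonneg_left (hlow s hs') hv0.le]
    have h2 : Real.exp (K * (s - α)) ≤ Real.exp (v * c / 2 * (s - α)) := by
      apply Real.exp_le_exp.2
      exact mul_le_mul_of_nonneg_right hvK ht0
    have h3 : s - α ≤ 4 / (v * c) * Real.exp (v * c / 4 * (s - α)) := by
      have := Real.add_one_le_exp (v * c / 4 * (s - α))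
      calc s - α = 4 / (v * c) * (v * c / 4 * (s - α)) := by field_simp
        _ ≤ _ := by
          apply mul_le_mul_of_nonneg_left _ (by positivity)
          linarith
    calc |f s - g * φ' s| * Real.exp (-v * φ s)
        ≤ (L * (4 / (v * c) * Real.exp (v * c / 4 * (s - α))) * Real.exp (v * c / 2 * (s - α)))
          * (E * Real.exp (-(v * c) * (s - α))) := by
          apply mul_le_mul _ h1 (Real.exp_pos _).le (by positivity)
          refine (hk s hs').trans ?_
          gcongr
      _ = 4 * L / (v * c) * E * (Real.exp (v * c / 4 * (s - α)) * Real.exp (v * c / 2 * (s - α))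
            * Real.exp (-(v * c) * (s - α))) := by ring
      _ = 4 * L / (v * c) * E * (Real.exp (v * c / 4 * α) * Real.exp (-(v * c / 4) * s)) := by
          rw [← Real.exp_add, ← Real.exp_add, ← Real.exp_add]
          congr 2
          ring
      _ = _ := by ring
  have hint3 : IntegrableOn (fun s => (4 * L / (v * c) * E * Real.exp (v * c / 4 * α)) *
      Real.exp (-(v * c / 4) * s)) (Ioi α) := (integrableOn_exp_mul_Ioi hm α).const_mul _
  have hint2 : IntegrableOn (fun s => (f s - g * φ' s) * Real.exp (-v * φ s)) (Ioi α) := by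
    refine Integrable.mono' hint3 ?_ ?_
    · exact (Continuous.aestronglyMeasurable (by fun_prop))
    · exact (ae_restrict_iff' measurableSet_Ioi).2 (Filter.Eventually.of_forall hbd)
  have hR : |∫ s in Ioi α, (f s - g * φ' s) * Real.exp (-v * φ s)| ≤ 16 * L / (v * c) ^ 2 * E := by
    rw [← Real.norm_eq_abs]
    refine (norm_integral_le_of_norm_le hint3
      ((ae_restrict_iff' measurableSet_Ioi).2 (Filter.Eventually.of_forall hbd))).trans ?_
    rw [integral_const_mul, integral_exp_mul_Ioi hm]
    have : Real.exp (v * c / 4 * α) * Real.exp (-(v * c / 4) * α) = 1 := by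
      rw [← Real.exp_add]; simp
    apply le_of_eq
    calc _ = (Real.exp (v * c / 4 * α) * Real.exp (-(v * c / 4) * α)) *
          (4 * L / (v * c) * E / (v * c / 4)) := by
            rw [neg_div_neg_eq]; ring
      _ = _ := by rw [this]; field_simp; ring
  have hI : ∫ s in Ioi α, f s * Real.exp (-v * φ s) =
      g * v⁻¹ * E + ∫ s in Ioi α, (f s - g * φ' s) * Real.exp (-v * φ s) := by
    rw [mul_assoc, ← hval1, ← integral_const_mul, ← integral_add (hint1.const_mul g) hint2]
    congr 1
    ext s
    ring
  rw [hI, add_div, div_self (by positivity), add_sub_cancel_left, abs_div,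
    abs_of_pos (by positivity : 0 < g * v⁻¹ * E), div_le_iff₀ (by positivity)]
  refine hR.trans ?_
  have : (16 * L / (c ^ 2 * g) + 1) / v * (g * v⁻¹ * E) =
    16 * L / (v * c) ^ 2 * E + g / v ^ 2 * E := by field_simp
  rw [this]
  have : 0 ≤ g / v ^ 2 * E := by positivity
  linarith

lemma aux_f (q α s : ℝ) (hα : 0 < α) (hs : α ≤ s) :
    |(1 + s ^ 2) ^ q - (1 + α ^ 2) ^ q| ≤
      (1 + α ^ 2) ^ q * (2 * |q|) * (s - α) * Real.exp (2 * |q| * (s - α)) := by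
  have ha : 0 < 1 + α ^ 2 := by positivity
  have hb : 0 < 1 + s ^ 2 := by positivity
  set u := Real.log (1 + s ^ 2) - Real.log (1 + α ^ 2) with hu
  have hu0 : 0 ≤ u := sub_nonneg.2 (Real.log_le_log ha (by nlinarith))
  have hu1 : u ≤ 2 * (s - α) := by
    rw [hu, sub_le_iff_le_add, Real.log_le_iff_le_exp hb, Real.exp_add, Real.exp_log ha]
    have h1 := Real.add_one_le_exp (s - α)
    have h2 : (s - α + 1) ^ 2 ≤ Real.exp (2 * (s - α)) := by
      rw [two_mul, Real.exp_add, sq]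
      exact mul_self_le_mul_self (by linarith) h1
    refine le_trans ?_ (mul_le_mul_of_nonneg_right h2 ha.le)
    obtain ⟨t, rfl⟩ : ∃ t, s = α + t := ⟨s - α, by ring⟩
    have ht : 0 ≤ t := by linarith
    have : 0 ≤ α ^ 2 * t ^ 2 := by positivity
    have h5 : 0 ≤ t * ((α - 1) ^ 2 + (α ^ 2 + 1)) := by positivity
    nlinarith
  have he : (1 + s ^ 2) ^ q = (1 + α ^ 2) ^ q * Real.exp (q * u) := by
    rw [Real.rpow_def_of_pos ha, Real.rpow_def_of_pos hb, ← Real.exp_add, hu]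
    congr 1; ring
  have hfa : 0 < (1 + α ^ 2) ^ q := Real.rpow_pos_of_pos ha _
  have hexp : ∀ x : ℝ, |Real.exp x - 1| ≤ |x| * Real.exp |x| := by
    intro x
    have h1 := Real.add_one_le_exp x
    have h2 := Real.add_one_le_exp (-x)
    have h3 : Real.exp x * Real.exp (-x) = 1 := by rw [← Real.exp_add]; simp
    have h4 := Real.exp_pos x
    rcases le_total 0 x with hx | hx
    · have : 1 ≤ Real.exp x := by linarith
      rw [abs_of_nonneg (by linarith), abs_of_nonneg hx]
      nlinarith
    · have : Real.exp x ≤ 1 := Real.exp_le_one_iff.2 hx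
      rw [abs_of_nonpos (by linarith), abs_of_nonpos hx]
      have : 1 ≤ Real.exp (-x) := by linarith
      nlinarith
  have hqu : |q * u| ≤ 2 * |q| * (s - α) := by
    rw [abs_mul, abs_of_nonneg hu0]
    nlinarith [abs_nonneg q, mul_le_mul_of_nonneg_left hu1 (abs_nonneg q)]
  calc |(1 + s ^ 2) ^ q - (1 + α ^ 2) ^ q| = (1 + α ^ 2) ^ q * |Real.exp (q * u) - 1| := by
        rw [he, ← mul_sub_one, abs_mul, abs_of_pos hfa]
    _ ≤ (1 + α ^ 2) ^ q * ((2 * |q| * (s - α)) * Real.exp (2 * |q| * (s - α))) := by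
        apply mul_le_mul_of_nonneg_left _ hfa.le
        refine (hexp _).trans ?_
        have := (abs_nonneg (q * u)).trans hqu
        gcongr
    _ = _ := by ring

/-- Key Laplace endpoint asymptotic (case a = 0 of equation (12)): with
β = √(θ²(1+α²) + b²), γ = β + θ√(1+α²) and phase φ(s) = β√(1+s²) + αθs,
∫_α^∞ (1+s²)^{(p−3/2)/2} e^{−vφ(s)} ds
  = [(1+α²)^{(2p−1)/4}/(αγ)]·v^{−1}·e^{−vφ(α)}·(1 + O(1/v))  as v → ∞. -/
theorem stmt_11 (p θ α b : ℝ) (hα : 0 < α) (hb : 0 < b)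
    (β γ : ℝ) (hβ : β = Real.sqrt (θ ^ 2 * (1 + α ^ 2) + b ^ 2))
    (hγ : γ = β + θ * Real.sqrt (1 + α ^ 2))
    (φ : ℝ → ℝ) (hφ : ∀ s, φ s = β * Real.sqrt (1 + s ^ 2) + α * θ * s) :
    ∃ M > (0 : ℝ), ∃ v₀ > (0 : ℝ), ∀ v, v₀ ≤ v →
      |(∫ s in Ioi α, (1 + s ^ 2) ^ ((p - 3 / 2) / 2) * Real.exp (-v * φ s)) /
          ((1 + α ^ 2) ^ ((2 * p - 1) / 4) / (α * γ) * v⁻¹ * Real.exp (-v * φ α)) - 1|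
        ≤ M / v := by
  have ha : 0 < 1 + α ^ 2 := by positivity
  set A := Real.sqrt (1 + α ^ 2) with hA
  have hA0 : 0 < A := Real.sqrt_pos.2 ha
  have hA2 : A ^ 2 = 1 + α ^ 2 := Real.sq_sqrt ha.le
  have hA1 : 1 ≤ A := by nlinarith
  have hβ0 : 0 < β := by rw [hβ]; exact Real.sqrt_pos.2 (by positivity)
  have hβ2 : β ^ 2 = θ ^ 2 * (1 + α ^ 2) + b ^ 2 := by rw [hβ]; exact Real.sq_sqrt (by positivity)
  have hγ0 : 0 < γ := by
    have h1 : |θ * A| < β := by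
      refine abs_lt_of_sq_lt_sq ?_ hβ0.le
      rw [mul_pow, hA2, hβ2]
      have : 0 < b ^ 2 := by positivity
      linarith
    have := (abs_lt.1 h1).1
    rw [hγ]; linarith
  set q := (p - 3 / 2) / 2 with hq
  set c := α * γ / A with hc
  have hc0 : 0 < c := by positivity
  have hF0 : 0 < (1 + α ^ 2) ^ q := Real.rpow_pos_of_pos ha _
  set g := (1 + α ^ 2) ^ ((2 * p - 1) / 4) / (α * γ) with hg
  have hg0 : 0 < g := by
    have := Real.rpow_pos_of_pos ha ((2 * p - 1) / 4)
    positivity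
  have hgc : g * c = (1 + α ^ 2) ^ q := by
    have h1 : (1 + α ^ 2) ^ ((2 * p - 1) / 4) = (1 + α ^ 2) ^ q * A := by
      rw [hA, Real.sqrt_eq_rpow, ← Real.rpow_add ha]
      congr 1
      rw [hq]; ring
    rw [hg, hc, h1]
    field_simp
  have hφeq : φ = fun s => β * Real.sqrt (1 + s ^ 2) + α * θ * s := funext hφ
  have hne : ∀ s : ℝ, 1 + s ^ 2 ≠ 0 := fun s => by positivity
  have hsp : ∀ s : ℝ, 0 < Real.sqrt (1 + s ^ 2) := fun s => Real.sqrt_pos.2 (by positivity)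
  have hcα : c = β * (α / A) + α * θ := by
    rw [hc, hγ]; field_simp
  have hmono : ∀ s, α ≤ s → α / A ≤ s / Real.sqrt (1 + s ^ 2) := by
    intro s hs
    rw [div_le_div_iff₀ hA0 (hsp s)]
    have hs0 : 0 < s := by linarith
    refine le_of_abs_le (abs_le_of_sq_le_sq ?_ (by positivity))
    rw [mul_pow, mul_pow, hA2, Real.sq_sqrt (by positivity)]
    nlinarith
  have hup : ∀ s, α ≤ s → s / Real.sqrt (1 + s ^ 2) ≤ α / A + (s - α) := by
    intro s hs
    have h1 : A ≤ Real.sqrt (1 + s ^ 2) := Real.sqrt_le_sqrt (by nlinarith)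
    calc s / Real.sqrt (1 + s ^ 2) ≤ s / A :=
          div_le_div_of_nonneg_left (by linarith) hA0 h1
      _ = α / A + (s - α) / A := by ring
      _ ≤ _ := by
        have := div_le_self (sub_nonneg.2 hs) hA1
        linarith
  refine aux_laplace α c ((1 + α ^ 2) ^ q * (2 * |q|) + g * β) (2 * |q|) g hc0 (by positivity)
    (by positivity) hg0 (fun s => (1 + s ^ 2) ^ q) φ
    (fun s => β * (s / Real.sqrt (1 + s ^ 2)) + α * θ) ?_ ?_ ?_ ?_ ?_ ?_ ?_
  · exact Continuous.rpow_const (by fun_prop) (fun s => Or.inl (hne s))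
  · rw [hφeq]; fun_prop
  · have : Continuous fun s : ℝ => s / Real.sqrt (1 + s ^ 2) :=
      Continuous.div (by fun_prop) (by fun_prop) (fun s => (hsp s).ne')
    fun_prop
  · intro s
    rw [hφeq]
    have h1 : HasDerivAt (fun s : ℝ => 1 + s ^ 2) (2 * s) s := by
      simpa using (hasDerivAt_pow 2 s).const_add 1
    have h2 := ((h1.sqrt (hne s)).const_mul β).add ((hasDerivAt_id s).const_mul (α * θ))
    refine HasDerivAt.congr_deriv h2 ?_
    have := (hsp s).ne'
    field_simp
  · intro s hs
    have := mul_le_mul_of_nonneg_left (hmono s hs) hβ0.le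
    show 0 ≤ β * (s / Real.sqrt (1 + s ^ 2)) + α * θ
    linarith
  · intro s hs
    rw [hφ, hφ, hcα, ← hA]
    have h1 : 1 + α * s ≤ A * Real.sqrt (1 + s ^ 2) := by
      refine le_of_abs_le (abs_le_of_sq_le_sq ?_ (by positivity))
      rw [mul_pow, hA2, Real.sq_sqrt (by positivity)]
      nlinarith [sq_nonneg (s - α)]
    have h2 : A + α / A * (s - α) ≤ Real.sqrt (1 + s ^ 2) := by
      have h3 : A + α / A * (s - α) = (1 + α * s) / A := by
        field_simp
        rw [hA2]; ring
      rw [h3, div_le_iff₀ hA0]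
      linarith
    nlinarith [mul_le_mul_of_nonneg_left h2 hβ0.le]
  · intro s hs
    have ht0 : 0 ≤ s - α := by linarith
    have h1 := aux_f q α s hα hs
    have h2 : |β * (s / Real.sqrt (1 + s ^ 2)) + α * θ - c| ≤ β * (s - α) := by
      have e : β * (s / Real.sqrt (1 + s ^ 2)) + α * θ - c =
        β * (s / Real.sqrt (1 + s ^ 2) - α / A) := by rw [hcα]; ring
      rw [e, abs_mul, abs_of_pos hβ0, abs_of_nonneg (sub_nonneg.2 (hmono s hs))]
      apply mul_le_mul_of_nonneg_left _ hβ0.le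
      linarith [hup s hs]
    have h3 : 1 ≤ Real.exp (2 * |q| * (s - α)) := Real.one_le_exp (by positivity)
    show |(1 + s ^ 2) ^ q - g * (β * (s / Real.sqrt (1 + s ^ 2)) + α * θ)| ≤ _
    have e : (1 + s ^ 2) ^ q - g * (β * (s / Real.sqrt (1 + s ^ 2)) + α * θ) =
      ((1 + s ^ 2) ^ q - (1 + α ^ 2) ^ q) - g * (β * (s / Real.sqrt (1 + s ^ 2)) + α * θ - c) := by
      rw [← hgc]; ring
    rw [e]
    refine (abs_sub _ _).trans ?_
    rw [abs_mul g, abs_of_pos hg0]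
    have h4 : g * |β * (s / Real.sqrt (1 + s ^ 2)) + α * θ - c| ≤
        g * (β * (s - α)) * Real.exp (2 * |q| * (s - α)) :=
      (mul_le_mul_of_nonneg_left h2 hg0.le).trans
        (le_mul_of_one_le_right (by positivity) h3)
    linarith
end

section
/- Let p > 0, b > 0, θ ∈ ℝ. Let W be a random variable with the Gamma distribution of shape p and rate b²/2 (density (b²/2)^p·w^{p−1}·e^{−(b²/2)w}/Γ(p) on (0, ∞)) and let Z₁ be standard normal, independent of W. Set X₁ = θW + √W·Z₁ and δ = θ + √(θ² + b²). Then P(X₁ ≤ x) = A·|x|^{p−1}·e^{−δ|x|}·(1 + O(1/|x|)) as x → −∞, where A = [2^p·b^{−2p}·Γ(p)·(θ² + b²)^{p/2}·δ]^{−1}; that is, there exist M > 0 and x₀ < 0 such that for all x ≤ x₀, |P(X₁ ≤ x)/(A|x|^{p−1}e^{−δ|x|}) − 1| ≤ M/|x|. -/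
open MeasureTheory Real Set
open ProbabilityTheory in
lemma gam_tilt (p r t : ℝ) (hp : 0 < p) (hr : 0 < r) (ht : t < r) :
    ∫⁻ x, ENNReal.ofReal (Real.exp (t * x)) ∂(gammaMeasure p r) = ENNReal.ofReal ((r / (r - t)) ^ p) := by
  have h0 : 0 < r - t := by linarith
  rw [gammaMeasure, lintegral_withDensity_eq_lintegral_mul _ (by unfold gammaPDF; fun_prop) (by fun_prop)]
  have : ∀ x, (gammaPDF p r * fun x => ENNReal.ofReal (Real.exp (t * x))) x
      = ENNReal.ofReal ((r / (r - t)) ^ p) * gammaPDF p (r - t) x := by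
    intro x
    simp only [Pi.mul_apply, gammaPDF]
    rw [← ENNReal.ofReal_mul (gammaPDFReal_nonneg hp hr x), ← ENNReal.ofReal_mul (by positivity)]
    congr 1
    unfold gammaPDFReal
    split_ifs with hx
    · have : Real.exp (-((r - t) * x)) = Real.exp (-(r * x)) * Real.exp (t * x) := by
        rw [← Real.exp_add]; ring_nf
      rw [this, Real.div_rpow hr.le h0.le]
      have : (r - t) ^ p ≠ 0 := (Real.rpow_pos_of_pos h0 p).ne'
      field_simp
    · simp
  simp_rw [this]
  rw [lintegral_const_mul _ (by unfold gammaPDF; fun_prop), lintegral_gammaPDF_eq_one hp h0, mul_one]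

open ProbabilityTheory in
lemma ext_strip (μ ν : Measure ℝ) [IsProbabilityMeasure μ] [IsProbabilityMeasure ν] (L U : ℝ)
    (hL : L < 0) (hU : 0 < U)
    (h : ∀ t ∈ Ioo L U, ∫⁻ x, ENNReal.ofReal (Real.exp (t * x)) ∂μ
      = ∫⁻ x, ENNReal.ofReal (Real.exp (t * x)) ∂ν)
    (hfin : ∀ t ∈ Ioo L U, ∫⁻ x, ENNReal.ofReal (Real.exp (t * x)) ∂ν < ⊤) : μ = ν := by
  have int : ∀ m : Measure ℝ, (∀ t ∈ Ioo L U, ∫⁻ x, ENNReal.ofReal (Real.exp (t * x)) ∂m < ⊤) →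
      ∀ t ∈ Ioo L U, Integrable (fun x => Real.exp (t * x)) m := by
    intro m hm t ht
    refine ⟨by fun_prop, ?_⟩
    rw [hasFiniteIntegral_iff_ofReal (ae_of_all _ fun _ => (Real.exp_pos _).le)]
    exact hm t ht
  have hi : ∀ m : Measure ℝ, (∀ t ∈ Ioo L U, ∫⁻ x, ENNReal.ofReal (Real.exp (t * x)) ∂m < ⊤) →
      Ioo L U ⊆ interior (integrableExpSet id m) := by
    intro m hm
    refine interior_maximal ?_ isOpen_Ioo
    intro t ht
    exact int m hm t ht
  have hμ : ∀ t ∈ Ioo L U, ∫⁻ x, ENNReal.ofReal (Real.exp (t * x)) ∂μ < ⊤ := by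
    intro t ht; rw [h t ht]; exact hfin t ht
  have key : EqOn (complexMGF id μ) (complexMGF id ν) {z | z.re ∈ Ioo L U} := by
    refine AnalyticOnNhd.eqOn_of_preconnected_of_frequently_eq (z₀ := 0) ?_ ?_ ?_ ?_ ?_
    · exact analyticOnNhd_complexMGF.mono fun z hz => hi μ hμ hz
    · exact analyticOnNhd_complexMGF.mono fun z hz => hi ν hfin hz
    · exact ((convex_Ioo L U).linear_preimage Complex.reLm).isPreconnected
    · simp [hL, hU]
    · have hre : ∃ᶠ x : ℝ in nhdsWithin 0 {0}ᶜ, complexMGF id μ x = complexMGF id ν x := by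
        apply Filter.Eventually.frequently
        have : ∀ᶠ x : ℝ in nhdsWithin 0 {0}ᶜ, x ∈ Ioo L U :=
          nhdsWithin_le_nhds (Ioo_mem_nhds hL hU)
        filter_upwards [this] with x hx
        rw [complexMGF_ofReal, complexMGF_ofReal]
        congr 1
        simp only [mgf, id]
        rw [integral_eq_lintegral_of_nonneg_ae (ae_of_all _ fun _ => (Real.exp_pos _).le) (by fun_prop),
          integral_eq_lintegral_of_nonneg_ae (ae_of_all _ fun _ => (Real.exp_pos _).le) (by fun_prop),
          h x hx]
      rw [Filter.frequently_iff_seq_forall] at hre ⊢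
      obtain ⟨xs, hx, hxe⟩ := hre
      refine ⟨fun n => (xs n : ℂ), ?_, hxe⟩
      rw [tendsto_nhdsWithin_iff] at hx ⊢
      constructor
      · rw [← Complex.ofReal_zero]
        exact (Complex.continuous_ofReal.tendsto _).comp hx.1
      · filter_upwards [hx.2] with n hn
        simpa using hn
  apply Measure.ext_of_charFun
  ext t
  rw [← complexMGF_id_mul_I, ← complexMGF_id_mul_I]
  apply key
  simp [hL, hU]

lemma rpow_est (q d y s : ℝ) (hd : 0 < d) (hy : 0 < y) (hy2 : 4 * |q| / d ≤ y) (hs : 0 ≤ s) :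
    |(y + s) ^ q - y ^ q| ≤ y ^ q * (4 * |q| / d / y * Real.exp (d * s / 2)) := by
  have h1 : (y + s) ^ q = y ^ q * (1 + s / y) ^ q := by
    rw [← Real.mul_rpow hy.le (by positivity)]
    congr 1; field_simp
  have hh : 0 ≤ s / y := by positivity
  rw [h1, show y ^ q * (1 + s / y) ^ q - y ^ q = y ^ q * ((1 + s / y) ^ q - 1) by ring, abs_mul,
    abs_of_pos (Real.rpow_pos_of_pos hy q)]
  refine mul_le_mul_of_nonneg_left ?_ (by positivity)
  rw [Real.rpow_def_of_pos (by linarith)]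
  set a := Real.log (1 + s / y) * q with ha
  have hlog0 : 0 ≤ Real.log (1 + s / y) := Real.log_nonneg (by linarith)
  have hlog : Real.log (1 + s / y) ≤ s / y := by
    have := Real.log_le_sub_one_of_pos (show 0 < 1 + s / y by linarith)
    linarith
  have haa : |a| ≤ |q| * (s / y) := by
    rw [ha, abs_mul, abs_of_nonneg hlog0, mul_comm]
    exact mul_le_mul_of_nonneg_left hlog (abs_nonneg q)
  have hexp : |Real.exp a - 1| ≤ |a| * Real.exp |a| := by
    rcases le_total 0 a with h | h
    · have := Real.add_one_le_exp (-a)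
      rw [abs_of_nonneg h, abs_of_nonneg (by linarith [Real.add_one_le_exp a])]
      have h2 : Real.exp a * Real.exp (-a) = 1 := by rw [← Real.exp_add]; simp
      nlinarith [Real.exp_pos a]
    · have := Real.add_one_le_exp a
      have h3 : Real.exp a ≤ 1 := Real.exp_le_one_iff.2 h
      have h4 : 1 ≤ Real.exp |a| := Real.one_le_exp (abs_nonneg _)
      rw [abs_of_nonpos (a := Real.exp a - 1) (by linarith)]
      have : |a| = -a := abs_of_nonpos h
      nlinarith [abs_nonneg a]
  have hb : |q| * (s / y) ≤ d * s / 4 := by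
    have : |q| / y ≤ d / 4 := by
      rw [div_le_iff₀ hd] at hy2
      rw [div_le_iff₀ hy]; linarith
    calc |q| * (s / y) = |q| / y * s := by ring
      _ ≤ d / 4 * s := mul_le_mul_of_nonneg_right this hs
      _ = _ := by ring
  have hs2 : s ≤ 4 / d * Real.exp (d * s / 4) := by
    have := Real.add_one_le_exp (d * s / 4)
    calc s = 4 / d * (d * s / 4) := by field_simp
      _ ≤ _ := mul_le_mul_of_nonneg_left (by linarith) (by positivity)
  calc |Real.exp a - 1| ≤ |a| * Real.exp |a| := hexp
    _ ≤ (|q| * (s / y)) * Real.exp (d * s / 4) := by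
        gcongr; linarith
    _ ≤ (|q| * ((4 / d * Real.exp (d * s / 4)) / y)) * Real.exp (d * s / 4) := by gcongr
    _ = 4 * |q| / d / y * (Real.exp (d * s / 4) * Real.exp (d * s / 4)) := by ring
    _ = _ := by rw [← Real.exp_add]; ring_nf

lemma I_est (q d y g : ℝ) (hd : 0 < d) (hy : 0 < y) (hy2 : 4 * |q| / d ≤ y) (hg : 0 ≤ g) :
    |(∫ t in Ioi (0:ℝ), (y + g + t) ^ q * Real.exp (-d * t)) - y ^ q / d|
      ≤ y ^ q * (4 * |q| / d / y * Real.exp (d * g / 2)) * (2 / d) := by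
  have i1 : IntegrableOn (fun t : ℝ => Real.exp (-d * t)) (Ioi 0) :=
    integrableOn_exp_mul_Ioi (by linarith) 0
  have i2 : IntegrableOn (fun t : ℝ => Real.exp (-(d / 2) * t)) (Ioi 0) :=
    integrableOn_exp_mul_Ioi (by linarith) 0
  have e1 : ∫ t in Ioi (0:ℝ), Real.exp (-d * t) = 1 / d := by
    rw [integral_exp_mul_Ioi (by linarith)]; simp
  have e2 : ∫ t in Ioi (0:ℝ), Real.exp (-(d / 2) * t) = 2 / d := by
    rw [integral_exp_mul_Ioi (by linarith)]; simp
  set C := y ^ q * (4 * |q| / d / y * Real.exp (d * g / 2)) with hC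
  have bd : ∀ t ∈ Ioi (0:ℝ), ‖(y + g + t) ^ q * Real.exp (-d * t) - y ^ q * Real.exp (-d * t)‖
      ≤ C * Real.exp (-(d / 2) * t) := by
    intro t ht
    have ht : 0 < t := ht
    have := rpow_est q d y (g + t) hd hy hy2 (by linarith)
    rw [← sub_mul, norm_mul, Real.norm_eq_abs, Real.norm_eq_abs, abs_of_pos (Real.exp_pos _), add_assoc]
    refine (mul_le_mul_of_nonneg_right this (Real.exp_pos _).le).trans (le_of_eq ?_)
    have e : Real.exp (d * (g + t) / 2) = Real.exp (d * g / 2) * Real.exp (d * t / 2) := by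
      rw [← Real.exp_add]; ring_nf
    have e' : Real.exp (-(d / 2) * t) = Real.exp (d * t / 2) * Real.exp (-d * t) := by
      rw [← Real.exp_add]; ring_nf
    rw [hC, e, e']; ring
  have bd' : ∀ᵐ t ∂(volume.restrict (Ioi (0:ℝ))),
      ‖(y + g + t) ^ q * Real.exp (-d * t) - y ^ q * Real.exp (-d * t)‖
      ≤ C * Real.exp (-(d / 2) * t) := (ae_restrict_iff' measurableSet_Ioi).2 (ae_of_all _ bd)
  have i3 : IntegrableOn (fun t : ℝ => y ^ q * Real.exp (-d * t)) (Ioi 0) := i1.const_mul _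
  have i4 : IntegrableOn (fun t : ℝ => C * Real.exp (-(d / 2) * t)) (Ioi 0) := i2.const_mul _
  have i5 : IntegrableOn (fun t : ℝ => (y + g + t) ^ q * Real.exp (-d * t) - y ^ q * Real.exp (-d * t))
      (Ioi 0) := Integrable.mono' i4 (by fun_prop) bd'
  have i6 : IntegrableOn (fun t : ℝ => (y + g + t) ^ q * Real.exp (-d * t)) (Ioi 0) := by
    refine (Integrable.add i5 i3).congr (ae_of_all _ fun t => ?_)
    simp
  have := norm_integral_le_of_norm_le i4 bd'
  rw [integral_sub i6 i3, integral_const_mul, integral_const_mul, e1, e2, Real.norm_eq_abs] at this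
  rwa [mul_one_div] at this

open ProbabilityTheory in
lemma Q_form (p d u : ℝ) (hp : 0 < p) (hd : 0 < d) (hu : 0 < u) :
    (gammaMeasure p d).real (Ici u) = d ^ p / Real.Gamma p * Real.exp (-d * u) *
      ∫ t in Ioi (0:ℝ), (u + t) ^ (p - 1) * Real.exp (-d * t) := by
  have h1 : (gammaMeasure p d).real (Ici u) = ∫ x in Ici u, gammaPDFReal p d x := by
    rw [gammaMeasure, measureReal_def, withDensity_apply _ measurableSet_Ici]
    refine (integral_eq_lintegral_of_nonneg_ae ?_ ?_).symm
    · exact ae_of_all _ fun b ↦ by simp [gammaPDFReal_nonneg hp hd]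
    · fun_prop
  have h2 := (measurePreserving_add_left volume u).setIntegral_preimage_emb
    (MeasurableEquiv.addLeft u).measurableEmbedding (gammaPDFReal p d) (Ioi u)
  rw [h1, integral_Ici_eq_integral_Ioi, ← h2, ← integral_const_mul]
  have : (fun x => u + x) ⁻¹' Ioi u = Ioi 0 := by ext x; simp
  rw [this]
  refine setIntegral_congr_fun measurableSet_Ioi fun t (ht : 0 < t) => ?_
  have e : Real.exp (-(d * (u + t))) = Real.exp (-d * u) * Real.exp (-d * t) := by
    rw [← Real.exp_add]; ring_nf
  simp only [gammaPDFReal]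
  rw [if_pos (by linarith), e]
  ring

open ProbabilityTheory in
lemma gam_ae (p r : ℝ) : ∀ᵐ x ∂(gammaMeasure p r), 0 ≤ x := by
  rw [ae_iff, gammaMeasure]
  have : {a : ℝ | ¬ 0 ≤ a} = Iio 0 := by ext; simp
  rw [this, withDensity_apply _ measurableSet_Iio]
  exact lintegral_gammaPDF_of_nonpos le_rfl

open ProbabilityTheory in
lemma tail_est (p e d y : ℝ) (hp : 0 < p) (he : 0 < e) (hd : 0 < d) (hy : 0 < y)
    (hy2 : 4 * |p - 1| / d ≤ y) :
    |(((gammaMeasure p e).prod (gammaMeasure p d)).map (fun q => q.1 - q.2)).real (Iic (-y))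
      - d ^ p / Real.Gamma p * Real.exp (-d * y) * (y ^ (p - 1) / d) * (e / (e + d)) ^ p|
    ≤ d ^ p / Real.Gamma p * Real.exp (-d * y) * (y ^ (p - 1) * (4 * |p - 1| / d / y) * (2 / d)) := by
  have := isProbabilityMeasure_gammaMeasure hp he
  have := isProbabilityMeasure_gammaMeasure hp hd
  set K := d ^ p / Real.Gamma p * Real.exp (-d * y) with hK
  have hK0 : 0 < K := by have := Real.Gamma_pos_of_pos hp; positivity
  have h1 : (((gammaMeasure p e).prod (gammaMeasure p d)).map (fun q => q.1 - q.2)).real (Iic (-y))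
      = ∫ g, (gammaMeasure p d).real (Ici (y + g)) ∂(gammaMeasure p e) := by
    rw [map_measureReal_apply (by fun_prop) measurableSet_Iic, measureReal_def,
      Measure.prod_apply ((by fun_prop : Measurable fun q : ℝ × ℝ => q.1 - q.2) measurableSet_Iic),
      ← integral_toReal]
    · congr 1
      ext g
      rw [measureReal_def]
      congr 2
      ext t
      simp only [mem_preimage, mem_Iic, mem_Ici]
      constructor <;> intro h <;> linarith
    · exact (measurable_measure_prodMk_left ((by fun_prop : Measurable fun q : ℝ × ℝ => q.1 - q.2) measurableSet_Iic)).aemeasurable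
    · exact ae_of_all _ fun g => measure_lt_top _ _
  have hmeas : Measurable fun g => (gammaMeasure p d).real (Ici (y + g)) := by
    apply Antitone.measurable
    intro g g' h
    exact measureReal_mono (Ici_subset_Ici.2 (by linarith))
  have i1 : Integrable (fun g => (gammaMeasure p d).real (Ici (y + g))) (gammaMeasure p e) := by
    refine Integrable.mono' (integrable_const (1:ℝ)) hmeas.aestronglyMeasurable (ae_of_all _ fun g => ?_)
    rw [Real.norm_eq_abs, abs_of_nonneg measureReal_nonneg]
    exact measureReal_le_one
  have hl := gam_tilt p e (-d) hp he (by linarith)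
  rw [sub_neg_eq_add] at hl
  have i2 : Integrable (fun g => Real.exp (-d * g)) (gammaMeasure p e) := by
    refine ⟨by fun_prop, ?_⟩
    rw [hasFiniteIntegral_iff_ofReal (ae_of_all _ fun _ => (Real.exp_pos _).le), hl]
    exact ENNReal.ofReal_lt_top
  have e2 : ∫ g, Real.exp (-d * g) ∂(gammaMeasure p e) = (e / (e + d)) ^ p := by
    rw [integral_eq_lintegral_of_nonneg_ae (ae_of_all _ fun _ => (Real.exp_pos _).le) (by fun_prop), hl,
      ENNReal.toReal_ofReal (by positivity)]
  rw [h1, ← e2, ← integral_const_mul, ← integral_sub i1 (i2.const_mul _)]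
  have bd : ∀ᵐ g ∂(gammaMeasure p e), ‖(gammaMeasure p d).real (Ici (y + g)) -
      K * (y ^ (p - 1) / d) * Real.exp (-d * g)‖ ≤ K * (y ^ (p - 1) * (4 * |p - 1| / d / y) * (2 / d)) := by
    filter_upwards [gam_ae p e] with g hg
    rw [Q_form p d (y + g) hp hd (by linarith)]
    have e3 : Real.exp (-d * (y + g)) = Real.exp (-d * y) * Real.exp (-d * g) := by
      rw [← Real.exp_add]; ring_nf
    have := I_est (p - 1) d y g hd hy hy2 hg
    rw [e3, ← mul_assoc, ← hK]
    set I := ∫ t in Ioi (0:ℝ), (y + g + t) ^ (p - 1) * Real.exp (-d * t)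
    rw [show K * Real.exp (-d * g) * I - K * (y ^ (p - 1) / d) * Real.exp (-d * g)
      = K * Real.exp (-d * g) * (I - y ^ (p - 1) / d) by ring, norm_mul, Real.norm_eq_abs, Real.norm_eq_abs,
      abs_of_pos (by positivity)]
    refine (mul_le_mul_of_nonneg_left this (by positivity)).trans ?_
    have e4 : Real.exp (-d * g) * Real.exp (d * g / 2) ≤ 1 := by
      rw [← Real.exp_add, Real.exp_le_one_iff]; nlinarith
    calc K * Real.exp (-d * g) * (y ^ (p - 1) * (4 * |p - 1| / d / y * Real.exp (d * g / 2)) * (2 / d))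
        = K * (y ^ (p - 1) * (4 * |p - 1| / d / y) * (2 / d)) * (Real.exp (-d * g) * Real.exp (d * g / 2)) := by ring
      _ ≤ K * (y ^ (p - 1) * (4 * |p - 1| / d / y) * (2 / d)) * 1 := by gcongr
      _ = _ := mul_one _
  have := norm_integral_le_of_norm_le_const bd
  simpa using this

open ProbabilityTheory in
lemma gauss_lint (s : ℝ) : ∫⁻ z, ENNReal.ofReal (Real.exp (s * z)) ∂(gaussianReal 0 1)
    = ENNReal.ofReal (Real.exp (s ^ 2 / 2)) := by
  rw [← ofReal_integral_eq_lintegral_ofReal (integrable_exp_mul_gaussianReal s)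
    (ae_of_all _ fun _ => (Real.exp_pos _).le)]
  have := congrFun (mgf_fun_id_gaussianReal (μ := 0) (v := 1)) s
  simp only [mgf] at this
  rw [this]; simp

open ProbabilityTheory in
lemma law_eq (p b θ e d : ℝ) (hp : 0 < p) (hb : 0 < b) (he : 0 < e) (hd : 0 < d)
    (hed : d * e = b ^ 2) (hsub : d - e = 2 * θ) :
    ((gammaMeasure p (b ^ 2 / 2)).prod (gaussianReal 0 1)).map
      (fun q : ℝ × ℝ => θ * q.1 + Real.sqrt q.1 * q.2)
    = ((gammaMeasure p e).prod (gammaMeasure p d)).map (fun q => q.1 - q.2) := by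
  have hb2 : 0 < b ^ 2 / 2 := by positivity
  have := isProbabilityMeasure_gammaMeasure hp he
  have := isProbabilityMeasure_gammaMeasure hp hd
  have := isProbabilityMeasure_gammaMeasure hp hb2
  have := Measure.isProbabilityMeasure_map (μ := (gammaMeasure p (b ^ 2 / 2)).prod (gaussianReal 0 1))
    (f := fun q : ℝ × ℝ => θ * q.1 + Real.sqrt q.1 * q.2) (by fun_prop)
  have := Measure.isProbabilityMeasure_map (μ := (gammaMeasure p e).prod (gammaMeasure p d))
    (f := fun q : ℝ × ℝ => q.1 - q.2) (by fun_prop)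
  have R : ∀ t ∈ Ioo (-d) e, ∫⁻ x, ENNReal.ofReal (Real.exp (t * x))
      ∂(((gammaMeasure p e).prod (gammaMeasure p d)).map (fun q => q.1 - q.2))
      = ENNReal.ofReal ((e / (e - t)) ^ p) * ENNReal.ofReal ((d / (d - (-t))) ^ p) := by
    intro t ht
    rw [lintegral_map (by fun_prop) (by fun_prop), ← gam_tilt p e t hp he ht.2,
      ← gam_tilt p d (-t) hp hd (by linarith [ht.1]),
      ← lintegral_prod_mul (by fun_prop) (by fun_prop)]
    refine lintegral_congr fun q => ?_
    rw [← ENNReal.ofReal_mul (Real.exp_pos _).le, ← Real.exp_add]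
    ring_nf
  refine ext_strip _ _ (-d) e (by linarith) he ?_ ?_
  · intro t ht
    have h1 : 0 < e - t := by linarith [ht.2]
    have h2 : 0 < d - (-t) := by linarith [ht.1]
    have h3 : b ^ 2 / 2 - (θ * t + t ^ 2 / 2) = (e - t) * (d - (-t)) / 2 := by
      rw [← hed, show θ = (d - e) / 2 by linarith]; ring
    have h4 : 0 < b ^ 2 / 2 - (θ * t + t ^ 2 / 2) := by rw [h3]; positivity
    rw [R t ht, ← ENNReal.ofReal_mul (by positivity), ← Real.mul_rpow (by positivity) (by positivity)]
    have h5 : e / (e - t) * (d / (d - (-t))) = b ^ 2 / 2 / (b ^ 2 / 2 - (θ * t + t ^ 2 / 2)) := by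
      rw [h3, ← hed]; field_simp
    rw [h5, ← gam_tilt p (b ^ 2 / 2) _ hp hb2 (by linarith), lintegral_map (by fun_prop) (by fun_prop),
      lintegral_prod _ (by fun_prop)]
    apply lintegral_congr_ae
    filter_upwards [gam_ae p (b ^ 2 / 2)] with w hw
    have : ∀ z, ENNReal.ofReal (Real.exp (t * (θ * w + Real.sqrt w * z)))
        = ENNReal.ofReal (Real.exp (t * θ * w)) * ENNReal.ofReal (Real.exp (t * Real.sqrt w * z)) := by
      intro z
      rw [← ENNReal.ofReal_mul (Real.exp_pos _).le, ← Real.exp_add]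
      ring_nf
    simp_rw [this]
    rw [lintegral_const_mul _ (by fun_prop), gauss_lint, ← ENNReal.ofReal_mul (Real.exp_pos _).le,
      ← Real.exp_add, mul_pow, Real.sq_sqrt hw]
    ring_nf
  · intro t ht
    rw [R t ht]
    exact ENNReal.mul_lt_top ENNReal.ofReal_lt_top ENNReal.ofReal_lt_top

/-- Lower-tail asymptotic of the marginal of the equi-skew GH model with a = 0
(variance-mean mixture of a standard normal by a Gamma(p, b²/2) mixing variable):
with X₁ = θW + √W·Z₁ and δ = θ + √(θ²+b²),
P(X₁ ≤ x) = A|x|^{p−1}e^{−δ|x|}(1 + O(1/|x|)) as x → −∞, where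
A = [2^p b^{−2p} Γ(p) (θ²+b²)^{p/2} δ]^{−1}. -/
theorem stmt_13 (p b θ : ℝ) (hp : 0 < p) (hb : 0 < b)
    {Ω : Type*} [MeasurableSpace Ω] (P : Measure Ω) [IsProbabilityMeasure P]
    (W Z₁ : Ω → ℝ) (hW : Measurable W) (hZ₁ : Measurable Z₁)
    (hWlaw : Measure.map W P =
      volume.withDensity fun w : ℝ => ENNReal.ofReal
        (if 0 < w then
          (b ^ 2 / 2) ^ p * w ^ (p - 1) * Real.exp (-(b ^ 2 / 2) * w) / Real.Gamma p
        else 0))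
    (hZlaw : Measure.map Z₁ P =
      volume.withDensity fun z : ℝ => ENNReal.ofReal
        ((Real.sqrt (2 * Real.pi))⁻¹ * Real.exp (-z ^ 2 / 2)))
    (hindep : ProbabilityTheory.IndepFun W Z₁ P)
    (X₁ : Ω → ℝ) (hX₁ : ∀ ω, X₁ ω = θ * W ω + Real.sqrt (W ω) * Z₁ ω)
    (δ A : ℝ) (hδ : δ = θ + Real.sqrt (θ ^ 2 + b ^ 2))
    (hA : A = ((2 : ℝ) ^ p * b ^ (-(2 * p)) * Real.Gamma p *
      (θ ^ 2 + b ^ 2) ^ (p / 2) * δ)⁻¹) :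
    ∃ M > (0 : ℝ), ∃ x₀ < (0 : ℝ), ∀ x ≤ x₀,
      |(P {ω | X₁ ω ≤ x}).toReal / (A * |x| ^ (p - 1) * Real.exp (-δ * |x|)) - 1|
        ≤ M / |x| := by
  have hs0 : 0 < θ ^ 2 + b ^ 2 := by positivity
  set s := Real.sqrt (θ ^ 2 + b ^ 2) with hs
  have hs1 : 0 < s := Real.sqrt_pos.2 hs0
  have hss : s ^ 2 = θ ^ 2 + b ^ 2 := Real.sq_sqrt hs0.le
  have hlt : |θ| < s := by
    rw [hs]; apply Real.lt_sqrt_of_sq_lt; rw [sq_abs]; nlinarith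
  have hθ := abs_lt.1 hlt
  have hd : 0 < δ := by rw [hδ]; linarith
  obtain ⟨e, hee⟩ : ∃ e, e = s - θ := ⟨_, rfl⟩
  have he : 0 < e := by rw [hee]; linarith
  have hed : δ * e = b ^ 2 := by rw [hδ, hee]; nlinarith
  have hsum : e + δ = 2 * s := by rw [hδ, hee]; ring
  have hW' : Measure.map W P = ProbabilityTheory.gammaMeasure p (b ^ 2 / 2) := by
    rw [hWlaw, ProbabilityTheory.gammaMeasure]
    apply withDensity_congr_ae
    have h0 : ∀ᵐ w : ℝ, w ≠ 0 := Measure.ae_ne volume 0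
    filter_upwards [h0] with w hw
    rw [ProbabilityTheory.gammaPDF_eq]
    congr 1
    by_cases h : 0 < w
    · rw [if_pos h, if_pos h.le]
      ring_nf
    · have h' : ¬ 0 ≤ w := fun h2 => h (lt_of_le_of_ne h2 (Ne.symm hw))
      rw [if_neg h, if_neg h']
  have hZ' : Measure.map Z₁ P = ProbabilityTheory.gaussianReal 0 1 := by
    rw [hZlaw, ProbabilityTheory.gaussianReal_of_var_ne_zero _ one_ne_zero]
    congr 1
    ext z
    simp [ProbabilityTheory.gaussianPDF, ProbabilityTheory.gaussianPDFReal]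
  have hX : ∀ x, (P {ω | X₁ ω ≤ x}).toReal =
      (((ProbabilityTheory.gammaMeasure p e).prod (ProbabilityTheory.gammaMeasure p δ)).map
        (fun q => q.1 - q.2)).real (Iic x) := by
    intro x
    rw [← law_eq p b θ e δ hp hb he hd hed (by rw [hδ, hee]; ring), ← hW', ← hZ',
      ← hindep.map_prod_eq_prod_map_map hW.aemeasurable hZ₁.aemeasurable,
      Measure.map_map (by fun_prop) (by fun_prop), map_measureReal_apply (by fun_prop) measurableSet_Iic,
      measureReal_def]
    congr 2
    ext ω
    simp [hX₁]
  have hG := Real.Gamma_pos_of_pos hp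
  set c := (e / (e + δ)) ^ p with hc
  have hc0 : 0 < c := by positivity
  have hA' : A = δ ^ p / Real.Gamma p / δ * c := by
    have h1 : b ^ (-(2 * p)) = (δ ^ p * e ^ p)⁻¹ := by
      rw [Real.rpow_neg hb.le, Real.rpow_mul hb.le, ← Real.mul_rpow hd.le he.le, hed, Real.rpow_two]
    have h2 : (θ ^ 2 + b ^ 2) ^ (p / 2) = s ^ p := by
      rw [← hss, ← Real.rpow_two, ← Real.rpow_mul hs1.le]
      congr 1; ring
    rw [hA, h1, h2, hc, hsum, Real.div_rpow he.le (by positivity), Real.mul_rpow (by norm_num) hs1.le]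
    have := Real.rpow_pos_of_pos hs1 p
    have := Real.rpow_pos_of_pos he p
    have := Real.rpow_pos_of_pos hd p
    field_simp
  have hA0 : 0 < A := by rw [hA']; positivity
  refine ⟨8 * |p - 1| / δ / c + 1, by positivity, -(4 * |p - 1| / δ + 1),
    by have : 0 ≤ 4 * |p - 1| / δ := by positivity
       linarith, ?_⟩
  intro x hx
  have h40 : 0 ≤ 4 * |p - 1| / δ := by positivity
  obtain ⟨y, rfl⟩ : ∃ y, x = -y := ⟨-x, by ring⟩
  have hy : 0 < y := by linarith
  have hy2 : 4 * |p - 1| / δ ≤ y := by linarith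
  have T := tail_est p e δ y hp he hd hy hy2
  rw [← hX, ← hc] at T
  rw [abs_neg, abs_of_pos hy]
  set F := (P {ω | X₁ ω ≤ -y}).toReal
  have hyq : 0 < y ^ (p - 1) := Real.rpow_pos_of_pos hy _
  have hD : 0 < A * y ^ (p - 1) * Real.exp (-δ * y) := by positivity
  rw [div_sub_one hD.ne', abs_div, abs_of_pos hD, div_le_iff₀ hD]
  have e1 : δ ^ p / Real.Gamma p * Real.exp (-δ * y) * (y ^ (p - 1) / δ) * c
      = A * y ^ (p - 1) * Real.exp (-δ * y) := by rw [hA']; ring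
  rw [e1] at T
  refine T.trans ?_
  have e2 : δ ^ p / Real.Gamma p * Real.exp (-δ * y) * (y ^ (p - 1) * (4 * |p - 1| / δ / y) * (2 / δ))
      = (8 * |p - 1| / δ / c) / y * (A * y ^ (p - 1) * Real.exp (-δ * y)) := by
    rw [hA']; field_simp; ring
  rw [e2]
  apply mul_le_mul_of_nonneg_right _ hD.le
  gcongr
  linarith
end

section
/- Let p > 0, b > 0, θ ∈ ℝ, ρ ∈ (−1, 1). Let W have the Gamma distribution of shape p and rate b²/2 (density (b²/2)^p·w^{p−1}·e^{−(b²/2)w}/Γ(p) on (0,∞)), independent of (Z₁, Z₂) having the bivariate standard normal density with correlation ρ, and set X_i = θW + √W·Z_i for i = 1, 2. Set α = √((1−ρ)/(1+ρ)), β = √(θ²(1+α²) + b²), γ = β + θ√(1+α²), K̄ = 2^{p−1}·b^{−2p}·Γ(p), and C₃ = (1+α²)^{(2p−3)/4}/(√(2π)·K̄·β^{p−1/2}·α·γ²). Then P(X₁ ≤ y, X₂ ≤ y) = C₃·|y|^{p−3/2}·e^{−√(1+α²)·γ·|y|}·(1 + O(1/|y|)) as y → −∞; that is, there exist M > 0 and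 y₀ < 0 such that for all y ≤ y₀, |P(X₁ ≤ y, X₂ ≤ y)/(C₃|y|^{p−3/2}e^{−√(1+α²)γ|y|}) − 1| ≤ M/|y|. -/
open MeasureTheory Real Set

lemma aux_gauss (l : ℝ) (hl : 0 < l) :
    ∫⁻ u : ℝ, ENNReal.ofReal (Real.exp (-l * u ^ 2)) = ENNReal.ofReal (√(π / l)) := by
  rw [← integral_gaussian, ofReal_integral_eq_lintegral_ofReal (integrable_exp_neg_mul_sq hl)]
  exact Filter.Eventually.of_forall fun x => (Real.exp_pos _).le

lemma aux_sq_le_sinh_sq (u : ℝ) : u ^ 2 ≤ Real.sinh u ^ 2 := by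
  rw [sq_le_sq, Real.abs_sinh]
  exact Real.self_le_sinh_iff.2 (abs_nonneg u)

lemma aux_J_upper (m l : ℝ) (hl : 0 < l) :
    ∫⁻ u : ℝ, ENNReal.ofReal (Real.exp (2 * m * u - 2 * l * Real.sinh u ^ 2)) ≤
      ENNReal.ofReal (√(π / (2 * l)) * Real.exp (m ^ 2 / (2 * l))) := by
  calc ∫⁻ u : ℝ, ENNReal.ofReal (Real.exp (2 * m * u - 2 * l * Real.sinh u ^ 2))
      ≤ ∫⁻ u : ℝ, ENNReal.ofReal (Real.exp (m ^ 2 / (2 * l))) *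
          ENNReal.ofReal (Real.exp (-(2 * l) * (u - m / (2 * l)) ^ 2)) := by
        refine lintegral_mono fun u => ?_
        rw [← ENNReal.ofReal_mul (Real.exp_pos _).le, ← Real.exp_add]
        apply ENNReal.ofReal_le_ofReal
        apply Real.exp_le_exp.2
        have h1 : m ^ 2 / (2 * l) + -(2 * l) * (u - m / (2 * l)) ^ 2 = 2 * m * u - 2 * l * u ^ 2 := by
          field_simp
          ring
        rw [h1]
        have := mul_le_mul_of_nonneg_left (aux_sq_le_sinh_sq u) (by positivity : 0 ≤ 2 * l)
        linarith
    _ = _ := by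
        rw [lintegral_const_mul _ (by fun_prop),
          lintegral_sub_right_eq_self (fun u => ENNReal.ofReal (Real.exp (-(2 * l) * u ^ 2))),
          aux_gauss _ (by positivity), ← ENNReal.ofReal_mul (Real.exp_pos _).le, mul_comm]

lemma aux_sinh_subst (g : ℝ → ENNReal) :
    ∫⁻ u : ℝ, ENNReal.ofReal (Real.cosh u) * g (Real.sinh u) = ∫⁻ s : ℝ, g s := by
  have h := lintegral_image_eq_lintegral_abs_deriv_mul (s := univ) (f := Real.sinh)
    (f' := Real.cosh) MeasurableSet.univ (fun x _ => (Real.hasDerivAt_sinh x).hasDerivWithinAt)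
    (Real.sinh_injective.injOn) g
  rw [image_univ, Real.sinh_surjective.range_eq] at h
  simp only [Measure.restrict_univ, abs_of_pos (Real.cosh_pos _)] at h
  exact h.symm

lemma aux_cosh_le (u : ℝ) : Real.cosh u ≤ Real.exp (Real.sinh u ^ 2 / 2) := by
  have h1 : Real.cosh u ^ 2 ≤ Real.exp (Real.sinh u ^ 2 / 2) ^ 2 := by
    rw [← Real.exp_nat_mul, Real.cosh_sq]
    have := Real.add_one_le_exp (Real.sinh u ^ 2)
    convert this using 2
    push_cast; ring
  exact le_of_sq_le_sq h1 (Real.exp_pos _).le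

lemma aux_J_lower (m l : ℝ) (hl : 0 < l) :
    ENNReal.ofReal (√(π / (2 * l)) * Real.exp (-(1 / (8 * l)))) ≤
    ∫⁻ u : ℝ, ENNReal.ofReal (Real.exp (2 * m * u - 2 * l * Real.sinh u ^ 2)) := by
  set J := ∫⁻ u : ℝ, ENNReal.ofReal (Real.exp (2 * m * u - 2 * l * Real.sinh u ^ 2)) with hJ
  have hneg : J = ∫⁻ u : ℝ, ENNReal.ofReal (Real.exp (-(2 * m * u) - 2 * l * Real.sinh u ^ 2)) := by
    rw [hJ, ← lintegral_neg_eq_self]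
    simp
  have h2 : 2 * ∫⁻ u : ℝ, ENNReal.ofReal (Real.exp (- 2 * l * Real.sinh u ^ 2)) ≤ 2 * J := by
    rw [← lintegral_const_mul _ (by fun_prop), two_mul J]
    nth_rw 2 [hneg]
    rw [hJ, ← lintegral_add_left (by fun_prop)]
    refine lintegral_mono fun u => ?_
    rw [← ENNReal.ofReal_add (Real.exp_pos _).le (Real.exp_pos _).le]
    rw [show (2 : ENNReal) = ENNReal.ofReal 2 by simp, ← ENNReal.ofReal_mul (by norm_num)]
    apply ENNReal.ofReal_le_ofReal
    have hc := Real.one_le_cosh (2 * m * u)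
    rw [Real.cosh_eq] at hc
    have e1 : Real.exp (2 * m * u - 2 * l * Real.sinh u ^ 2) =
      Real.exp (2 * m * u) * Real.exp (- 2 * l * Real.sinh u ^ 2) := by
      rw [← Real.exp_add]; congr 1; ring
    have e2 : Real.exp (-(2 * m * u) - 2 * l * Real.sinh u ^ 2) =
      Real.exp (-(2 * m * u)) * Real.exp (- 2 * l * Real.sinh u ^ 2) := by
      rw [← Real.exp_add]; congr 1; ring
    rw [e1, e2, ← add_mul]
    apply mul_le_mul_of_nonneg_right _ (Real.exp_pos _).le
    linarith
  have h3 : ∫⁻ u : ℝ, ENNReal.ofReal (Real.exp (- 2 * l * Real.sinh u ^ 2)) ≤ J :=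
    (ENNReal.mul_le_mul_iff_right (by norm_num) (by norm_num)).1 h2
  refine le_trans ?_ h3
  calc _ ≤ ENNReal.ofReal (√(π / (2 * l + 1 / 2))) := by
        apply ENNReal.ofReal_le_ofReal
        apply Real.le_sqrt_of_sq_le
        rw [mul_pow, Real.sq_sqrt (by positivity), ← Real.exp_nat_mul]
        have h := Real.add_one_le_exp (1 / (4 * l))
        have e : Real.exp (((2 : ℕ) : ℝ) * -(1 / (8 * l))) = (Real.exp (1 / (4 * l)))⁻¹ := by
          rw [← Real.exp_neg]; congr 1; push_cast; field_simp; norm_num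
        rw [e]
        calc π / (2 * l) * (Real.exp (1 / (4 * l)))⁻¹ ≤ π / (2 * l) * (1 / (4 * l) + 1)⁻¹ := by
              gcongr
          _ = _ := by field_simp; ring
    _ = ∫⁻ u : ℝ, ENNReal.ofReal (Real.cosh u) *
          ENNReal.ofReal (Real.exp (-(2 * l + 1 / 2) * Real.sinh u ^ 2)) := by
        rw [aux_sinh_subst (fun s => ENNReal.ofReal (Real.exp (-(2 * l + 1 / 2) * s ^ 2))),
          aux_gauss _ (by positivity)]
    _ ≤ _ := by
        refine lintegral_mono fun u => ?_
        rw [← ENNReal.ofReal_mul (Real.cosh_pos _).le]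
        apply ENNReal.ofReal_le_ofReal
        calc _ ≤ Real.exp (Real.sinh u ^ 2 / 2) * Real.exp (-(2 * l + 1 / 2) * Real.sinh u ^ 2) := by
              gcongr; exact aux_cosh_le u
          _ = _ := by rw [← Real.exp_add]; congr 1; ring

lemma aux_H_eq (m B S : ℝ) (hB : 0 < B) (hS : 0 < S) :
    ∫⁻ w in Ioi (0 : ℝ), ENNReal.ofReal (w ^ (m - 1) * Real.exp (-(B ^ 2 * w / 2) - S ^ 2 / (2 * w)))
     = ENNReal.ofReal (2 * (S / B) ^ m * Real.exp (-(B * S))) *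
       ∫⁻ u : ℝ, ENNReal.ofReal (Real.exp (2 * m * u - 2 * (B * S) * Real.sinh u ^ 2)) := by
  have hk : 0 < S / B := by positivity
  have himg : (fun u : ℝ => S / B * Real.exp (2 * u)) '' univ = Ioi 0 := by
    ext w
    simp only [image_univ, mem_range, mem_Ioi]
    constructor
    · rintro ⟨u, rfl⟩; positivity
    · intro hw
      refine ⟨Real.log (w / (S / B)) / 2, ?_⟩
      rw [mul_div_cancel₀ _ (by norm_num : (2:ℝ) ≠ 0), Real.exp_log (by positivity)]
      field_simp
  have h := lintegral_image_eq_lintegral_abs_deriv_mul (s := univ)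
    (f := fun u : ℝ => S / B * Real.exp (2 * u))
    (f' := fun u : ℝ => S / B * (Real.exp (2 * u) * 2)) MeasurableSet.univ
    (fun x _ => by
      have h1 : HasDerivAt (fun u : ℝ => 2 * u) 2 x := by
        simpa using (hasDerivAt_id x).const_mul 2
      exact ((h1.exp).const_mul _).hasDerivWithinAt)
    (by
      intro x _ y _ hxy
      have := mul_left_cancel₀ hk.ne' hxy
      have := Real.exp_injective this
      linarith) (fun w => ENNReal.ofReal (w ^ (m - 1) * Real.exp (-(B ^ 2 * w / 2) - S ^ 2 / (2 * w))))
  rw [himg] at h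
  rw [h, Measure.restrict_univ, ← lintegral_const_mul _ (by fun_prop)]
  refine lintegral_congr fun u => ?_
  rw [← ENNReal.ofReal_mul (abs_nonneg _), ← ENNReal.ofReal_mul (by positivity)]
  congr 1
  rw [abs_of_pos (by positivity), Real.mul_rpow hk.le (Real.exp_pos _).le, ← Real.exp_mul]
  have e1 : S / B * (Real.exp (2 * u) * 2) * ((S / B) ^ (m - 1) * Real.exp (2 * u * (m - 1)) *
      Real.exp (-(B ^ 2 * (S / B * Real.exp (2 * u)) / 2) - S ^ 2 / (2 * (S / B * Real.exp (2 * u)))))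
      = 2 * ((S / B) ^ (m - 1) * (S / B)) * (Real.exp (2 * u) * Real.exp (2 * u * (m - 1)) *
      Real.exp (-(B ^ 2 * (S / B * Real.exp (2 * u)) / 2) - S ^ 2 / (2 * (S / B * Real.exp (2 * u))))) := by
    ring
  rw [e1, Real.rpow_sub_one hk.ne', div_mul_cancel₀ _ hk.ne', mul_assoc (2 * (S / B) ^ m),
    ← Real.exp_add, ← Real.exp_add, ← Real.exp_add]
  congr 2
  have e2 : S ^ 2 / (2 * (S / B * Real.exp (2 * u))) = B * S * Real.exp (-(2 * u)) / 2 := by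
    rw [Real.exp_neg]; field_simp
  have e3 : B ^ 2 * (S / B * Real.exp (2 * u)) / 2 = B * S * Real.exp (2 * u) / 2 := by
    field_simp
  have e4 : Real.cosh (2 * u) = 1 + 2 * Real.sinh u ^ 2 := by
    rw [Real.cosh_two_mul, Real.cosh_sq]; ring
  rw [Real.cosh_eq] at e4
  rw [e2, e3]
  linear_combination (-B * S) * e4

lemma aux_H_const (m B S : ℝ) (hB : 0 < B) (hS : 0 < S) :
    2 * (S / B) ^ m * Real.exp (-(B * S)) * √(π / (2 * (B * S))) =
    √(2 * π) * B ^ (-m - 1 / 2) * S ^ (m - 1 / 2) * Real.exp (-(B * S)) := by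
  have e1 : √(π / (2 * (B * S))) = √(2 * π) / 2 * (B ^ (-(1 / 2) : ℝ) * S ^ (-(1 / 2) : ℝ)) := by
    rw [Real.rpow_neg hB.le, Real.rpow_neg hS.le, ← Real.sqrt_eq_rpow, ← Real.sqrt_eq_rpow]
    rw [show π / (2 * (B * S)) = (2 * π) / (2 ^ 2 * (B * S)) by field_simp,
      Real.sqrt_div (by positivity), Real.sqrt_mul (by positivity) (B * S), Real.sqrt_mul hB.le,
      Real.sqrt_sq (by norm_num)]
    field_simp
  rw [e1, Real.div_rpow hS.le hB.le, sub_eq_add_neg, sub_eq_add_neg, Real.rpow_add hB,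
    Real.rpow_add hS, Real.rpow_neg hB.le m]
  field_simp

lemma aux_H_upper (m B S : ℝ) (hB : 0 < B) (hS : 0 < S) :
    ∫⁻ w in Ioi (0 : ℝ), ENNReal.ofReal (w ^ (m - 1) * Real.exp (-(B ^ 2 * w / 2) - S ^ 2 / (2 * w)))
     ≤ ENNReal.ofReal (√(2 * π) * B ^ (-m - 1 / 2) * S ^ (m - 1 / 2) * Real.exp (-(B * S)) *
        Real.exp (m ^ 2 / (2 * (B * S)))) := by
  rw [aux_H_eq m B S hB hS, ← aux_H_const m B S hB hS,
    mul_assoc (2 * (S / B) ^ m * Real.exp (-(B * S))),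
    ENNReal.ofReal_mul (p := 2 * (S / B) ^ m * Real.exp (-(B * S))) (by positivity)]
  gcongr
  exact aux_J_upper m (B * S) (by positivity)

lemma aux_H_lower (m B S : ℝ) (hB : 0 < B) (hS : 0 < S) :
    ENNReal.ofReal (√(2 * π) * B ^ (-m - 1 / 2) * S ^ (m - 1 / 2) * Real.exp (-(B * S)) *
        Real.exp (-(1 / (8 * (B * S))))) ≤
    ∫⁻ w in Ioi (0 : ℝ), ENNReal.ofReal (w ^ (m - 1) * Real.exp (-(B ^ 2 * w / 2) - S ^ 2 / (2 * w)))
     := by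
  rw [aux_H_eq m B S hB hS, ← aux_H_const m B S hB hS,
    mul_assoc (2 * (S / B) ^ m * Real.exp (-(B * S))),
    ENNReal.ofReal_mul (p := 2 * (S / B) ^ m * Real.exp (-(B * S))) (by positivity)]
  gcongr
  exact aux_J_lower m (B * S) (by positivity)

lemma aux_S_ge (k c' T d : ℝ) (hc' : 0 < c') :
    k * T ≤ √(k ^ 2 * T ^ 2 + c' * d ^ 2) := by
  apply Real.le_sqrt_of_sq_le
  nlinarith [mul_nonneg hc'.le (sq_nonneg d)]

lemma aux_S_le (k c' T d : ℝ) (hk : 0 < k) (hc' : 0 < c') (hT : 0 < T) :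
    √(k ^ 2 * T ^ 2 + c' * d ^ 2) ≤ k * T + c' * d ^ 2 / (2 * k * T) := by
  apply Real.sqrt_le_iff.2
  refine ⟨by positivity, ?_⟩
  have : (k * T + c' * d ^ 2 / (2 * k * T)) ^ 2 =
    k ^ 2 * T ^ 2 + c' * d ^ 2 + (c' * d ^ 2 / (2 * k * T)) ^ 2 := by
    field_simp
    ring
  rw [this]
  nlinarith [sq_nonneg (c' * d ^ 2 / (2 * k * T))]

lemma aux_S_le_exp (k c' t r d : ℝ) (hk : 0 < k) (hc' : 0 < c') (ht : 0 < t) (hr : 0 ≤ r)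
    (hd : |d| ≤ r) :
    √(k ^ 2 * (t + r) ^ 2 + c' * d ^ 2) ≤
      k * t * Real.exp ((1 + c' / (2 * k ^ 2)) * r / t) := by
  have hT : 0 < t + r := by linarith
  refine (aux_S_le k c' (t + r) d hk hc' hT).trans ?_
  have hd2 : d ^ 2 ≤ r ^ 2 := by
    rw [← sq_abs d]; exact pow_le_pow_left₀ (abs_nonneg d) hd 2
  have h1 : k * (t + r) = k * t * (r / t + 1) := by field_simp; ring
  have h2 : c' * d ^ 2 / (2 * k * (t + r)) ≤ k * (t + r) * (c' / (2 * k ^ 2) * (r / t)) := by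
    rw [div_le_iff₀ (by positivity)]
    have : k * (t + r) * (c' / (2 * k ^ 2) * (r / t)) * (2 * k * (t + r)) =
      c' * ((t + r) ^ 2 * r / t) := by field_simp
    rw [this]
    apply mul_le_mul_of_nonneg_left _ hc'.le
    rw [le_div_iff₀ ht]
    nlinarith [mul_le_mul_of_nonneg_right hd2 ht.le, mul_nonneg hr ht.le, mul_nonneg hr (mul_nonneg ht.le ht.le), pow_nonneg hr 3, mul_nonneg (mul_nonneg hr hr) ht.le]
  have h3 : k * (t + r) + k * (t + r) * (c' / (2 * k ^ 2) * (r / t)) =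
    k * t * ((r / t + 1) * (c' / (2 * k ^ 2) * (r / t) + 1)) := by rw [h1]; ring
  calc _ ≤ k * (t + r) + k * (t + r) * (c' / (2 * k ^ 2) * (r / t)) := by linarith
    _ = k * t * ((r / t + 1) * (c' / (2 * k ^ 2) * (r / t) + 1)) := h3
    _ ≤ k * t * (Real.exp (r / t) * Real.exp (c' / (2 * k ^ 2) * (r / t))) := by
        gcongr
        · exact Real.add_one_le_exp _
        · exact Real.add_one_le_exp _
    _ = _ := by rw [← Real.exp_add]; congr 2; ring

lemma aux_rpow_upper (x s q e : ℝ) (hx : 0 < x) (h1 : x ≤ s) (h2 : s ≤ x * Real.exp e) :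
    s ^ q ≤ x ^ q * Real.exp (|q| * e) := by
  have hs : 0 < s := hx.trans_le h1
  rcases le_total 0 q with hq | hq
  · rw [abs_of_nonneg hq]
    calc s ^ q ≤ (x * Real.exp e) ^ q := Real.rpow_le_rpow hs.le h2 hq
      _ = _ := by rw [Real.mul_rpow hx.le (Real.exp_pos _).le, ← Real.exp_mul, mul_comm e]
  · have he : 0 ≤ e := by
      have : x * 1 ≤ x * Real.exp e := by linarith
      have := le_of_mul_le_mul_left this hx
      exact Real.one_le_exp_iff.1 this
    calc s ^ q ≤ x ^ q := Real.rpow_le_rpow_of_nonpos hx h1 hq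
      _ = x ^ q * 1 := by ring
      _ ≤ _ := by
        gcongr
        exact Real.one_le_exp (by positivity)

lemma aux_rpow_lower (x s q e : ℝ) (hx : 0 < x) (h1 : x ≤ s) (h2 : s ≤ x * Real.exp e) :
    x ^ q * Real.exp (-(|q| * e)) ≤ s ^ q := by
  have hs : 0 < s := hx.trans_le h1
  have h := aux_rpow_upper x s (-q) e hx h1 h2
  rw [abs_neg, Real.rpow_neg hs.le, Real.rpow_neg hx.le] at h
  rw [Real.exp_neg]
  have hxq : 0 < x ^ q := Real.rpow_pos_of_pos hx q
  have hsq : 0 < s ^ q := Real.rpow_pos_of_pos hs q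
  have hE := Real.exp_pos (|q| * e)
  rw [← div_eq_mul_inv, div_le_iff₀ hE]
  have := mul_le_mul_of_nonneg_left h (mul_pos hxq hsq).le
  field_simp at this
  linarith

/-- pointwise bounds -/
lemma aux_point_upper (k c' B th q m t r d : ℝ) (hk : 0 < k) (hc' : 0 < c') (hB : 0 < B)
    (ht : 0 < t) (hr : 0 ≤ r) (hd : |d| ≤ r) :
    √(k ^ 2 * (t + r) ^ 2 + c' * d ^ 2) ^ q *
      Real.exp (-(B * √(k ^ 2 * (t + r) ^ 2 + c' * d ^ 2))) *
      Real.exp (m ^ 2 / (2 * (B * √(k ^ 2 * (t + r) ^ 2 + c' * d ^ 2)))) *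
      Real.exp (-(k ^ 2 * th * (t + r))) ≤
    (k * t) ^ q * Real.exp (-(k * B + k ^ 2 * th) * t) * Real.exp (-(k * B + k ^ 2 * th) * r) *
      Real.exp ((m ^ 2 / (2 * (B * k)) + |q| * (1 + c' / (2 * k ^ 2)) * r) / t) := by
  have hge := aux_S_ge k c' (t + r) d hc'
  have hle := aux_S_le_exp k c' t r d hk hc' ht hr hd
  set S := √(k ^ 2 * (t + r) ^ 2 + c' * d ^ 2)
  have hkt : 0 < k * t := by positivity
  have hge' : k * t ≤ S := by nlinarith [mul_nonneg hk.le hr]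
  have hS : 0 < S := hkt.trans_le hge'
  have h1 := aux_rpow_upper _ _ q _ hkt hge' hle
  have h2 : Real.exp (-(B * S)) ≤ Real.exp (-(B * (k * (t + r)))) := by gcongr
  have h3 : Real.exp (m ^ 2 / (2 * (B * S))) ≤ Real.exp (m ^ 2 / (2 * (B * (k * t)))) := by gcongr
  calc _ ≤ (k * t) ^ q * Real.exp (|q| * ((1 + c' / (2 * k ^ 2)) * r / t)) *
        Real.exp (-(B * (k * (t + r)))) * Real.exp (m ^ 2 / (2 * (B * (k * t)))) *
      Real.exp (-(k ^ 2 * th * (t + r))) := by gcongr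
    _ = _ := by
      simp only [mul_assoc, ← Real.exp_add]
      congr 2
      field_simp
      ring

lemma aux_point_lower (k c' B th q t r d : ℝ) (hk : 0 < k) (hc' : 0 < c') (hB : 0 < B)
    (ht : 0 < t) (hr : 0 ≤ r) (hd : |d| ≤ r) :
    (k * t) ^ q * Real.exp (-(k * B + k ^ 2 * th) * t) * Real.exp (-(k * B + k ^ 2 * th) * r) *
      Real.exp (-((1 / (8 * (B * k)) + |q| * (1 + c' / (2 * k ^ 2)) * r
        + B * c' / (2 * k) * r ^ 2) / t)) ≤
    √(k ^ 2 * (t + r) ^ 2 + c' * d ^ 2) ^ q *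
      Real.exp (-(B * √(k ^ 2 * (t + r) ^ 2 + c' * d ^ 2))) *
      Real.exp (-(1 / (8 * (B * √(k ^ 2 * (t + r) ^ 2 + c' * d ^ 2))))) *
      Real.exp (-(k ^ 2 * th * (t + r))) := by
  have hT : 0 < t + r := by linarith
  have hge := aux_S_ge k c' (t + r) d hc'
  have hle := aux_S_le_exp k c' t r d hk hc' ht hr hd
  have hle2 := aux_S_le k c' (t + r) d hk hc' hT
  set S := √(k ^ 2 * (t + r) ^ 2 + c' * d ^ 2)
  have hkt : 0 < k * t := by positivity
  have hge' : k * t ≤ S := by nlinarith [mul_nonneg hk.le hr]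
  have hS : 0 < S := hkt.trans_le hge'
  have h1 := aux_rpow_lower _ _ q _ hkt hge' hle
  have hd2 : d ^ 2 ≤ r ^ 2 := by
    rw [← sq_abs d]; exact pow_le_pow_left₀ (abs_nonneg d) hd 2
  have hS2 : S ≤ k * (t + r) + c' * r ^ 2 / (2 * k * t) := by
    refine hle2.trans ?_
    gcongr
    linarith
  have h2 : Real.exp (-(B * (k * (t + r) + c' * r ^ 2 / (2 * k * t)))) ≤ Real.exp (-(B * S)) := by
    gcongr
  have h3 : Real.exp (-(1 / (8 * (B * (k * t))))) ≤ Real.exp (-(1 / (8 * (B * S)))) := by gcongr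
  calc _ = (k * t) ^ q * Real.exp (-(|q| * ((1 + c' / (2 * k ^ 2)) * r / t))) *
        Real.exp (-(B * (k * (t + r) + c' * r ^ 2 / (2 * k * t)))) *
        Real.exp (-(1 / (8 * (B * (k * t))))) *
      Real.exp (-(k ^ 2 * th * (t + r))) := by
        simp only [mul_assoc, ← Real.exp_add]
        congr 2
        field_simp
        ring
    _ ≤ _ := by gcongr

lemma aux_exp_int (a : ℝ) (ha : 0 < a) :
    ∫⁻ u in Ioi (0 : ℝ), ENNReal.ofReal (Real.exp (-a * u)) = ENNReal.ofReal (1 / a) := by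
  rw [← ofReal_integral_eq_lintegral_ofReal (integrableOn_exp_mul_Ioi (by linarith) 0)
    (Filter.Eventually.of_forall fun x => (Real.exp_pos _).le),
    integral_exp_mul_Ioi (by linarith) 0]
  congr 1
  simp

lemma aux_exp_int2 (K a : ℝ) (hK : 0 ≤ K) (ha : 0 < a) :
    ∫⁻ u in Ioi (0 : ℝ), ∫⁻ v in Ioi (0 : ℝ), ENNReal.ofReal (K * Real.exp (-a * ((u + v) / 2)))
      = ENNReal.ofReal (K * (2 / a) ^ 2) := by
  have h : ∀ u v : ℝ, ENNReal.ofReal (K * Real.exp (-a * ((u + v) / 2))) =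
      ENNReal.ofReal K * ENNReal.ofReal (Real.exp (-(a / 2) * u)) *
        ENNReal.ofReal (Real.exp (-(a / 2) * v)) := by
    intro u v
    rw [← ENNReal.ofReal_mul hK, ← ENNReal.ofReal_mul (by positivity), mul_assoc, ← Real.exp_add]
    congr 3
    ring
  simp_rw [h]
  have h2 : ∀ u : ℝ, ∫⁻ v in Ioi (0 : ℝ), ENNReal.ofReal K *
      ENNReal.ofReal (Real.exp (-(a / 2) * u)) * ENNReal.ofReal (Real.exp (-(a / 2) * v)) =
      ENNReal.ofReal K * ENNReal.ofReal (1 / (a / 2)) *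
        ENNReal.ofReal (Real.exp (-(a / 2) * u)) := by
    intro u
    rw [lintegral_const_mul _ (by fun_prop), aux_exp_int _ (by positivity)]
    ring
  simp_rw [h2]
  rw [lintegral_const_mul _ (by fun_prop), aux_exp_int _ (by positivity),
    ← ENNReal.ofReal_mul hK, ← ENNReal.ofReal_mul (by positivity)]
  congr 1
  field_simp

lemma aux_upper_int (N g A B t : ℝ) (hN : 0 ≤ N) (hg : B / t < g) (F : ℝ → ℝ → ENNReal)
    (hF : ∀ u > 0, ∀ v > 0, F u v ≤ ENNReal.ofReal (N * Real.exp (-g * ((u + v) / 2)) *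
      Real.exp ((A + B * ((u + v) / 2)) / t))) :
    ∫⁻ u in Ioi (0 : ℝ), ∫⁻ v in Ioi (0 : ℝ), F u v ≤
      ENNReal.ofReal (N * Real.exp (A / t) * (2 / (g - B / t)) ^ 2) := by
  rw [← aux_exp_int2 _ _ (by positivity) (by linarith)]
  refine setLIntegral_mono' measurableSet_Ioi fun u hu => ?_
  refine setLIntegral_mono' measurableSet_Ioi fun v hv => ?_
  refine (hF u hu v hv).trans (le_of_eq ?_)
  congr 1
  simp only [mul_assoc, ← Real.exp_add]
  congr 2
  ring

lemma aux_lower_int (N g A B C t : ℝ) (hN : 0 ≤ N) (hg : 0 < g) (ht : 0 < t) (hA : 0 ≤ A)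
    (hB : 0 ≤ B) (hC : 0 ≤ C) (F : ℝ → ℝ → ENNReal)
    (hF : ∀ u > 0, ∀ v > 0, ENNReal.ofReal (N * Real.exp (-g * ((u + v) / 2)) *
      Real.exp (-((A + B * ((u + v) / 2) + C * ((u + v) / 2) ^ 2) / t))) ≤ F u v) :
    ENNReal.ofReal (N * (2 / g) ^ 2) ≤ ∫⁻ u in Ioi (0 : ℝ), ∫⁻ v in Ioi (0 : ℝ), F u v +
      ENNReal.ofReal (N * ((A + 2 * B / g + 8 * C / g ^ 2) / t)  * Real.exp (-(g / 2) * ((u + v) / 2)))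
      := by
  rw [← aux_exp_int2 _ _ (by positivity) (by linarith)]
  refine setLIntegral_mono' measurableSet_Ioi fun u hu => ?_
  refine setLIntegral_mono' measurableSet_Ioi fun v hv => ?_
  refine le_trans ?_ (add_le_add_left (hF u hu v hv) _)
  rw [← ENNReal.ofReal_add (by positivity) (by positivity)]
  apply ENNReal.ofReal_le_ofReal
  have hu' : 0 < u := hu
  have hv' : 0 < v := hv
  have hr : 0 ≤ (u + v) / 2 := by positivity
  set r := (u + v) / 2
  set x := (A + B * r + C * r ^ 2) / t with hx
  have h1 : 1 - x ≤ Real.exp (-x) := by linarith [Real.add_one_le_exp (-x)]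
  have hE : 1 ≤ Real.exp (g / 2 * r) := Real.one_le_exp (by positivity)
  have hE1 : g / 2 * r ≤ Real.exp (g / 2 * r) := by linarith [Real.add_one_le_exp (g / 2 * r)]
  have hE2 : (g / 2 * r) ^ 2 / 2 ≤ Real.exp (g / 2 * r) := by
    linarith [Real.quadratic_le_exp_of_nonneg (x := g / 2 * r) (by positivity), (by positivity : 0 ≤ g / 2 * r)]
  have h2 : x ≤ (A + 2 * B / g + 8 * C / g ^ 2) / t * Real.exp (g / 2 * r) := by
    rw [hx, div_mul_eq_mul_div]
    gcongr
    have a1 : A ≤ A * Real.exp (g / 2 * r) := le_mul_of_one_le_right hA hE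
    have a2 : B * r ≤ 2 * B / g * Real.exp (g / 2 * r) := by
      calc B * r = 2 * B / g * (g / 2 * r) := by field_simp
        _ ≤ _ := by gcongr
    have a3 : C * r ^ 2 ≤ 8 * C / g ^ 2 * Real.exp (g / 2 * r) := by
      calc C * r ^ 2 = 8 * C / g ^ 2 * ((g / 2 * r) ^ 2 / 2) := by field_simp; norm_num
        _ ≤ _ := by gcongr
    linarith
  have h3 : Real.exp (-(g / 2) * r) = Real.exp (-g * r) * Real.exp (g / 2 * r) := by
    rw [← Real.exp_add]; congr 1; ring
  rw [h3]
  have h4 : 0 ≤ N * Real.exp (-g * r) := by positivity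
  have h5 : 1 ≤ Real.exp (-x) + (A + 2 * B / g + 8 * C / g ^ 2) / t * Real.exp (g / 2 * r) := by
    linarith
  have := mul_le_mul_of_nonneg_left h5 h4
  linarith

lemma aux_lower_int' (N g A B C t : ℝ) (hN : 0 ≤ N) (hg : 0 < g) (ht : 0 < t) (hA : 0 ≤ A)
    (hB : 0 ≤ B) (hC : 0 ≤ C) (F : ℝ → ℝ → ENNReal)
    (hF : ∀ u > 0, ∀ v > 0, ENNReal.ofReal (N * Real.exp (-g * ((u + v) / 2)) *
      Real.exp (-((A + B * ((u + v) / 2) + C * ((u + v) / 2) ^ 2) / t))) ≤ F u v) :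
    ENNReal.ofReal (N * (2 / g) ^ 2) ≤ (∫⁻ u in Ioi (0 : ℝ), ∫⁻ v in Ioi (0 : ℝ), F u v) +
      ENNReal.ofReal (N * ((A + 2 * B / g + 8 * C / g ^ 2) / t) * (4 / g) ^ 2) := by
  refine (aux_lower_int N g A B C t hN hg ht hA hB hC F hF).trans (le_of_eq ?_)
  have h1 : ∀ u : ℝ, ∫⁻ v in Ioi (0 : ℝ), F u v +
      ENNReal.ofReal (N * ((A + 2 * B / g + 8 * C / g ^ 2) / t)  * Real.exp (-(g / 2) * ((u + v) / 2)))
      = (∫⁻ v in Ioi (0 : ℝ), F u v) + ∫⁻ v in Ioi (0 : ℝ),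
      ENNReal.ofReal (N * ((A + 2 * B / g + 8 * C / g ^ 2) / t)  * Real.exp (-(g / 2) * ((u + v) / 2))) :=
    fun u => lintegral_add_right _ (by fun_prop)
  simp_rw [h1]
  rw [lintegral_add_right, aux_exp_int2 _ _ (by positivity) (by positivity)]
  · congr 3
    field_simp
    norm_num
  · exact Measurable.lintegral_prod_right' (ν := volume.restrict (Ioi (0 : ℝ)))
      (f := fun z : ℝ × ℝ => ENNReal.ofReal (N * ((A + 2 * B / g + 8 * C / g ^ 2) / t)
        * Real.exp (-(g / 2) * ((z.1 + z.2) / 2)))) (by fun_prop)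

lemma aux_final (g A B D : ℝ) (hg : 0 < g) (hA : 0 ≤ A) (hB : 0 ≤ B) (hD : 0 ≤ D) :
    ∃ M > (0 : ℝ), ∃ t₀ > (0 : ℝ), ∀ t ≥ t₀, B / t < g ∧ ∀ N > 0, ∀ Q : ℝ,
      Q ≤ N * Real.exp (A / t) * (2 / (g - B / t)) ^ 2 →
      N * (2 / g) ^ 2 ≤ Q + N * (D / t) * (4 / g) ^ 2 →
      |Q / (N * (2 / g) ^ 2) - 1| ≤ M / t := by
  set E := A + 4 * B / g with hE
  have hE0 : 0 ≤ E := by positivity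
  refine ⟨2 * E + 4 * D + 1, by positivity, 2 * B / g + E + 1, by positivity, ?_⟩
  intro t ht
  have hBg : 0 ≤ 2 * B / g := by positivity
  have ht0 : 0 < t := by linarith
  have hx : B / (g * t) ≤ 1 / 2 := by
    rw [div_le_iff₀ (by positivity)]
    have : 2 * B / g ≤ t := by linarith
    rw [div_le_iff₀ hg] at this
    linarith
  have hBt : B / t = g * (B / (g * t)) := by field_simp
  have hx0 : 0 ≤ B / (g * t) := by positivity
  set x := B / (g * t) with hxdef
  refine ⟨by rw [hBt]; nlinarith, ?_⟩
  intro N hN Q h1 h2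
  have hm : 0 < N * (2 / g) ^ 2 := by positivity
  have hinv : 1 / (1 - x) ≤ Real.exp (2 * x) := by
    rw [div_le_iff₀ (by linarith)]
    have := Real.add_one_le_exp (2 * x)
    calc (1 : ℝ) ≤ (2 * x + 1) * (1 - x) := by nlinarith
      _ ≤ _ := by gcongr; linarith
  have hup : Q / (N * (2 / g) ^ 2) ≤ 1 + 2 * (E / t) := by
    rw [div_le_iff₀ hm]
    refine h1.trans ?_
    have e1 : 2 / (g - B / t) = 2 / g * (1 / (1 - x)) := by
      have : 1 - x ≠ 0 := by linarith
      rw [hBt]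
      have : g - g * x ≠ 0 := by
        have : g - g * x = g * (1 - x) := by ring
        rw [this]; positivity
      field_simp
    have hinv0 : 0 ≤ 1 / (1 - x) := by
      have : 0 < 1 - x := by linarith
      positivity
    have e2 : Real.exp (A / t) * (1 / (1 - x)) ^ 2 ≤ Real.exp (E / t) := by
      calc _ ≤ Real.exp (A / t) * (Real.exp (2 * x)) ^ 2 := by gcongr
        _ = _ := by
          rw [← Real.exp_nat_mul, ← Real.exp_add]; congr 1
          rw [hE, hxdef]; push_cast; field_simp; ring
    have e3 : Real.exp (E / t) ≤ 1 + 2 * (E / t) := by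
      have hy : E / t ≤ 1 := by rw [div_le_one ht0]; linarith
      have hy0 : 0 ≤ E / t := by positivity
      have := Real.abs_exp_sub_one_le (x := E / t) (by rw [abs_of_nonneg hy0]; exact hy)
      rw [abs_of_nonneg hy0] at this
      linarith [le_abs_self (Real.exp (E / t) - 1)]
    rw [e1]
    calc N * Real.exp (A / t) * (2 / g * (1 / (1 - x))) ^ 2
        = (Real.exp (A / t) * (1 / (1 - x)) ^ 2) * (N * (2 / g) ^ 2) := by ring
      _ ≤ _ := by gcongr; exact e2.trans e3
  have hlo : 1 - 4 * D / t ≤ Q / (N * (2 / g) ^ 2) := by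
    rw [le_div_iff₀ hm]
    have : N * (D / t) * (4 / g) ^ 2 = 4 * D / t * (N * (2 / g) ^ 2) := by
      field_simp; norm_num
    linarith
  have hs : (2 * E + 4 * D + 1) / t = 2 * (E / t) + 4 * D / t + 1 / t := by
    field_simp
  have p1 : 0 ≤ E / t := by positivity
  have p2 : 0 ≤ 4 * D / t := by positivity
  have p3 : 0 ≤ 1 / t := by positivity
  rw [abs_le, hs]
  constructor <;> linarith

lemma aux_slice1 (s a : ℝ) (hs : 0 < s) (g : ℝ → ENNReal) :
    ∫⁻ z in {z : ℝ | s * z ≤ -a}, g z =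
      ∫⁻ u in Ioi (0 : ℝ), ENNReal.ofReal (1 / s) * g (-(a + u) / s) := by
  have himg : (fun u : ℝ => -(a + u) / s) '' Ici 0 = {z : ℝ | s * z ≤ -a} := by
    ext z
    simp only [mem_image, mem_Ici, mem_ofPred_eq]
    constructor
    · rintro ⟨u, hu, rfl⟩
      rw [mul_div_cancel₀ _ hs.ne']; linarith
    · intro h
      refine ⟨-a - s * z, by linarith, ?_⟩
      field_simp
      ring
  have h := lintegral_image_eq_lintegral_abs_deriv_mul (s := Ici 0)
    (f := fun u : ℝ => -(a + u) / s) (f' := fun _ => -1 / s) measurableSet_Ici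
    (fun x _ => by
      exact ((((hasDerivAt_id x).const_add a).neg).div_const s).hasDerivWithinAt)
    (by
      intro x _ y _ hxy
      simp only at hxy
      field_simp at hxy
      linarith) g
  rw [himg] at h
  rw [h, restrict_Ioi_eq_restrict_Ici]
  have : |(-1 : ℝ) / s| = 1 / s := by rw [neg_div, abs_neg, abs_of_pos (by positivity)]
  simp only [this]

lemma aux_slice2 (s a : ℝ) (hs : 0 < s) (f : ℝ × ℝ → ENNReal) (hf : Measurable f) :
    ∫⁻ z in {z : ℝ × ℝ | s * z.1 ≤ -a ∧ s * z.2 ≤ -a}, f z =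
      ∫⁻ u in Ioi (0 : ℝ), ∫⁻ v in Ioi (0 : ℝ),
        ENNReal.ofReal (1 / s ^ 2) * f (-(a + u) / s, -(a + v) / s) := by
  have hset : {z : ℝ × ℝ | s * z.1 ≤ -a ∧ s * z.2 ≤ -a} =
      {z : ℝ | s * z ≤ -a} ×ˢ {z : ℝ | s * z ≤ -a} := by
    ext z; simp
  rw [hset, Measure.volume_eq_prod, ← Measure.prod_restrict, lintegral_prod _ hf.aemeasurable,
    aux_slice1 s a hs]
  refine lintegral_congr fun u => ?_
  rw [aux_slice1 s a hs, ← lintegral_const_mul]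
  · refine lintegral_congr fun v => ?_
    rw [← mul_assoc, ← ENNReal.ofReal_mul (by positivity)]
    congr 2
    field_simp
  · fun_prop

lemma aux_form (k c' b th B ρ t w u v : ℝ) (hw : 0 < w) (h1 : ρ < 1) (h2 : -1 < ρ)
    (hk : k ^ 2 = 2 / (1 + ρ)) (hc' : c' = 2 / (1 - ρ))
    (hB : B ^ 2 = th ^ 2 * k ^ 2 + b ^ 2) :
    -(b ^ 2 / 2) * w + (-((-(t + th * w + u) / √w) ^ 2 - 2 * ρ * (-(t + th * w + u) / √w) *
      (-(t + th * w + v) / √w) + (-(t + th * w + v) / √w) ^ 2) / (2 * (1 - ρ ^ 2))) =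
    -(k ^ 2 * th * (t + (u + v) / 2)) + (-(B ^ 2 * w / 2) -
     √(k ^ 2 * (t + (u + v) / 2) ^ 2 + c' * ((u - v) / 2) ^ 2) ^ 2 / (2 * w)) := by
  have hp : 0 < 1 + ρ := by linarith
  have hm : 0 < 1 - ρ := by linarith
  have hpos : 0 ≤ k ^ 2 * (t + (u + v) / 2) ^ 2 + c' * ((u - v) / 2) ^ 2 := by
    rw [hc']; positivity
  rw [Real.sq_sqrt hpos, hB, hk, hc']
  have e : 1 - ρ ^ 2 = (1 + ρ) * (1 - ρ) := by ring
  have e2 : (-(t + th * w + u) / √w) ^ 2 - 2 * ρ * (-(t + th * w + u) / √w) *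
      (-(t + th * w + v) / √w) + (-(t + th * w + v) / √w) ^ 2 =
      ((t + th * w + u) ^ 2 - 2 * ρ * (t + th * w + u) * (t + th * w + v) +
        (t + th * w + v) ^ 2) / w := by
    have hs : 0 < √w := Real.sqrt_pos.2 hw
    have hsq : √w ^ 2 = w := Real.sq_sqrt hw.le
    conv_rhs => rw [← hsq]
    generalize √w = s at *
    subst hsq
    field_simp
  rw [e2, e]
  field_simp
  ring

lemma aux_prob (p b θ ρ : ℝ) (hp : 0 < p) (hb : 0 < b) (hρ : ρ ∈ Set.Ioo (-1 : ℝ) 1)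
    {Ω : Type*} [MeasurableSpace Ω] (P : Measure Ω) [IsProbabilityMeasure P]
    (W Z₁ Z₂ : Ω → ℝ) (hW : Measurable W) (hZ : Measurable fun ω => (Z₁ ω, Z₂ ω))
    (hWlaw : Measure.map W P =
      volume.withDensity fun w : ℝ => ENNReal.ofReal
        (if 0 < w then
          (b ^ 2 / 2) ^ p * w ^ (p - 1) * Real.exp (-(b ^ 2 / 2) * w) / Real.Gamma p
        else 0))
    (hZlaw : Measure.map (fun ω => (Z₁ ω, Z₂ ω)) P =
      volume.withDensity fun z : ℝ × ℝ => ENNReal.ofReal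
        ((2 * Real.pi * Real.sqrt (1 - ρ ^ 2))⁻¹ *
          Real.exp (-(z.1 ^ 2 - 2 * ρ * z.1 * z.2 + z.2 ^ 2) / (2 * (1 - ρ ^ 2)))))
    (hindep : ProbabilityTheory.IndepFun W (fun ω => (Z₁ ω, Z₂ ω)) P)
    (k c' B t : ℝ) (hk : k ^ 2 = 2 / (1 + ρ)) (hc' : c' = 2 / (1 - ρ))
    (hB : B ^ 2 = θ ^ 2 * k ^ 2 + b ^ 2) :
    P {ω | θ * W ω + √(W ω) * Z₁ ω ≤ -t ∧ θ * W ω + √(W ω) * Z₂ ω ≤ -t} =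
    ∫⁻ u in Ioi (0 : ℝ), ∫⁻ v in Ioi (0 : ℝ),
      ENNReal.ofReal ((b ^ 2 / 2) ^ p / Real.Gamma p * (2 * π * √(1 - ρ ^ 2))⁻¹ *
        Real.exp (-(k ^ 2 * θ * (t + (u + v) / 2)))) *
      ∫⁻ w in Ioi (0 : ℝ), ENNReal.ofReal (w ^ ((p - 1) - 1) * Real.exp (-(B ^ 2 * w / 2) -
        √(k ^ 2 * (t + (u + v) / 2) ^ 2 + c' * ((u - v) / 2) ^ 2) ^ 2 / (2 * w))) := by
  obtain ⟨hρ1, hρ2⟩ := hρ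
  have hG : 0 < Real.Gamma p := Real.Gamma_pos_of_pos hp
  set E : Set (ℝ × (ℝ × ℝ)) :=
    {x | θ * x.1 + √x.1 * x.2.1 ≤ -t ∧ θ * x.1 + √x.1 * x.2.2 ≤ -t} with hE
  have hEm : MeasurableSet E := by
    have m1 : MeasurableSet {x : ℝ × (ℝ × ℝ) | θ * x.1 + √x.1 * x.2.1 ≤ -t} :=
      measurableSet_le (by fun_prop) (by fun_prop)
    have m2 : MeasurableSet {x : ℝ × (ℝ × ℝ) | θ * x.1 + √x.1 * x.2.2 ≤ -t} :=
      measurableSet_le (by fun_prop) (by fun_prop)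
    exact m1.inter m2
  have hpair := (ProbabilityTheory.indepFun_iff_map_prod_eq_prod_map_map hW.aemeasurable
    hZ.aemeasurable).1 hindep
  set φ : ℝ × ℝ → ENNReal := fun z : ℝ × ℝ => ENNReal.ofReal
        ((2 * Real.pi * Real.sqrt (1 - ρ ^ 2))⁻¹ *
          Real.exp (-(z.1 ^ 2 - 2 * ρ * z.1 * z.2 + z.2 ^ 2) / (2 * (1 - ρ ^ 2)))) with hφ
  have hφm : Measurable φ := by fun_prop
  set f : ℝ → ENNReal := fun w : ℝ => ENNReal.ofReal
        (if 0 < w then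
          (b ^ 2 / 2) ^ p * w ^ (p - 1) * Real.exp (-(b ^ 2 / 2) * w) / Real.Gamma p
        else 0) with hf
  have hfm : Measurable f := by
    apply Measurable.ennreal_ofReal
    exact Measurable.ite measurableSet_Ioi (by fun_prop) (by fun_prop)
  have s1 : P {ω | θ * W ω + √(W ω) * Z₁ ω ≤ -t ∧ θ * W ω + √(W ω) * Z₂ ω ≤ -t} =
      (Measure.map (fun ω => (W ω, (Z₁ ω, Z₂ ω))) P) E := by
    rw [Measure.map_apply (hW.prodMk hZ) hEm]
    rfl
  have : SFinite (volume.withDensity φ) := by rw [← hZlaw]; infer_instance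
  have s2 : (Measure.map (fun ω => (W ω, (Z₁ ω, Z₂ ω))) P) E =
      ∫⁻ w in Ioi (0 : ℝ), f w * (volume.withDensity φ) (Prod.mk w ⁻¹' E) := by
    rw [hpair, hWlaw, hZlaw, Measure.prod_apply hEm,
      lintegral_withDensity_eq_lintegral_mul _ hfm (measurable_measure_prodMk_left hEm),
      ← lintegral_indicator measurableSet_Ioi]
    refine lintegral_congr fun w => ?_
    by_cases hw : w ∈ Ioi (0 : ℝ)
    · rw [indicator_of_mem hw]; rfl
    · rw [indicator_of_notMem hw]
      have hw' : ¬ 0 < w := hw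
      simp [hf, hw']
  set Ψ : ℝ → ℝ → ℝ → ENNReal := fun w u v =>
      ENNReal.ofReal ((b ^ 2 / 2) ^ p / Real.Gamma p * (2 * π * √(1 - ρ ^ 2))⁻¹ *
        Real.exp (-(k ^ 2 * θ * (t + (u + v) / 2)))) *
      ENNReal.ofReal (w ^ ((p - 1) - 1) * Real.exp (-(B ^ 2 * w / 2) -
        √(k ^ 2 * (t + (u + v) / 2) ^ 2 + c' * ((u - v) / 2) ^ 2) ^ 2 / (2 * w))) with hΨ
  have hΨm : Measurable (fun x : ℝ × ℝ × ℝ => Ψ x.1 x.2.1 x.2.2) := by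
    simp only [hΨ]
    fun_prop
  have s3 : ∫⁻ w in Ioi (0 : ℝ), f w * (volume.withDensity φ) (Prod.mk w ⁻¹' E) =
      ∫⁻ w in Ioi (0 : ℝ), ∫⁻ u in Ioi (0 : ℝ), ∫⁻ v in Ioi (0 : ℝ), Ψ w u v := by
    refine setLIntegral_congr_fun measurableSet_Ioi fun w hw => ?_
    have hw' : (0 : ℝ) < w := hw
    have hs : 0 < √w := Real.sqrt_pos.2 hw'
    have hset : Prod.mk w ⁻¹' E =
        {z : ℝ × ℝ | √w * z.1 ≤ -(t + θ * w) ∧ √w * z.2 ≤ -(t + θ * w)} := by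
      ext z
      simp only [hE, mem_preimage, mem_ofPred_eq]
      constructor <;> rintro ⟨h1, h2⟩ <;> constructor <;> linarith
    have hsm : MeasurableSet (Prod.mk w ⁻¹' E) := measurable_prodMk_left hEm
    rw [withDensity_apply _ hsm, hset, aux_slice2 _ _ hs _ hφm,
      ← lintegral_const_mul' _ _ (by simp [hf])]
    refine lintegral_congr fun u => ?_
    rw [← lintegral_const_mul' _ _ (by simp [hf])]
    refine lintegral_congr fun v => ?_
    simp only [hf, hφ, hΨ, if_pos hw']
    rw [← ENNReal.ofReal_mul (by positivity), ← ENNReal.ofReal_mul (by positivity),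
      ← ENNReal.ofReal_mul (by positivity)]
    congr 1
    have key := aux_form k c' b θ B ρ t w u v hw' hρ2 hρ1 hk hc' hB
    have key2 := congrArg Real.exp key
    rw [Real.exp_add, Real.exp_add] at key2
    rw [Real.sq_sqrt hw'.le, Real.rpow_sub_one hw'.ne' (p - 1)]
    linear_combination ((b ^ 2 / 2) ^ p / Real.Gamma p * (2 * π * √(1 - ρ ^ 2))⁻¹ * w ^ (p - 1) / w)
      * key2
  rw [s1, s2, s3, lintegral_lintegral_swap]
  · refine lintegral_congr fun u => ?_
    rw [lintegral_lintegral_swap]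
    · refine lintegral_congr fun v => ?_
      rw [lintegral_const_mul' _ _ (by simp)]
    · exact (hΨm.comp (f := fun x : ℝ × ℝ => (x.1, u, x.2)) (by fun_prop)).aemeasurable
  · refine Measurable.aemeasurable ?_
    exact Measurable.lintegral_prod_right' (ν := volume.restrict (Ioi (0 : ℝ)))
      (f := fun z : (ℝ × ℝ) × ℝ => Ψ z.1.1 z.1.2 z.2)
      (hΨm.comp (f := fun z : (ℝ × ℝ) × ℝ => (z.1.1, z.1.2, z.2)) (by fun_prop))

/-- Joint lower-tail asymptotic for the equi-skew GH model GH(0,R,(θ,θ),p,0,b):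
with W ~ Gamma(p, b²/2) independent of the standardized bivariate normal (Z₁,Z₂) with
correlation ρ, X_i = θW + √W·Z_i, α = √((1−ρ)/(1+ρ)), β = √(θ²(1+α²)+b²),
γ = β + θ√(1+α²), K̄ = 2^{p−1}b^{−2p}Γ(p), C₃ = (1+α²)^{(2p−3)/4}/(√(2π)K̄β^{p−1/2}αγ²),
P(X₁ ≤ y, X₂ ≤ y) = C₃|y|^{p−3/2}e^{−√(1+α²)γ|y|}(1 + O(1/|y|)) as y → −∞. -/
theorem stmt_14 (p b θ ρ : ℝ) (hp : 0 < p) (hb : 0 < b) (hρ : ρ ∈ Set.Ioo (-1 : ℝ) 1)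
    {Ω : Type*} [MeasurableSpace Ω] (P : Measure Ω) [IsProbabilityMeasure P]
    (W Z₁ Z₂ : Ω → ℝ) (hW : Measurable W) (hZ : Measurable fun ω => (Z₁ ω, Z₂ ω))
    (hWlaw : Measure.map W P =
      volume.withDensity fun w : ℝ => ENNReal.ofReal
        (if 0 < w then
          (b ^ 2 / 2) ^ p * w ^ (p - 1) * Real.exp (-(b ^ 2 / 2) * w) / Real.Gamma p
        else 0))
    (hZlaw : Measure.map (fun ω => (Z₁ ω, Z₂ ω)) P =
      volume.withDensity fun z : ℝ × ℝ => ENNReal.ofReal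
        ((2 * Real.pi * Real.sqrt (1 - ρ ^ 2))⁻¹ *
          Real.exp (-(z.1 ^ 2 - 2 * ρ * z.1 * z.2 + z.2 ^ 2) / (2 * (1 - ρ ^ 2)))))
    (hindep : ProbabilityTheory.IndepFun W (fun ω => (Z₁ ω, Z₂ ω)) P)
    (X₁ X₂ : Ω → ℝ)
    (hX₁ : ∀ ω, X₁ ω = θ * W ω + Real.sqrt (W ω) * Z₁ ω)
    (hX₂ : ∀ ω, X₂ ω = θ * W ω + Real.sqrt (W ω) * Z₂ ω)
    (α β γ Kbar C₃ : ℝ)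
    (hα : α = Real.sqrt ((1 - ρ) / (1 + ρ)))
    (hβ : β = Real.sqrt (θ ^ 2 * (1 + α ^ 2) + b ^ 2))
    (hγ : γ = β + θ * Real.sqrt (1 + α ^ 2))
    (hK : Kbar = 2 ^ (p - 1) * b ^ (-(2 * p)) * Real.Gamma p)
    (hC₃ : C₃ = (1 + α ^ 2) ^ ((2 * p - 3) / 4) /
      (Real.sqrt (2 * Real.pi) * Kbar * β ^ (p - 1 / 2) * α * γ ^ 2)) :
    ∃ M > (0 : ℝ), ∃ y₀ < (0 : ℝ), ∀ y ≤ y₀,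
      |(P {ω | X₁ ω ≤ y ∧ X₂ ω ≤ y}).toReal /
          (C₃ * |y| ^ (p - 3 / 2) * Real.exp (-(Real.sqrt (1 + α ^ 2) * γ) * |y|)) - 1|
        ≤ M / |y| := by
  obtain ⟨hρ1, hρ2⟩ := hρ
  have hp1 : 0 < 1 + ρ := by linarith
  have hm1 : 0 < 1 - ρ := by linarith
  have hG : 0 < Real.Gamma p := Real.Gamma_pos_of_pos hp
  have hα0 : 0 < α := by rw [hα]; positivity
  have hα2 : α ^ 2 = (1 - ρ) / (1 + ρ) := by rw [hα, Real.sq_sqrt (by positivity)]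
  set k := √(1 + α ^ 2) with hkdef
  have hk0 : 0 < k := by positivity
  have hksq : k ^ 2 = 1 + α ^ 2 := by rw [hkdef, Real.sq_sqrt (by positivity)]
  have hk : k ^ 2 = 2 / (1 + ρ) := by rw [hksq, hα2]; field_simp; ring
  have hβ0 : 0 < β := by rw [hβ]; positivity
  have hB : β ^ 2 = θ ^ 2 * k ^ 2 + b ^ 2 := by
    rw [hβ, Real.sq_sqrt (by positivity), hksq]
  have hγ0 : 0 < γ := by
    have h1 : |θ * k| < β := by
      apply abs_lt_of_sq_lt_sq _ hβ0.le
      rw [hB]; nlinarith [pow_pos hb 2]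
    have := (abs_lt.1 h1).1
    rw [hγ]; linarith
  obtain ⟨c', hc'⟩ : ∃ c' : ℝ, c' = 2 / (1 - ρ) := ⟨_, rfl⟩
  have hc'0 : 0 < c' := by rw [hc']; positivity
  have hg : k * β + k ^ 2 * θ = k * γ := by rw [hγ]; ring
  have hg0 : 0 < k * γ := by positivity
  set q : ℝ := p - 3 / 2 with hq
  set A1 : ℝ := (p - 1) ^ 2 / (2 * (β * k)) with hA1
  set A2 : ℝ := 1 / (8 * (β * k)) with hA2
  set Bc : ℝ := |q| * (1 + c' / (2 * k ^ 2)) with hBc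
  set Cc : ℝ := β * c' / (2 * k) with hCc
  have hA1' : 0 ≤ A1 := by positivity
  have hA2' : 0 ≤ A2 := by positivity
  have hBc' : 0 ≤ Bc := by positivity
  have hCc' : 0 ≤ Cc := by positivity
  obtain ⟨M, hM, t₀, ht₀, hfin⟩ := aux_final (k * γ) A1 Bc
    (A2 + 2 * Bc / (k * γ) + 8 * Cc / (k * γ) ^ 2) hg0 hA1' hBc' (by positivity)
  refine ⟨M, hM, -t₀, by linarith, ?_⟩
  intro y hy
  have hy0 : y < 0 := by linarith
  rw [abs_of_neg hy0]
  obtain ⟨t, rfl⟩ : ∃ t, y = -t := ⟨-y, by ring⟩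
  rw [neg_neg]
  have ht : t₀ ≤ t := by linarith
  have ht0 : 0 < t := by linarith
  obtain ⟨hBt, hfin'⟩ := hfin t ht
  have hρsq : √(1 - ρ ^ 2) = 2 * α / k ^ 2 := by
    have h1 : 1 - ρ ^ 2 = (2 * α / k ^ 2) ^ 2 := by
      rw [hk, div_pow, mul_pow, hα2]; field_simp; ring
    rw [h1, Real.sqrt_sq (by positivity)]
  have hρ0 : 0 < √(1 - ρ ^ 2) := by rw [hρsq]; positivity
  set K0 : ℝ := (b ^ 2 / 2) ^ p / Real.Gamma p * (2 * π * √(1 - ρ ^ 2))⁻¹ with hK0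
  have hK0' : 0 < K0 := by positivity
  set N : ℝ := K0 * (√(2 * π) * β ^ (-(p - 1) - 1 / 2)) * ((k * t) ^ q * Real.exp (-(k * γ) * t))
    with hN
  have hN0 : 0 < N := by positivity
  have hden : C₃ * t ^ q * Real.exp (-(k * γ) * t) = N * (2 / (k * γ)) ^ 2 := by
    have e1 : (1 + α ^ 2) ^ ((2 * p - 3) / 4) = k ^ q := by
      rw [← hksq, ← Real.rpow_natCast, ← Real.rpow_mul hk0.le]
      congr 1; rw [hq]; push_cast; ring
    have e2 : (b ^ 2 / 2) ^ p = b ^ (2 * p) / 2 ^ p := by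
      rw [Real.div_rpow (by positivity) (by norm_num), ← Real.rpow_natCast,
        ← Real.rpow_mul hb.le]
      norm_num
    have e3 : Kbar = 2 ^ p / 2 / b ^ (2 * p) * Real.Gamma p := by
      rw [hK, Real.rpow_sub_one (by norm_num), Real.rpow_neg hb.le]; ring
    have e4 : β ^ (-(p - 1) - 1 / 2) = (β ^ (p - 1 / 2))⁻¹ := by
      rw [← Real.rpow_neg hβ0.le]; congr 1; ring
    have e5 : √(2 * π) ^ 2 = 2 * π := Real.sq_sqrt (by positivity)
    have hs0 : 0 < √(2 * π) := by positivity
    rw [hC₃, e1, e3, hN, hK0, e2, e4, hρsq, Real.mul_rpow hk0.le ht0.le]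
    have b1 : 0 < β ^ (p - 1 / 2) := by positivity
    have b2 : 0 < b ^ (2 * p) := by positivity
    have b3 : (0 : ℝ) < 2 ^ p := by positivity
    generalize β ^ (p - 1 / 2) = x1 at *
    generalize b ^ (2 * p) = x2 at *
    generalize (2 : ℝ) ^ p = x3 at *
    generalize √(2 * π) = x4 at *
    generalize k ^ q = x5 at *
    generalize t ^ q = x6 at *
    have hpi : π = x4 ^ 2 / 2 := by linarith
    rw [hpi]
    field_simp
  rw [hden]
  have hset : {ω | X₁ ω ≤ -t ∧ X₂ ω ≤ -t} =
    {ω | θ * W ω + √(W ω) * Z₁ ω ≤ -t ∧ θ * W ω + √(W ω) * Z₂ ω ≤ -t} := by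
    ext ω; simp only [mem_ofPred_eq, hX₁, hX₂]
  have hprob := aux_prob p b θ ρ hp hb ⟨hρ1, hρ2⟩ P W Z₁ Z₂ hW hZ hWlaw hZlaw hindep k c' β t
    hk hc' hB
  rw [← hset] at hprob
  have hqe : (p - 1) - 1 / 2 = q := by rw [hq]; ring
  have hSpos : ∀ u > 0, ∀ v > 0,
      0 < √(k ^ 2 * (t + (u + v) / 2) ^ 2 + c' * ((u - v) / 2) ^ 2) := by
    intro u hu v hv
    positivity
  have hdr : ∀ u > (0 : ℝ), ∀ v > (0 : ℝ), |(u - v) / 2| ≤ (u + v) / 2 := by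
    intro u hu v hv
    rw [abs_le]; constructor <;> linarith
  have hQfin : P {ω | X₁ ω ≤ -t ∧ X₂ ω ≤ -t} ≠ ⊤ := measure_ne_top _ _
  have hup : P {ω | X₁ ω ≤ -t ∧ X₂ ω ≤ -t} ≤
      ENNReal.ofReal (N * Real.exp (A1 / t) * (2 / (k * γ - Bc / t)) ^ 2) := by
    rw [hprob]
    apply aux_upper_int N (k * γ) A1 Bc t hN0.le hBt
    intro u hu v hv
    have hH := aux_H_upper (p - 1) β _ hβ0 (hSpos u hu v hv)
    refine (mul_le_mul_right hH _).trans ?_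
    rw [← ENNReal.ofReal_mul (by positivity)]
    apply ENNReal.ofReal_le_ofReal
    have hpt := aux_point_upper k c' β θ q (p - 1) t ((u + v) / 2) ((u - v) / 2) hk0 hc'0 hβ0 ht0
      (by positivity) (hdr u hu v hv)
    rw [hg] at hpt
    rw [hqe]
    have := mul_le_mul_of_nonneg_left hpt
      (by positivity : 0 ≤ K0 * (√(2 * π) * β ^ (-(p - 1) - 1 / 2)))
    refine le_trans (le_of_eq ?_) (this.trans (le_of_eq ?_))
    · ring
    · rw [hN]; ring
  have hlo : ENNReal.ofReal (N * (2 / (k * γ)) ^ 2) ≤ P {ω | X₁ ω ≤ -t ∧ X₂ ω ≤ -t} +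
      ENNReal.ofReal (N * ((A2 + 2 * Bc / (k * γ) + 8 * Cc / (k * γ) ^ 2) / t)
        * (4 / (k * γ)) ^ 2) := by
    rw [hprob]
    apply aux_lower_int' N (k * γ) A2 Bc Cc t hN0.le hg0 ht0 hA2' hBc' hCc'
    intro u hu v hv
    have hH := aux_H_lower (p - 1) β _ hβ0 (hSpos u hu v hv)
    refine le_trans ?_ (mul_le_mul_right hH _)
    rw [← ENNReal.ofReal_mul (by positivity)]
    apply ENNReal.ofReal_le_ofReal
    have hpt := aux_point_lower k c' β θ q t ((u + v) / 2) ((u - v) / 2) hk0 hc'0 hβ0 ht0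
      (by positivity) (hdr u hu v hv)
    rw [hg] at hpt
    rw [hqe]
    have := mul_le_mul_of_nonneg_left hpt
      (by positivity : 0 ≤ K0 * (√(2 * π) * β ^ (-(p - 1) - 1 / 2)))
    refine le_trans (le_of_eq ?_) (this.trans (le_of_eq ?_))
    · rw [hN]; ring
    · ring
  apply hfin' N hN0
  · exact ENNReal.toReal_le_of_le_ofReal (by positivity) hup
  · rw [← ENNReal.ofReal_toReal hQfin, ← ENNReal.ofReal_add ENNReal.toReal_nonneg (by positivity)]
      at hlo
    exact (ENNReal.ofReal_le_ofReal_iff (by positivity)).1 hlo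
end

section
/- Let F : ℝ → [0, 1] be a continuous, strictly increasing distribution function, and suppose there exist constants A > 0, c > 0, p ∈ ℝ such that F(x) = A·|x|^{p−1}·e^{−c|x|}·(1 + O(1/|x|)) as x → −∞. Then the quantile function satisfies F^{−1}(u) = (log u)/c − ((p−1)/c)·log|log u| + (1/c)·log(c^{p−1}/A) + O(log|log u|/|log u|) as u → 0⁺; that is, there exist M > 0 and u₀ ∈ (0,1) such that for all 0 < u ≤ u₀, |F^{−1}(u) − (log u)/c + ((p−1)/c)log|log u| − (1/c)log(c^{p−1}/A)| ≤ M·log|log u|/|log u|. -/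
open MeasureTheory Real Set Filter


lemma aux_log {t : ℝ} (ht : |t| ≤ 1 / 2) : |Real.log (1 + t)| ≤ 2 * |t| := by
  have h1 := (abs_le.mp ht).1
  have hpos : 0 < 1 + t := by linarith
  have h2 := Real.log_le_sub_one_of_pos hpos
  have h3 := Real.one_sub_inv_le_log_of_pos hpos
  have h4 : 1 - (1 + t)⁻¹ = t / (1 + t) := by field_simp; ring
  have h5 : -(2 * |t|) ≤ t / (1 + t) := by
    rw [le_div_iff₀ hpos]
    have := neg_abs_le t
    nlinarith [abs_nonneg t]
  rw [abs_le]
  constructor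
  · linarith
  · linarith [le_abs_self t, abs_nonneg t]

set_option maxHeartbeats 800000 in
lemma aux_key {A c q M y u : ℝ} (hA : 0 < A) (hc : 0 < c) (hM : 0 < M) (hu : 0 < u)
    (hy1 : 1 ≤ y) (hly : 1 ≤ Real.log y) (hyM : 2 * M ≤ y)
    (hsmall : (|q| + |Real.log A| + 1) / c * (Real.log y / y) ≤ 1 / 2)
    (hyc : 2 / c ≤ c * y / 2) (hyc1 : 1 ≤ c * y / 2)
    (ht : |u / (A * y ^ q * Real.exp (-c * y)) - 1| ≤ M / y) :
    |-y - Real.log u / c + q / c * Real.log |Real.log u| - (1 / c) * Real.log (c ^ q / A)|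
      ≤ 4 * (2 * ((|q| + |Real.log A| + 1) / c) * |q| + 2 * M) * Real.log |Real.log u|
        / |Real.log u| := by
  have hy : 0 < y := by linarith
  have hyq : 0 < y ^ q := Real.rpow_pos_of_pos hy q
  have hMy : M / y ≤ 1 / 2 := by rw [div_le_iff₀ hy]; linarith
  obtain ⟨t, htd⟩ : ∃ t, t = u / (A * y ^ q * Real.exp (-c * y)) - 1 := ⟨_, rfl⟩
  rw [← htd] at ht
  have hr := aux_log (ht.trans hMy)
  obtain ⟨r, hrd⟩ : ∃ r, r = Real.log (1 + t) := ⟨_, rfl⟩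
  rw [← hrd] at hr
  have hr2 : |r| ≤ 2 * M / y := by rw [mul_div_assoc]; linarith
  have hr1 : |r| ≤ 1 := by linarith
  have hlogu : Real.log u = r + Real.log A + q * Real.log y - c * y := by
    have e : u = (1 + t) * (A * y ^ q * Real.exp (-c * y)) := by
      rw [htd]; field_simp; ring
    have h1 : 1 + t ≠ 0 := by
      have := (abs_le.mp (ht.trans hMy)).1
      linarith
    rw [e, Real.log_mul h1 (by positivity), Real.log_mul (by positivity) (by positivity),
      Real.log_mul (by positivity) (by positivity), Real.log_exp, Real.log_rpow hy, hrd]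
    ring
  obtain ⟨K, hK⟩ : ∃ K, K = (|q| + |Real.log A| + 1) / c := ⟨_, rfl⟩
  have hK0 : 0 ≤ K := by rw [hK]; positivity
  have hKc : K * c = |q| + |Real.log A| + 1 := by rw [hK]; field_simp
  rw [← hK] at hsmall ⊢
  obtain ⟨d, hd⟩ : ∃ d, d = -(r + Real.log A + q * Real.log y) / (c * y) := ⟨_, rfl⟩
  have hcy : 0 < c * y := by positivity
  have hdb : |d| ≤ K * (Real.log y / y) := by
    rw [hd, abs_div, abs_neg, abs_of_pos hcy, div_le_iff₀ hcy]
    have e : K * (Real.log y / y) * (c * y) = (|q| + |Real.log A| + 1) * Real.log y := by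
      rw [← hKc]; field_simp
    rw [e]
    have h1 := abs_add_three r (Real.log A) (q * Real.log y)
    rw [abs_mul, abs_of_nonneg (by linarith : 0 ≤ Real.log y)] at h1
    nlinarith [abs_nonneg (Real.log A), abs_nonneg q]
  have hdl := aux_log (hdb.trans hsmall)
  have hdabs := abs_le.mp (hdb.trans hsmall)
  obtain ⟨L, hL⟩ : ∃ L, L = -Real.log u := ⟨_, rfl⟩
  have hLd : L = c * y * (1 + d) := by
    rw [hL, hlogu, hd]; field_simp; ring
  have hL1 : c * y / 2 ≤ L := by rw [hLd]; nlinarith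
  have hL2 : L ≤ 2 * (c * y) := by rw [hLd]; nlinarith
  have hLpos : 0 < L := by linarith
  have habs : |Real.log u| = L := by
    rw [← abs_neg, ← hL, abs_of_pos hLpos]
  rw [habs]
  have hlogL : Real.log L = Real.log c + Real.log y + Real.log (1 + d) := by
    rw [hLd, Real.log_mul (by positivity) (by linarith), Real.log_mul hc.ne' hy.ne']
  have hlu : Real.log u = -L := by linarith
  have hE : -y - Real.log u / c + q / c * Real.log L - (1 / c) * Real.log (c ^ q / A)
      = (1 / c) * (q * Real.log (1 + d) - r) := by
    rw [Real.log_div (by positivity) hA.ne', Real.log_rpow hc, hlogL, hlogu]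
    field_simp; ring
  rw [hE, abs_mul, abs_of_pos (by positivity : 0 < 1 / c)]
  have hb : |q * Real.log (1 + d) - r| ≤ (2 * K * |q| + 2 * M) * (Real.log y / y) := by
    have h1 := abs_sub (q * Real.log (1 + d)) r
    rw [abs_mul] at h1
    have h2 : |q| * |Real.log (1 + d)| ≤ |q| * (2 * (K * (Real.log y / y))) := by
      apply mul_le_mul_of_nonneg_left _ (abs_nonneg q); linarith
    have h3 : 2 * M / y ≤ 2 * M * (Real.log y / y) := by
      rw [← mul_div_assoc]
      apply div_le_div_of_nonneg_right _ hy.le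
      nlinarith
    linarith
  have hlog2 : Real.log y ≤ 2 * Real.log L := by
    have h1 : y ≤ L * L := by
      have : y = 2 / c * (c * y / 2) := by field_simp
      rw [this]
      apply mul_le_mul (by linarith) hL1 (by linarith) hLpos.le
    have := Real.log_le_log hy h1
    rw [Real.log_mul hLpos.ne' hLpos.ne'] at this
    linarith
  have hfin : Real.log y / y ≤ 4 * c * (Real.log L / L) := by
    rw [← mul_div_assoc, div_le_div_iff₀ hy hLpos]
    have : Real.log y * L ≤ (2 * Real.log L) * (2 * (c * y)) :=
      mul_le_mul hlog2 hL2 hLpos.le (by linarith)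
    linarith
  have hC : 0 ≤ 2 * K * |q| + 2 * M := by positivity
  calc 1 / c * |q * Real.log (1 + d) - r|
      ≤ 1 / c * ((2 * K * |q| + 2 * M) * (4 * c * (Real.log L / L))) := by
        apply mul_le_mul_of_nonneg_left _ (by positivity)
        exact hb.trans (mul_le_mul_of_nonneg_left hfin hC)
    _ = (1 / c * c) * (4 * (2 * K * |q| + 2 * M) * Real.log L / L) := by ring
    _ = _ := by rw [one_div_mul_cancel hc.ne', one_mul]

/-- Asymptotic inversion of a distribution function with generalized gamma-type lower
tail F(x) = A|x|^{p−1}e^{−c|x|}(1 + O(1/|x|)) as x → −∞: the quantile function satisfies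
F^{−1}(u) = (log u)/c − ((p−1)/c)log|log u| + (1/c)log(c^{p−1}/A) + O(log|log u|/|log u|)
as u → 0⁺, where F^{−1}(u) is the unique x with F(x) = u. -/
theorem stmt_15 (F : ℝ → ℝ) (hcont : Continuous F) (hmono : StrictMono F)
    (hrange : ∀ x, F x ∈ Icc (0 : ℝ) 1)
    (hbot : Tendsto F atBot (nhds 0)) (htop : Tendsto F atTop (nhds 1))
    (A c p : ℝ) (hA : 0 < A) (hc : 0 < c)
    (htail : ∃ M > (0 : ℝ), ∃ x₀ < (0 : ℝ), ∀ x ≤ x₀,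
      |F x / (A * |x| ^ (p - 1) * Real.exp (-c * |x|)) - 1| ≤ M / |x|) :
    ∃ M > (0 : ℝ), ∃ u₀ ∈ Ioo (0 : ℝ) 1, ∀ u, 0 < u → u ≤ u₀ →
      ∀ x, F x = u →
        |x - Real.log u / c + (p - 1) / c * Real.log |Real.log u| -
            (1 / c) * Real.log (c ^ (p - 1) / A)|
          ≤ M * Real.log |Real.log u| / |Real.log u| := by
  obtain ⟨M, hM, x₀, hx₀, hT⟩ := htail
  have hlim : Tendsto (fun y : ℝ => (|p - 1| + |Real.log A| + 1) / c * (Real.log y / y)) atTop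
      (nhds 0) := by
    have h1 : Tendsto (fun y : ℝ => Real.log y / y) atTop (nhds 0) :=
      Real.isLittleO_log_id_atTop.tendsto_div_nhds_zero
    simpa using h1.const_mul ((|p - 1| + |Real.log A| + 1) / c)
  have hlin : Tendsto (fun y : ℝ => c * y / 2) atTop atTop :=
    (tendsto_id.const_mul_atTop hc).atTop_div_const (by norm_num)
  have hev : ∀ᶠ y : ℝ in atTop, (1 ≤ y ∧ 1 ≤ Real.log y ∧ 2 * M ≤ y ∧ -x₀ ≤ y) ∧
      (|p - 1| + |Real.log A| + 1) / c * (Real.log y / y) ≤ 1 / 2 ∧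
      2 / c ≤ c * y / 2 ∧ 1 ≤ c * y / 2 := by
    filter_upwards [eventually_ge_atTop 1, Real.tendsto_log_atTop.eventually_ge_atTop 1,
      eventually_ge_atTop (2 * M), eventually_ge_atTop (-x₀),
      hlim.eventually_le_const (by norm_num : (0 : ℝ) < 1 / 2),
      hlin.eventually_ge_atTop (2 / c), hlin.eventually_ge_atTop 1]
      with y h1 h2 h3 h4 h5 h6 h7
    exact ⟨⟨h1, h2, h3, h4⟩, h5, h6, h7⟩
  obtain ⟨Y, hY⟩ := eventually_atTop.mp hev
  have hFpos : 0 < F (-Y) :=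
    lt_of_le_of_lt (hrange (-Y - 1)).1 (hmono (by linarith))
  refine ⟨4 * (2 * ((|p - 1| + |Real.log A| + 1) / c) * |p - 1| + 2 * M), by positivity,
    min (F (-Y)) (1 / 2), ⟨lt_min hFpos (by norm_num),
      lt_of_le_of_lt (min_le_right _ _) (by norm_num)⟩, ?_⟩
  intro u hu huu x hx
  have hxY : x ≤ -Y := hmono.le_iff_le.mp (by rw [hx]; exact huu.trans (min_le_left _ _))
  obtain ⟨⟨h1, h2, h3, h4⟩, h5, h6, h7⟩ := hY (-x) (by linarith)
  have ht := hT x (by linarith)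
  rw [abs_of_neg (by linarith : x < 0), hx] at ht
  have := aux_key (q := p - 1) hA hc hM hu h1 h2 h3 h5 h6 h7 ht
  rwa [neg_neg] at this
end

section
/- Let G : ℝ → ℝ and h : (0, 1) → ℝ, and suppose: (i) there exist C₃ > 0, γ₀ > 0, q ∈ ℝ such that G(y) = C₃·|y|^q·e^{−γ₀|y|}·(1 + o(1)) as y → −∞; (ii) there exist c > 0, k ∈ ℝ, m ∈ ℝ such that h(u) = (log u)/c − (k/c)·log|log u| + m + O(log|log u|/|log u|) as u → 0⁺ (so h(u) → −∞). Then lim_{u→0⁺} G(h(u)) / (u^{γ₀/c}·|log u|^{q − kγ₀/c}) = C₃·e^{γ₀·m}·c^{−q}. -/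
open MeasureTheory Real Set Filter

/-- Composition step: substituting an expansion
h(u) = (log u)/c − (k/c)log|log u| + m + O(log|log u|/|log u|)  (u → 0⁺)
into a lower-tail asymptotic G(y) = C₃|y|^q e^{−γ₀|y|}(1 + o(1)) (y → −∞) gives
G(h(u)) / (u^{γ₀/c}·|log u|^{q − kγ₀/c}) → C₃·e^{γ₀m}·c^{−q} as u → 0⁺. -/
theorem stmt_16 (G : ℝ → ℝ) (h : ℝ → ℝ)
    (C₃ γ₀ q : ℝ) (hC₃ : 0 < C₃) (hγ₀ : 0 < γ₀)
    (hG : Tendsto (fun y => G y / (C₃ * |y| ^ q * Real.exp (-γ₀ * |y|))) atBot (nhds 1))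
    (c k m : ℝ) (hc : 0 < c)
    (hh : ∃ M > (0 : ℝ), ∃ u₀ ∈ Ioo (0 : ℝ) 1, ∀ u, 0 < u → u ≤ u₀ →
      |h u - (Real.log u / c - k / c * Real.log |Real.log u| + m)|
        ≤ M * Real.log |Real.log u| / |Real.log u|) :
    Tendsto
      (fun u => G (h u) / (u ^ (γ₀ / c) * |Real.log u| ^ (q - k * γ₀ / c)))
      (nhdsWithin 0 (Ioi 0)) (nhds (C₃ * Real.exp (γ₀ * m) * c ^ (-q))) := by
  obtain ⟨M, hM, u₀, hu₀, hh⟩ := hh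
  have hL : Tendsto (fun u : ℝ => -Real.log u) (nhdsWithin 0 (Ioi 0)) atTop :=
    tendsto_neg_atBot_atTop.comp Real.tendsto_log_nhdsGT_zero
  have hlogdiv : Tendsto (fun x : ℝ => Real.log x / x) atTop (nhds 0) :=
    Real.isLittleO_log_id_atTop.tendsto_div_nhds_zero
  have hLL : Tendsto (fun u : ℝ => Real.log (-Real.log u) / (-Real.log u))
      (nhdsWithin 0 (Ioi 0)) (nhds 0) := hlogdiv.comp hL
  have hinv : Tendsto (fun u : ℝ => (-Real.log u)⁻¹) (nhdsWithin 0 (Ioi 0)) (nhds 0) :=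
    tendsto_inv_atTop_zero.comp hL
  have hLpos : ∀ᶠ u : ℝ in nhdsWithin 0 (Ioi 0), 0 < -Real.log u := hL.eventually_gt_atTop 0
  have hupos : ∀ᶠ u : ℝ in nhdsWithin 0 (Ioi 0), 0 < u := self_mem_nhdsWithin
  have hule : ∀ᶠ u : ℝ in nhdsWithin 0 (Ioi 0), u ≤ u₀ :=
    nhdsWithin_le_nhds (Iic_mem_nhds hu₀.1)
  obtain ⟨r, hr⟩ : ∃ r : ℝ → ℝ, ∀ u, r u =
      h u - (Real.log u / c - k / c * Real.log (-Real.log u) + m) := ⟨_, fun _ => rfl⟩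
  have hr0 : Tendsto r (nhdsWithin 0 (Ioi 0)) (nhds 0) := by
    have h1 : Tendsto (fun u : ℝ => M * (Real.log (-Real.log u) / (-Real.log u)))
      (nhdsWithin 0 (Ioi 0)) (nhds 0) := by simpa using hLL.const_mul M
    refine squeeze_zero_norm' ?_ h1
    filter_upwards [hLpos, hupos, hule] with u h1 h2 h3
    have := hh u h2 h3
    rw [abs_of_neg (a := Real.log u) (by linarith)] at this
    rw [hr, Real.norm_eq_abs, ← mul_div_assoc]
    exact this
  have hhL : Tendsto (fun u => -h u / (-Real.log u)) (nhdsWithin 0 (Ioi 0)) (nhds (1 / c)) := by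
    have h1 := ((tendsto_const_nhds (x := 1 / c)).add (hLL.const_mul (k / c))).sub
      (((tendsto_const_nhds (x := m)).add hr0).mul hinv)
    have h2 : 1 / c + k / c * 0 - (m + 0) * 0 = 1 / c := by ring
    rw [h2] at h1
    refine h1.congr' ?_
    filter_upwards [hLpos] with u h1
    have h3 : Real.log u ≠ 0 := by linarith
    have h4 : h u = r u + (Real.log u / c - k / c * Real.log (-Real.log u) + m) := by
      rw [hr]; ring
    rw [h4]
    generalize Real.log (-Real.log u) = z
    field_simp
    ring
  have hcpos : 0 < 1 / c := by positivity
  have hneg : Tendsto (fun u => -h u) (nhdsWithin 0 (Ioi 0)) atTop := by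
    refine (hhL.pos_mul_atTop hcpos hL).congr' ?_
    filter_upwards [hLpos] with u h1
    exact div_mul_cancel₀ _ h1.ne'
  have hbot : Tendsto h (nhdsWithin 0 (Ioi 0)) atBot := tendsto_neg_atTop_iff.mp hneg
  have hA := hG.comp hbot
  have hq : Tendsto (fun u => (-h u / (-Real.log u)) ^ q) (nhdsWithin 0 (Ioi 0))
      (nhds ((1 / c) ^ q)) := hhL.rpow_const (Or.inl hcpos.ne')
  have he : Tendsto (fun u => Real.exp (γ₀ * (m + r u))) (nhdsWithin 0 (Ioi 0))
      (nhds (Real.exp (γ₀ * (m + 0)))) :=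
    (Real.continuous_exp.tendsto _).comp ((hr0.const_add m).const_mul γ₀)
  have hfin := hA.mul ((he.const_mul C₃).mul hq)
  have hval : 1 * (C₃ * Real.exp (γ₀ * (m + 0)) * (1 / c) ^ q)
      = C₃ * Real.exp (γ₀ * m) * c ^ (-q) := by
    rw [one_div, Real.inv_rpow hc.le, Real.rpow_neg hc.le, add_zero, one_mul]
  rw [hval] at hfin
  refine hfin.congr' ?_
  filter_upwards [hLpos, hupos, hneg.eventually_gt_atTop 0] with u h1 h2 h3
  have h4 : -h u = (-Real.log u) / c + k / c * Real.log (-Real.log u) - (m + r u) := by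
    rw [hr]; ring
  simp only [Function.comp]
  rw [abs_of_neg (a := Real.log u) (by linarith), abs_of_neg (a := h u) (by linarith)]
  have hE : Real.exp (-γ₀ * -h u) * (-Real.log u) ^ q
      = u ^ (γ₀ / c) * (-Real.log u) ^ (q - k * γ₀ / c) * Real.exp (γ₀ * (m + r u)) := by
    rw [Real.rpow_def_of_pos h2, Real.rpow_def_of_pos h1, Real.rpow_def_of_pos h1,
      ← Real.exp_add, ← Real.exp_add, ← Real.exp_add, h4]
    congr 1
    field_simp
    ring
  rw [Real.div_rpow h3.le h1.le]
  have p1 : 0 < (-h u) ^ q := Real.rpow_pos_of_pos h3 _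
  have p2 : 0 < (-Real.log u) ^ q := Real.rpow_pos_of_pos h1 _
  have p3 : 0 < u ^ (γ₀ / c) := Real.rpow_pos_of_pos h2 _
  have p4 : 0 < (-Real.log u) ^ (q - k * γ₀ / c) := Real.rpow_pos_of_pos h1 _
  have p5 := Real.exp_pos (-γ₀ * -h u)
  generalize Real.exp (-γ₀ * -h u) = a1 at *
  generalize (-h u) ^ q = a2 at *
  generalize (-Real.log u) ^ q = a3 at *
  generalize u ^ (γ₀ / c) = a4 at *
  generalize (-Real.log u) ^ (q - k * γ₀ / c) = a5 at *
  generalize Real.exp (γ₀ * (m + r u)) = a6 at *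
  rw [div_mul_eq_mul_div, div_eq_div_iff (by positivity) (by positivity)]
  field_simp
  linear_combination (-G (h u)) * hE
end

section
/- Let p > 0, b > 0, θ ∈ ℝ, ρ ∈ (−1, 1). Let W have the Gamma distribution of shape p and rate b²/2, independent of (Z₁, Z₂) having the bivariate standard normal density with correlation ρ, and set X_i = θW + √W·Z_i, i = 1, 2, with common marginal distribution function F. Set α = √((1−ρ)/(1+ρ)), β = √(θ²(1+α²)+b²), γ = β + θ√(1+α²), δ = θ + √(θ²+b²), τ = √(1+α²)·γ/δ, K̄ = 2^{p−1}b^{−2p}Γ(p), A = [2K̄·(θ²+b²)^{p/2}·δ]^{−1}, C₁ = (1+α²)^{(2p−3)/4}/(√(2π)·K̄·β^{p−1/2}·α·γ²·δ^{p−3/2}), and C₂ = A^{−τ}·δ^{(p−1)τ}. Then lim_{u→0⁺} P(X₁ ≤ F^{−1}(u), X₂ ≤ F^{−1}(u)) / (u^τ·|log u|^{(p−3/2)−(p−1)τ}) = C₁·C₂. Equivalently, the copula diagonal satisfies C(u,u) = u^τ·L(u) where L(u) ∼ C₁C₂·|log u|^{(p−1)(1−τ)−1/2} as u → 0⁺.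 -/
open MeasureTheory Real Set Filter


lemma pe (s c ε : ℝ) (hc : 0 < c) (hε : 0 < ε) :
    ∃ C, 0 < C ∧ ∀ x, ε ≤ x → x ^ s * exp (-c * x) ≤ C := by
  have h := tendsto_rpow_mul_exp_neg_mul_atTop_nhds_zero s c hc
  obtain ⟨X, hX⟩ := eventually_atTop.1 (h.eventually (gt_mem_nhds (zero_lt_one)))
  have hcont : ContinuousOn (fun x : ℝ => x ^ s * exp (-c * x)) (Icc ε X) := by
    apply ContinuousOn.mul
    · intro x hx
      exact (continuousAt_rpow_const x s (Or.inl (by linarith [hx.1]))).continuousWithinAt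
    · fun_prop
  obtain ⟨C, hC⟩ := (isCompact_Icc.image_of_continuousOn hcont).bddAbove
  refine ⟨max C 1, by positivity, fun x hx => ?_⟩
  rcases le_total x X with h1 | h1
  · exact le_max_of_le_left (hC ⟨x, ⟨hx, h1⟩, rfl⟩)
  · exact le_max_of_le_right (hX x h1).le

lemma tail_const (k D : ℝ) (n : ℕ) (T : ℝ → ℝ) (T0 : ∀ s, 0 ≤ T s) (T1 : ∀ s, T s ≤ 1)
    (hT : Tendsto (fun s => T s * s ^ n * exp (k ^ 2 * s ^ 2 / 2)) atTop (nhds D)) :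
    ∃ C, 1 ≤ C ∧ ∀ s, 0 ≤ s → T s * exp (k ^ 2 * s ^ 2 / 2) ≤ C ∧
      T s * s ^ n * exp (k ^ 2 * s ^ 2 / 2) ≤ C := by
  obtain ⟨X, hX⟩ := eventually_atTop.1 (hT.eventually (gt_mem_nhds (lt_add_one D)))
  set Y := max X 1 with hY
  have hY1 : 1 ≤ Y := le_max_right _ _
  refine ⟨max (D + 1) (Y ^ n * exp (k ^ 2 * Y ^ 2 / 2)), ?_, fun s hs => ?_⟩
  · apply le_max_of_le_right
    have h1 : 1 ≤ Y ^ n := one_le_pow₀ hY1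
    have h2 : 1 ≤ exp (k ^ 2 * Y ^ 2 / 2) := one_le_exp (by positivity)
    nlinarith
  · rcases le_total Y s with h | h
    · have h3 := (hX s (le_trans (le_max_left _ _) h)).le
      refine ⟨le_max_of_le_left (le_trans ?_ h3), le_max_of_le_left h3⟩
      have h1 : 1 ≤ s ^ n := one_le_pow₀ (hY1.trans h)
      have : T s ≤ T s * s ^ n := le_mul_of_one_le_right (T0 s) h1
      gcongr
    · have h1 : exp (k ^ 2 * s ^ 2 / 2) ≤ exp (k ^ 2 * Y ^ 2 / 2) := by gcongr
      have h2 : s ^ n ≤ Y ^ n := by gcongr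
      have h4 : 1 ≤ Y ^ n := one_le_pow₀ hY1
      constructor
      · apply le_max_of_le_right
        have : T s ≤ Y ^ n := (T1 s).trans h4
        gcongr
      · apply le_max_of_le_right
        have : T s * s ^ n ≤ 1 * Y ^ n := by gcongr; exact T1 s
        rw [one_mul] at this
        gcongr

lemma chernoff (k C : ℝ) (hC : 1 ≤ C) (T : ℝ → ℝ) (T1 : ∀ s, T s ≤ 1)
    (h : ∀ s, 0 ≤ s → T s * exp (k ^ 2 * s ^ 2 / 2) ≤ C) (l s : ℝ) (hl : 0 ≤ l) :
    T s ≤ C * exp (- (k ^ 2 * (l * s - l ^ 2 / 2))) := by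
  rcases le_total 0 s with hs | hs
  · have h1 := h s hs
    rw [← le_div_iff₀ (exp_pos _), div_eq_mul_inv, ← Real.exp_neg] at h1
    refine h1.trans ?_
    gcongr
    nlinarith [mul_nonneg (sq_nonneg k) (sq_nonneg (l - s))]
  · have : 1 ≤ exp (- (k ^ 2 * (l * s - l ^ 2 / 2))) := by
      apply one_le_exp
      nlinarith [mul_nonneg (sq_nonneg k) (mul_nonneg hl (neg_nonneg.2 hs)), mul_nonneg (sq_nonneg k) (sq_nonneg l)]
    nlinarith [T1 s]


lemma id_main (b θ k β r v : ℝ) (hk : 0 < k) (hβ : 0 < β) (hr : 0 < r) (hv : 0 < v)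
    (hβ2 : β ^ 2 = θ ^ 2 * k ^ 2 + b ^ 2) :
    k * (β + θ * k) * r ^ 2 - b ^ 2 / 2 * (k / β * r ^ 2 * v) +
      -(k ^ 2 * ((r ^ 2 + θ * (k / β * r ^ 2 * v)) ^ 2 / (k / β * r ^ 2 * v)) / 2) =
      -(k * β / 2) * ((r * (v - 1)) ^ 2 / v) := by
  have hb2 : b ^ 2 = β ^ 2 - θ ^ 2 * k ^ 2 := by linarith
  rw [hb2]
  have h1 : (r ^ 2 + θ * (k / β * r ^ 2 * v)) ^ 2 / (k / β * r ^ 2 * v) =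
    r ^ 2 * β / (k * v) + 2 * θ * r ^ 2 + θ ^ 2 * k / β * r ^ 2 * v := by
    field_simp; ring
  rw [h1]
  field_simp
  ring

lemma id_tail (b θ k β r v ε : ℝ) (hk : 0 < k) (hβ : 0 < β)
    (hβ2 : β ^ 2 = θ ^ 2 * k ^ 2 + b ^ 2) :
    k * (β + θ * k) * r ^ 2 - b ^ 2 / 2 * (k / β * r ^ 2 * v) +
      -(k ^ 2 * (((β + θ * k) / k - ε) * (r ^ 2 + θ * (k / β * r ^ 2 * v)) -
        ((β + θ * k) / k - ε) ^ 2 * (k / β * r ^ 2 * v) / 2)) =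
      - (ε * k ^ 2 * r ^ 2 * (v * (1 - k / β * ε / 2) - 1)) := by
  have hb2 : b ^ 2 = β ^ 2 - θ ^ 2 * k ^ 2 := by linarith
  have h1 : (β + θ * k) / k = β / k + θ := by field_simp
  rw [hb2, h1]
  field_simp
  ring

lemma hP_lem (p a v1 r t v C1 E : ℝ) (ha0 : 0 < a) (hv10 : 0 < v1) (hr : 1 ≤ r) (hr0 : 0 < r)
    (hv0 : 0 < v) (htv : t = r * (v - 1)) (hvv : v ≤ v1) (hC1 : 0 < C1)
    (hC1' : ∀ x, 1 / v1 ≤ x → x ^ (1 - p) * exp (-(a / 8) * x) ≤ C1) (hE : E = exp (2 * (a / 8)))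
    (hE1 : 1 ≤ E) :
    v ^ (p - 1) * exp (-a * (t ^ 2 / v)) ≤ C1 * E * exp (-(a / (2 * v1)) * t ^ 2) := by
  have e1 := hC1' (1 / v) (by gcongr)
  have e0 : (1 / v) ^ (1 - p) = v ^ (p - 1) := by
    rw [one_div, inv_rpow hv0.le, ← rpow_neg hv0.le]; ring_nf
  rw [e0] at e1
  have e2 : v ^ (p - 1) * exp (-(a / 2) * (t ^ 2 / v)) ≤ C1 * E := by
    rcases lt_or_ge v (1 / 2) with h | h
    · have ht : 1 / 4 ≤ t ^ 2 := by
        have : t ≤ - (1 / 2) := by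
          rw [htv]; nlinarith [mul_nonneg hr0.le (sub_nonneg.2 h.le)]
        nlinarith [this]
      calc v ^ (p - 1) * exp (-(a / 2) * (t ^ 2 / v))
          ≤ v ^ (p - 1) * exp (-(a / 8) * (1 / v)) := by
            refine mul_le_mul_of_nonneg_left (exp_le_exp.2 ?_) (by positivity)
            have h7 : 1 / 4 * (1 / v) ≤ t ^ 2 / v := by
              rw [div_eq_mul_one_div (t ^ 2)]
              exact mul_le_mul_of_nonneg_right ht (by positivity)
            have h8 := mul_le_mul_of_nonneg_left h7 (show 0 ≤ a / 2 by positivity)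
            linarith
        _ ≤ C1 := e1
        _ ≤ C1 * E := le_mul_of_one_le_right hC1.le hE1
    · have e3 : exp (-(a / 2) * (t ^ 2 / v)) ≤ 1 := by
        rw [exp_le_one_iff]
        have : 0 ≤ t ^ 2 / v := by positivity
        nlinarith
      have e4 : exp (-(a / 8) * (1 / v)) * E ≥ 1 := by
        rw [hE, ← Real.exp_add]
        apply one_le_exp
        have : 1 / v ≤ 2 := by rw [div_le_iff₀ hv0]; linarith
        nlinarith
      calc v ^ (p - 1) * exp (-(a / 2) * (t ^ 2 / v)) ≤ v ^ (p - 1) * 1 := by gcongr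
        _ ≤ v ^ (p - 1) * (exp (-(a / 8) * (1 / v)) * E) := by gcongr
        _ = (v ^ (p - 1) * exp (-(a / 8) * (1 / v))) * E := by ring
        _ ≤ _ := by gcongr
  have e5 : exp (-(a / 2) * (t ^ 2 / v)) ≤ exp (-(a / (2 * v1)) * t ^ 2) := by
    refine exp_le_exp.2 ?_
    have : t ^ 2 / v1 ≤ t ^ 2 / v := by gcongr
    have e6 : a / (2 * v1) * t ^ 2 = a / 2 * (t ^ 2 / v1) := by field_simp
    rw [neg_mul, neg_mul, e6]
    have := mul_le_mul_of_nonneg_left this (show 0 ≤ a / 2 by positivity)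
    linarith
  calc v ^ (p - 1) * exp (-a * (t ^ 2 / v))
      = (v ^ (p - 1) * exp (-(a / 2) * (t ^ 2 / v))) * exp (-(a / 2) * (t ^ 2 / v)) := by
        rw [mul_assoc, ← Real.exp_add]; ring_nf
    _ ≤ _ := by gcongr


set_option maxHeartbeats 1000000 in
lemma Hbound (p b θ k β γ C : ℝ) (n : ℕ) (hb : 0 < b) (hk : 0 < k) (hC : 1 ≤ C)
    (hβ : 0 < β) (hβ2 : β ^ 2 = θ ^ 2 * k ^ 2 + b ^ 2) (hγ : γ = β + θ * k) (hγ0 : 0 < γ)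
    (hγ2 : γ ≤ 2 * β)
    (T : ℝ → ℝ) (T0 : ∀ s, 0 ≤ T s) (T1 : ∀ s, T s ≤ 1)
    (hT : ∀ s, 0 ≤ s → T s * exp (k ^ 2 * s ^ 2 / 2) ≤ C ∧
      T s * s ^ n * exp (k ^ 2 * s ^ 2 / 2) ≤ C) :
    ∃ B : ℝ → ℝ, Integrable B ∧ (∀ t, 0 ≤ B t) ∧ ∀ r t v w : ℝ, 1 ≤ r → 0 < r + t →
      v = (r + t) / r → w = k / β * r * (r + t) →
      v ^ (p - 1) * exp (k * γ * r ^ 2 - b ^ 2 / 2 * w) * r ^ n * T ((r ^ 2 + θ * w) / √w) ≤ B t := by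
  set q := k / β with hq
  have hq0 : 0 < q := by positivity
  have hkq : k = q * β := by rw [hq]; field_simp
  obtain ⟨η, hη, hη1⟩ : ∃ η, 0 < η ∧ |θ| * q * η ≤ γ / (2 * β) := by
    refine ⟨γ / (2 * β) / (|θ| * q + 1), by positivity, ?_⟩
    rw [mul_div_assoc', div_le_iff₀ (by positivity)]
    nlinarith [abs_nonneg θ, show 0 < γ / (2 * β) by positivity]
  set v1 := 1 + η with hv1
  have hv10 : 0 < v1 := by positivity
  set κ0 := η / v1 with hκ0
  have hκ : 0 < κ0 := by positivity
  set ε := min (γ / k) (κ0 / q) with hε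
  have hε0 : 0 < ε := by positivity
  have hε1 : ε ≤ γ / k := min_le_left _ _
  have hε2 : q * ε ≤ κ0 := by
    have : ε ≤ κ0 / q := min_le_right _ _
    rw [le_div_iff₀ hq0] at this; linarith
  set c := ε * k ^ 2 * (κ0 / 2) with hc
  have hc0 : 0 < c := by positivity
  set a := k * β / 2 with ha
  have ha0 : 0 < a := by positivity
  obtain ⟨C1, hC1, hC1'⟩ := pe (1 - p) (a / 8) (1 / v1) (by positivity) (by positivity)
  obtain ⟨C2, hC2, hC2'⟩ := pe (p - 1) (c / 3) 1 (by positivity) (by positivity)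
  obtain ⟨C3, hC3, hC3'⟩ := pe n (c / 3) 1 (by positivity) (by positivity)
  set M := C * (√(q * v1) * (2 * β / γ)) ^ n with hM
  have hM0 : 0 ≤ M := by positivity
  set E := exp (2 * (a / 8)) with hE
  have hE1 : 1 ≤ E := one_le_exp (by positivity)
  refine ⟨fun t => M * C1 * E * exp (-(a / (2 * v1)) * t ^ 2) +
    (Ioi 0).indicator (fun t => C * C2 * C3 * exp (-(c / 3) * t)) t, ?_, ?_, ?_⟩
  · apply Integrable.add
    · exact (integrable_exp_neg_mul_sq (by positivity)).const_mul _
    · rw [integrable_indicator_iff measurableSet_Ioi]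
      exact (integrableOn_exp_mul_Ioi (by linarith) 0).const_mul _
  · intro t
    have : 0 ≤ (Ioi (0:ℝ)).indicator (fun t => C * C2 * C3 * exp (-(c / 3) * t)) t :=
      indicator_nonneg (fun x _ => by positivity) t
    positivity
  intro r t v w hr hrt hv hw
  have hr0 : 0 < r := by linarith
  have hv0 : 0 < v := by rw [hv]; positivity
  have hw0 : 0 < w := by rw [hw]; positivity
  have htv : t = r * (v - 1) := by rw [hv]; field_simp; ring
  have hwv : w = q * r ^ 2 * v := by rw [hw, hv]; field_simp
  have hsw : 0 < √w := sqrt_pos.2 hw0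
  have hsw2 : √w ^ 2 = w := sq_sqrt hw0.le
  set s := (r ^ 2 + θ * w) / √w with hs
  rcases le_or_gt v v1 with hvv | hvv
  · -- main region
    apply le_add_of_le_of_nonneg _ (indicator_nonneg (fun x _ => by positivity) t)
    have hlow : γ / (2 * β) ≤ 1 + θ * q * v := by
      rcases le_total 0 θ with h | h
      · have : γ / (2 * β) ≤ 1 := by rw [div_le_one (by positivity)]; exact hγ2
        have : 0 ≤ θ * q * v := by positivity
        linarith
      · have h1 : 1 + θ * q = 2 * (γ / (2 * β)) := by rw [hγ, hq]; field_simp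
        rw [abs_of_nonpos h] at hη1
        have : θ * q * v1 ≤ θ * q * v := by
          have : θ * q ≤ 0 := mul_nonpos_of_nonpos_of_nonneg h hq0.le
          exact mul_le_mul_of_nonpos_left hvv this
        rw [hv1] at this
        linarith
    have hnum : r ^ 2 + θ * w = r ^ 2 * (1 + θ * q * v) := by rw [hwv]; ring
    have hnp : 0 < 1 + θ * q * v := lt_of_lt_of_le (by positivity) hlow
    have hs0 : 0 < s := by rw [hs, hnum]; positivity
    have hsqw : √w = r * √(q * v) := by
      rw [hwv, show q * r ^ 2 * v = r ^ 2 * (q * v) by ring, sqrt_mul (by positivity), sqrt_sq hr0.le]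
    have hrs : r ≤ s * (√(q * v1) * (2 * β / γ)) := by
      have h1 : s = r * (1 + θ * q * v) / √(q * v) := by
        rw [hs, hnum, hsqw]; field_simp
      have h2 : √(q * v) ≤ √(q * v1) := by gcongr
      have h3 : 0 < √(q * v) := by positivity
      have h4 : r * (γ / (2 * β)) / √(q * v) ≤ s := by rw [h1]; gcongr
      calc r = r * (γ / (2 * β)) / √(q * v) * (√(q * v) * (2 * β / γ)) := by field_simp
        _ ≤ _ := by gcongr
    have hrn : r ^ n ≤ s ^ n * (√(q * v1) * (2 * β / γ)) ^ n := by
      rw [← mul_pow]; gcongr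
    have hTs := (hT s hs0.le).2
    rw [← le_div_iff₀ (exp_pos _), div_eq_mul_inv, ← Real.exp_neg] at hTs
    have hexp : k * γ * r ^ 2 - b ^ 2 / 2 * w + -(k ^ 2 * s ^ 2 / 2) = - a * (t ^ 2 / v) := by
      have : s ^ 2 = (r ^ 2 + θ * w) ^ 2 / w := by rw [hs, div_pow, hsw2]
      rw [this, htv, hwv, ha, hγ]
      exact id_main b θ k β r v hk hβ hr0 hv0 hβ2
    have hP := hP_lem p a v1 r t v C1 E ha0 hv10 hr hr0 hv0 htv hvv hC1 hC1' hE hE1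
    calc v ^ (p - 1) * exp (k * γ * r ^ 2 - b ^ 2 / 2 * w) * r ^ n * T s
        ≤ v ^ (p - 1) * exp (k * γ * r ^ 2 - b ^ 2 / 2 * w) *
          (s ^ n * (√(q * v1) * (2 * β / γ)) ^ n) * T s := by
          have := T0 s
          gcongr
      _ = v ^ (p - 1) * exp (k * γ * r ^ 2 - b ^ 2 / 2 * w) *
          (√(q * v1) * (2 * β / γ)) ^ n * (T s * s ^ n) := by ring
      _ ≤ v ^ (p - 1) * exp (k * γ * r ^ 2 - b ^ 2 / 2 * w) *
          (√(q * v1) * (2 * β / γ)) ^ n * (C * exp (-(k ^ 2 * s ^ 2 / 2))) := by gcongr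
      _ = M * (v ^ (p - 1) * (exp (k * γ * r ^ 2 - b ^ 2 / 2 * w) * exp (-(k ^ 2 * s ^ 2 / 2)))) := by
          rw [hM]; ring
      _ = M * (v ^ (p - 1) * exp (-a * (t ^ 2 / v))) := by rw [← Real.exp_add, hexp]
      _ ≤ M * (C1 * E * exp (-(a / (2 * v1)) * t ^ 2)) := by gcongr
      _ = _ := by ring
  · -- tail region
    have hv1' : 1 < v := by linarith
    have ht0 : 0 < t := by rw [htv]; exact mul_pos hr0 (by linarith)
    apply le_add_of_nonneg_of_le (by positivity)
    rw [indicator_of_mem (by exact ht0)]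
    have hμ : 0 ≤ γ / k - ε := by linarith
    have hch := chernoff k C hC T T1 (fun s hs => (hT s hs).1) ((γ / k - ε) * √w) s (by positivity)
    have hls : (γ / k - ε) * √w * s = (γ / k - ε) * (r ^ 2 + θ * w) := by
      rw [hs]; field_simp
    rw [hls, mul_pow, hsw2] at hch
    set x := r ^ 2 * v with hx
    have hr2 : 1 ≤ r ^ 2 := one_le_pow₀ hr
    have hvx : v ≤ x := le_mul_of_one_le_left hv0.le hr2
    have hrr : r ≤ r ^ 2 := le_self_pow₀ hr (by norm_num)
    have hrx : r ≤ x := hrr.trans (le_mul_of_one_le_right (by positivity) hv1'.le)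
    have htx : t ≤ x := by
      have := mul_le_mul_of_nonneg_right hrr hv0.le
      rw [hx, htv]; linarith
    have hx1 : 1 ≤ x := by linarith
    have hexp : k * γ * r ^ 2 - b ^ 2 / 2 * w + -(k ^ 2 * ((γ / k - ε) * (r ^ 2 + θ * w) -
        (γ / k - ε) ^ 2 * w / 2)) ≤ - c * x := by
      have h1 : k * γ * r ^ 2 - b ^ 2 / 2 * w + -(k ^ 2 * ((γ / k - ε) * (r ^ 2 + θ * w) -
        (γ / k - ε) ^ 2 * w / 2)) = - (ε * k ^ 2 * r ^ 2 * (v * (1 - q * ε / 2) - 1)) := by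
        rw [hwv, hγ]
        exact id_tail b θ k β r v ε hk hβ hβ2
      rw [h1, hc, hx]
      have h4 : 1 ≤ v * (1 - κ0) := by
        have : 1 - κ0 = 1 / v1 := by rw [hκ0]; field_simp; rw [hv1]; ring
        rw [this, mul_one_div, le_div_iff₀ hv10]; linarith
      have h3 : κ0 / 2 * v ≤ v * (1 - q * ε / 2) - 1 := by
        have h6 := mul_le_mul_of_nonneg_right hε2 hv0.le
        linarith
      have h5 : 0 ≤ ε * k ^ 2 * r ^ 2 := by positivity
      have h6 := mul_le_mul_of_nonneg_left h3 h5
      linarith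
    have hA : v ^ (p - 1) * exp (-(c / 3) * x) ≤ C2 :=
      le_trans (mul_le_mul_of_nonneg_left (exp_le_exp.2 (by
        have := mul_le_mul_of_nonneg_left hvx (show 0 ≤ c / 3 by positivity)
        linarith)) (by positivity)) (hC2' v hv1'.le)
    have hB : r ^ n * exp (-(c / 3) * x) ≤ C3 := by
      refine le_trans ?_ (hC3' x hx1)
      rw [rpow_natCast]; gcongr
    calc v ^ (p - 1) * exp (k * γ * r ^ 2 - b ^ 2 / 2 * w) * r ^ n * T s
        ≤ v ^ (p - 1) * exp (k * γ * r ^ 2 - b ^ 2 / 2 * w) * r ^ n * (C * exp (-(k ^ 2 * ((γ / k - ε) * (r ^ 2 + θ * w) -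
        (γ / k - ε) ^ 2 * w / 2)))) := mul_le_mul_of_nonneg_left hch (by positivity)
      _ = C * v ^ (p - 1) * r ^ n * exp (k * γ * r ^ 2 - b ^ 2 / 2 * w + -(k ^ 2 * ((γ / k - ε) * (r ^ 2 + θ * w) -
        (γ / k - ε) ^ 2 * w / 2))) := by rw [Real.exp_add]; ring
      _ ≤ C * v ^ (p - 1) * r ^ n * exp (-c * x) :=
        mul_le_mul_of_nonneg_left (exp_le_exp.2 hexp) (by positivity)
      _ = C * (v ^ (p - 1) * exp (-(c / 3) * x)) * (r ^ n * exp (-(c / 3) * x)) * exp (-(c / 3) * x) := by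
        have : exp (-c * x) = exp (-(c / 3) * x) * exp (-(c / 3) * x) * exp (-(c / 3) * x) := by
          rw [← Real.exp_add, ← Real.exp_add]; ring_nf
        rw [this]; ring
      _ ≤ C * C2 * C3 * exp (-(c / 3) * t) := by
        have h1 : exp (-(c / 3) * x) ≤ exp (-(c / 3) * t) := exp_le_exp.2 (by
          have := mul_le_mul_of_nonneg_left htx (show 0 ≤ c / 3 by positivity)
          linarith)
        have h2 : C * (v ^ (p - 1) * exp (-(c / 3) * x)) ≤ C * C2 :=
          mul_le_mul_of_nonneg_left hA (by positivity)
        exact mul_le_mul (mul_le_mul h2 hB (by positivity) (by positivity)) h1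
          (by positivity) (by positivity)

lemma laplace (p b θ k β γ D : ℝ) (n : ℕ) (hb : 0 < b) (hk : 0 < k)
    (hβ : β = √(θ ^ 2 * k ^ 2 + b ^ 2)) (hγ : γ = β + θ * k)
    (T : ℝ → ℝ) (Tm : Measurable T) (T0 : ∀ s, 0 ≤ T s) (T1 : ∀ s, T s ≤ 1)
    (hT : Tendsto (fun s => T s * s ^ n * exp (k ^ 2 * s ^ 2 / 2)) atTop (nhds D)) :
    0 < β ∧ 0 < γ ∧ Tendsto (fun r : ℝ => (∫ w in Ioi (0:ℝ), w ^ (p - 1) * exp (-(b ^ 2 / 2) * w) *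
      T ((r ^ 2 + θ * w) / √w)) * exp (k * γ * r ^ 2) * r ^ n / r ^ (2 * p - 1)) atTop
      (nhds ((k / β) ^ p * (D * (√(k / β) * β / γ) ^ n) * √(2 * π / (k * β)))) := by
  have hβ0 : 0 < β := by rw [hβ]; positivity
  have hβ2 : β ^ 2 = θ ^ 2 * k ^ 2 + b ^ 2 := by rw [hβ]; exact sq_sqrt (by positivity)
  have habs : |θ * k| < β := by
    apply abs_lt_of_sq_lt_sq _ hβ0.le
    rw [hβ2, mul_pow]; nlinarith
  have hγ0 : 0 < γ := by rw [hγ]; linarith [(abs_lt.1 habs).1]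
  have hγ2 : γ ≤ 2 * β := by rw [hγ]; linarith [(abs_lt.1 habs).2]
  refine ⟨hβ0, hγ0, ?_⟩
  obtain ⟨C, hC, hCT⟩ := tail_const k D n T T0 T1 hT
  obtain ⟨B, hBi, hB0, hB⟩ := Hbound p b θ k β γ C n hb hk hC hβ0 hβ2 hγ hγ0 hγ2 T T0 T1 hCT
  have hq0 : 0 < k / β := by positivity
  set q := k / β with hq
  let H : ℝ → ℝ → ℝ := fun r t => if 0 < r + t then q ^ p * (((r + t) / r) ^ (p - 1) *
    exp (k * γ * r ^ 2 - b ^ 2 / 2 * (q * r * (r + t))) * r ^ n *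
      T ((r ^ 2 + θ * (q * r * (r + t))) / √(q * r * (r + t)))) else 0
  have hHint : ∀ r : ℝ, 0 < r → (∫ w in Ioi (0:ℝ), w ^ (p - 1) * exp (-(b ^ 2 / 2) * w) *
      T ((r ^ 2 + θ * w) / √w)) * exp (k * γ * r ^ 2) * r ^ n / r ^ (2 * p - 1) = ∫ t, H r t := by
    intro r hr
    rw [← integral_indicator measurableSet_Ioi]
    set G := (Ioi (0:ℝ)).indicator (fun w => w ^ (p - 1) * exp (-(b ^ 2 / 2) * w) *
      T ((r ^ 2 + θ * w) / √w)) with hG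
    have hqr : 0 < q * r := by positivity
    have h1 : ∫ w, G w = (q * r) * ∫ t, G (q * r * (r + t)) := by
      rw [integral_add_left_eq_self (fun x => G (q * r * x)) r, Measure.integral_comp_mul_left,
        abs_of_pos (by positivity), smul_eq_mul, mul_inv_cancel_left₀ hqr.ne']
    rw [h1, show ∀ I : ℝ, q * r * I * exp (k * γ * r ^ 2) * r ^ n / r ^ (2 * p - 1) =
      (q * r * exp (k * γ * r ^ 2) * r ^ n / r ^ (2 * p - 1)) * I from fun I => by ring,
      ← integral_const_mul]
    congr 1
    ext t
    by_cases ht : 0 < r + t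
    · have hw : 0 < q * r * (r + t) := by positivity
      have e1 : (q * r * (r + t)) ^ (p - 1) = q ^ (p - 1) * r ^ (2 * p - 2) * ((r + t) / r) ^ (p - 1) := by
        have : q * r * (r + t) = q * r ^ (2:ℝ) * ((r + t) / r) := by
          rw [rpow_two]; field_simp
        rw [this, mul_rpow (by positivity) (by positivity), mul_rpow (by positivity) (by positivity),
          ← rpow_mul hr.le]
        ring_nf
      have e2 : q ^ p = q ^ (p - 1) * q := by
        rw [← rpow_add_one hq0.ne']; ring_nf
      have e3 : r ^ (2 * p - 1) = r ^ (2 * p - 2) * r := by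
        rw [← rpow_add_one hr.ne']; ring_nf
      have e4 : exp (k * γ * r ^ 2 - b ^ 2 / 2 * (q * r * (r + t))) =
        exp (k * γ * r ^ 2) * exp (-(b ^ 2 / 2) * (q * r * (r + t))) := by
        rw [← Real.exp_add]; ring_nf
      have e5 : 0 < r ^ (2 * p - 2) := by positivity
      simp only [H, if_pos ht, hG]
      rw [indicator_of_mem (by exact hw), e1, e2, e3, e4]
      field_simp
    · have hw : ¬ (0 < q * r * (r + t)) := by
        rw [mul_pos_iff_of_pos_left hqr]; exact ht
      simp only [H, if_neg ht, hG]
      rw [indicator_of_notMem (by exact hw), mul_zero]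
  have hgauss : ∫ t : ℝ, q ^ p * (D * (√q * β / γ) ^ n) * exp (-(k * β / 2) * t ^ 2) =
      q ^ p * (D * (√q * β / γ) ^ n) * √(2 * π / (k * β)) := by
    rw [integral_const_mul, integral_gaussian]
    congr 2
    field_simp
  rw [← hgauss]
  refine Tendsto.congr' (f₁ := fun r => ∫ t, H r t) ?_ ?_
  · filter_upwards [eventually_gt_atTop 0] with r hr using (hHint r hr).symm
  apply tendsto_integral_filter_of_dominated_convergence (fun t => q ^ p * B t)
  · refine Eventually.of_forall fun r => Measurable.aestronglyMeasurable ?_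
    apply Measurable.ite
    · exact measurableSet_lt measurable_const (by fun_prop)
    · fun_prop
    · fun_prop
  · filter_upwards [eventually_ge_atTop 1] with r hr
    refine ae_of_all _ fun t => ?_
    by_cases ht : 0 < r + t
    · simp only [H, if_pos ht]
      have := T0 ((r ^ 2 + θ * (q * r * (r + t))) / √(q * r * (r + t)))
      have hr0 : 0 < r := by linarith
      rw [norm_of_nonneg (by positivity)]
      exact mul_le_mul_of_nonneg_left (hB r t _ _ hr ht rfl rfl) (by positivity)
    · simp only [H, if_neg ht, norm_zero]
      have := hB0 t
      positivity
  · exact hBi.const_mul _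
  · refine ae_of_all _ fun t => ?_
    have hv : Tendsto (fun r : ℝ => (r + t) / r) atTop (nhds 1) := by
      have : Tendsto (fun r : ℝ => 1 + t / r) atTop (nhds (1 + 0)) :=
        tendsto_const_nhds.add (tendsto_const_nhds.div_atTop tendsto_id)
      rw [add_zero] at this
      refine this.congr' ?_
      filter_upwards [eventually_gt_atTop 0] with r hr
      field_simp
    have hg1 : 1 + θ * q * 1 = γ / β := by rw [hγ, hq]; field_simp
    have hnum : Tendsto (fun r : ℝ => 1 + θ * q * ((r + t) / r)) atTop (nhds (γ / β)) := by
      rw [← hg1]; exact tendsto_const_nhds.add (hv.const_mul _)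
    have hden : Tendsto (fun r : ℝ => √(q * ((r + t) / r))) atTop (nhds (√q)) := by
      have := (hv.const_mul q).sqrt
      rwa [mul_one] at this
    have hsq : 0 < √q := sqrt_pos.2 hq0
    have hrat : Tendsto (fun r : ℝ => √(q * ((r + t) / r)) / (1 + θ * q * ((r + t) / r))) atTop
        (nhds (√q * β / γ)) := by
      have := hden.div hnum (by positivity)
      rwa [div_div_eq_mul_div] at this
    have hrat' : Tendsto (fun r : ℝ => (1 + θ * q * ((r + t) / r)) / √(q * ((r + t) / r))) atTop
        (nhds ((γ / β) / √q)) := hnum.div hden hsq.ne'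
    have hs : Tendsto (fun r : ℝ => r * ((1 + θ * q * ((r + t) / r)) / √(q * ((r + t) / r)))) atTop atTop :=
      tendsto_id.atTop_mul_pos (by positivity) hrat'
    have hTs := hT.comp hs
    have hE : Tendsto (fun r : ℝ => exp (-(k * β / 2) * (t ^ 2 / ((r + t) / r)))) atTop
        (nhds (exp (-(k * β / 2) * t ^ 2))) := by
      apply (Real.continuous_exp.tendsto _).comp
      have := (tendsto_const_nhds (x := t ^ 2)).div hv one_ne_zero
      rw [div_one] at this
      exact this.const_mul _
    have hvp : Tendsto (fun r : ℝ => ((r + t) / r) ^ (p - 1)) atTop (nhds 1) := by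
      have := hv.rpow_const (p := p - 1) (Or.inl one_ne_zero)
      rwa [one_rpow] at this
    have hall := ((hvp.const_mul (q ^ p)).mul (hTs.mul (hrat.pow n))).mul hE
    rw [mul_one] at hall
    refine hall.congr' ?_
    filter_upwards [eventually_gt_atTop 0, eventually_gt_atTop (-t), hnum.eventually (lt_mem_nhds
      (show 0 < γ / β by positivity))] with r hr hrt hpos
    have ht : 0 < r + t := by linarith
    simp only [H, if_pos ht, Function.comp]
    set v := (r + t) / r with hvdef
    have hv0 : 0 < v := by positivity
    have hwv : q * r * (r + t) = q * r ^ 2 * v := by rw [hvdef]; field_simp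
    have htv : t = r * (v - 1) := by rw [hvdef]; field_simp; ring
    have hsw : √(q * r ^ 2 * v) = r * √(q * v) := by
      rw [show q * r ^ 2 * v = r ^ 2 * (q * v) by ring, sqrt_mul (by positivity), sqrt_sq hr.le]
    have hs1 : (r ^ 2 + θ * (q * r ^ 2 * v)) / √(q * r ^ 2 * v) = r * ((1 + θ * q * v) / √(q * v)) := by
      have : 0 < √(q * v) := by positivity
      rw [hsw]; field_simp
    have hid := id_main b θ k β r v hk hβ0 hr hv0 hβ2
    rw [← hγ, ← hq, ← htv] at hid
    have hs2 : (r ^ 2 + θ * (q * r ^ 2 * v)) ^ 2 / (q * r ^ 2 * v) = (r * ((1 + θ * q * v) / √(q * v))) ^ 2 := by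
      rw [← hs1, div_pow, sq_sqrt (by positivity)]
    rw [hs2] at hid
    rw [hwv, hs1, ← hid, Real.exp_add]
    set s := r * ((1 + θ * q * v) / √(q * v)) with hsdef
    have hsr : r = s * (√(q * v) / (1 + θ * q * v)) := by
      have : 0 < √(q * v) := by positivity
      rw [hsdef]; field_simp
    have hrn : r ^ n = s ^ n * (√(q * v) / (1 + θ * q * v)) ^ n := by
      rw [← mul_pow, ← hsr]
    rw [hrn, Real.exp_neg]
    have := exp_pos (k ^ 2 * s ^ 2 / 2)
    field_simp

lemma tail_two (ρ k α : ℝ) (hρ : ρ ∈ Set.Ioo (-1 : ℝ) 1) (hk : k ^ 2 = 2 / (1 + ρ))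
    (hα : α = √((1 - ρ) / (1 + ρ))) (μ : Measure (ℝ × ℝ))
    (hμ : μ = volume.withDensity fun z : ℝ × ℝ => ENNReal.ofReal
        ((2 * Real.pi * Real.sqrt (1 - ρ ^ 2))⁻¹ *
          Real.exp (-(z.1 ^ 2 - 2 * ρ * z.1 * z.2 + z.2 ^ 2) / (2 * (1 - ρ ^ 2))))) :
    Tendsto (fun s : ℝ => (μ {z | max z.1 z.2 ≤ -s}).toReal * s ^ 2 * exp (k ^ 2 * s ^ 2 / 2)) atTop
      (nhds (1 / (π * α * k ^ 2))) := by
  obtain ⟨hρ1, hρ2⟩ := hρ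
  have h1 : 0 < 1 + ρ := by linarith
  have h2 : 0 < 1 - ρ := by linarith
  have h3 : 0 < 1 - ρ ^ 2 := by nlinarith
  set cc := (2 * Real.pi * Real.sqrt (1 - ρ ^ 2))⁻¹ with hcc
  have hcc0 : 0 < cc := by positivity
  let d : ℝ × ℝ → ℝ := fun z => cc *
          Real.exp (-(z.1 ^ 2 - 2 * ρ * z.1 * z.2 + z.2 ^ 2) / (2 * (1 - ρ ^ 2)))
  have hdm : Measurable d := by fun_prop
  let f : ℝ → ℝ := (Ici (0:ℝ)).indicator fun x => exp (-(1 / (1 + ρ)) * x)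
  have hfi : Integrable f := by
    rw [integrable_indicator_iff measurableSet_Ici, integrableOn_Ici_iff_integrableOn_Ioi]
    exact integrableOn_exp_mul_Ioi (by rw [neg_lt_zero]; positivity) 0
  have hfint : ∫ x, f x = 1 + ρ := by
    rw [integral_indicator measurableSet_Ici, integral_Ici_eq_integral_Ioi,
      integral_exp_mul_Ioi (by rw [neg_lt_zero]; positivity) 0]
    simp
  have hlim : ∫ x : ℝ × ℝ, cc * (f x.1 * f x.2) = 1 / (π * α * k ^ 2) := by
    rw [integral_const_mul, Measure.volume_eq_prod, integral_prod_mul, hfint, hk, hcc, hα]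
    have e1 : √(1 - ρ ^ 2) = (1 + ρ) * √((1 - ρ) / (1 + ρ)) := by
      rw [show 1 - ρ ^ 2 = (1 + ρ) ^ 2 * ((1 - ρ) / (1 + ρ)) by field_simp; ring,
        sqrt_mul (by positivity), sqrt_sq h1.le]
    rw [e1]
    have : 0 < √((1 - ρ) / (1 + ρ)) := by positivity
    field_simp
  rw [← hlim]
  let R : ℝ → ℝ × ℝ → ℝ := fun s x => cc * (f x.1 * f x.2) *
    exp (-((x.1 ^ 2 - 2 * ρ * x.1 * x.2 + x.2 ^ 2) / (2 * (1 - ρ ^ 2))) / s ^ 2)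
  have hQ : ∀ x : ℝ × ℝ, 0 ≤ (x.1 ^ 2 - 2 * ρ * x.1 * x.2 + x.2 ^ 2) / (2 * (1 - ρ ^ 2)) := by
    intro x
    apply div_nonneg _ (by positivity)
    nlinarith [sq_nonneg (x.1 - ρ * x.2), mul_nonneg h3.le (sq_nonneg x.2)]
  have hf0 : ∀ x, 0 ≤ f x := fun x => indicator_nonneg (fun x _ => (exp_pos _).le) x
  have hfm : Measurable f := (by fun_prop : Measurable fun x : ℝ => exp (-(1 / (1 + ρ)) * x)).indicator measurableSet_Ici
  have hR : ∀ s : ℝ, 0 < s → (μ {z | max z.1 z.2 ≤ -s}).toReal * s ^ 2 * exp (k ^ 2 * s ^ 2 / 2) =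
      ∫ x, R s x := by
    intro s hs
    have hE : MeasurableSet {z : ℝ × ℝ | max z.1 z.2 ≤ -s} :=
      measurableSet_le (by fun_prop) measurable_const
    rw [hμ, withDensity_apply _ hE]
    have e1 : (∫⁻ z in {z : ℝ × ℝ | max z.1 z.2 ≤ -s}, ENNReal.ofReal (d z)).toReal =
        ∫ z in {z : ℝ × ℝ | max z.1 z.2 ≤ -s}, d z := by
      rw [integral_eq_lintegral_of_nonneg_ae]
      · exact ae_of_all _ fun z => by simp only [d]; positivity
      · exact hdm.aestronglyMeasurable
    rw [e1, ← integral_indicator hE]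
    set G := indicator {z : ℝ × ℝ | max z.1 z.2 ≤ -s} d with hG
    have e2 : ∫ x, G (((-s, -s) : ℝ × ℝ) - s⁻¹ • x) = s ^ 2 * ∫ z, G z := by
      rw [Measure.integral_comp_smul volume (fun x => G (((-s, -s) : ℝ × ℝ) - x)) s⁻¹,
        integral_sub_left_eq_self]
      simp
    rw [mul_comm (∫ z, G z), ← e2, mul_comm, ← integral_const_mul]
    congr 1
    ext x
    have hmem : (((-s, -s) : ℝ × ℝ) - s⁻¹ • x) ∈ {z : ℝ × ℝ | max z.1 z.2 ≤ -s} ↔ 0 ≤ x.1 ∧ 0 ≤ x.2 := by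
      have hsi : 0 < s⁻¹ := by positivity
      simp [hs]
    by_cases hx : 0 ≤ x.1 ∧ 0 ≤ x.2
    · rw [hG, indicator_of_mem (hmem.2 hx)]
      simp only [R, f, d]
      rw [indicator_of_mem (by exact hx.1), indicator_of_mem (by exact hx.2)]
      rw [mul_left_comm, mul_assoc, ← Real.exp_add, ← Real.exp_add, mul_assoc cc, ← Real.exp_add, hk]
      congr 2
      simp
      have h4 : 1 - ρ ^ 2 = (1 + ρ) * (1 - ρ) := by ring
      rw [h4]
      field_simp
      ring
    · rw [hG, indicator_of_notMem (by rw [hmem]; exact hx)]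
      have : f x.1 * f x.2 = 0 := by
        rcases not_and_or.1 hx with h | h
        · simp only [f]; rw [indicator_of_notMem (by exact h), zero_mul]
        · simp only [f]; rw [indicator_of_notMem (a := x.2) (by exact h), mul_zero]
      simp only [R, this]; simp
  refine Tendsto.congr' (f₁ := fun s => ∫ x, R s x) ?_ ?_
  · filter_upwards [eventually_gt_atTop 0] with r hr using (hR r hr).symm
  apply tendsto_integral_filter_of_dominated_convergence (fun x => cc * (f x.1 * f x.2))
  · refine Eventually.of_forall fun s => Measurable.aestronglyMeasurable ?_
    simp only [R]; fun_prop
  · refine Eventually.of_forall fun s => ae_of_all _ fun x => ?_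
    have := hf0 x.1
    have := hf0 x.2
    simp only [R]
    rw [norm_of_nonneg (by positivity)]
    apply mul_le_of_le_one_right (by positivity)
    rw [exp_le_one_iff, neg_div, neg_nonpos]
    exact div_nonneg (hQ x) (sq_nonneg s)
  · exact (hfi.mul_prod hfi).const_mul _
  · refine ae_of_all _ fun x => ?_
    simp only [R]
    nth_rewrite 2 [← mul_one (cc * (f x.1 * f x.2))]
    apply Tendsto.const_mul
    rw [← Real.exp_zero]
    apply (Real.continuous_exp.tendsto _).comp
    exact tendsto_const_nhds.div_atTop (tendsto_pow_atTop two_ne_zero)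

lemma tail_one (ρ : ℝ) (hρ : ρ ∈ Set.Ioo (-1 : ℝ) 1) (μ : Measure (ℝ × ℝ))
    (hμ : μ = volume.withDensity fun z : ℝ × ℝ => ENNReal.ofReal
        ((2 * Real.pi * Real.sqrt (1 - ρ ^ 2))⁻¹ *
          Real.exp (-(z.1 ^ 2 - 2 * ρ * z.1 * z.2 + z.2 ^ 2) / (2 * (1 - ρ ^ 2))))) :
    Tendsto (fun s : ℝ => (μ {z | z.1 ≤ -s}).toReal * s ^ 1 * exp (1 ^ 2 * s ^ 2 / 2)) atTop
      (nhds (1 / √(2 * π))) := by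
  obtain ⟨hρ1, hρ2⟩ := hρ
  have h3 : 0 < 1 - ρ ^ 2 := by nlinarith
  set cc := (√(2 * π))⁻¹ with hcc
  have hcc0 : 0 < cc := by positivity
  let d : ℝ → ℝ := fun z => cc * exp (- z ^ 2 / 2)
  have hdm : Measurable d := by fun_prop
  let vv : NNReal := ⟨1 - ρ ^ 2, h3.le⟩
  have hvv : (vv : ℝ) = 1 - ρ ^ 2 := rfl
  have hvv0 : vv ≠ 0 := by
    intro h; rw [h] at hvv; simp at hvv; linarith
  have hmarg : ∀ s : ℝ, (μ {z | z.1 ≤ -s}).toReal = ∫ z in Iic (-s), d z := by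
    intro s
    have hset : {z : ℝ × ℝ | z.1 ≤ -s} = Iic (-s) ×ˢ univ := by ext z; simp
    have hm : MeasurableSet (Iic (-s) ×ˢ (univ : Set ℝ)) := measurableSet_Iic.prod MeasurableSet.univ
    rw [hset, hμ, withDensity_apply _ hm, Measure.volume_eq_prod, ← Measure.prod_restrict,
      lintegral_prod _ (by fun_prop), integral_eq_lintegral_of_nonneg_ae
      (ae_of_all _ fun z => by simp only [d]; positivity) hdm.aestronglyMeasurable]
    congr 1
    apply lintegral_congr
    intro x
    rw [Measure.restrict_univ]
    have e1 : ∀ y : ℝ, ENNReal.ofReal ((2 * Real.pi * Real.sqrt (1 - ρ ^ 2))⁻¹ *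
          Real.exp (-(x ^ 2 - 2 * ρ * x * y + y ^ 2) / (2 * (1 - ρ ^ 2)))) =
        ENNReal.ofReal (d x) * ENNReal.ofReal (ProbabilityTheory.gaussianPDFReal (ρ * x) vv y) := by
      intro y
      rw [← ENNReal.ofReal_mul (by simp only [d]; positivity)]
      congr 1
      simp only [d, ProbabilityTheory.gaussianPDFReal, hvv, hcc]
      rw [show √(2 * π * (1 - ρ ^ 2)) = √(2 * π) * √(1 - ρ ^ 2) from sqrt_mul (by positivity) _]
      have e2 : exp (-(x ^ 2 - 2 * ρ * x * y + y ^ 2) / (2 * (1 - ρ ^ 2))) =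
        exp (- x ^ 2 / 2) * exp (-(y - ρ * x) ^ 2 / (2 * (1 - ρ ^ 2))) := by
        rw [← Real.exp_add]; congr 1; field_simp; ring
      have e3 : (2 * π)⁻¹ = (√(2 * π))⁻¹ * (√(2 * π))⁻¹ := by
        rw [← mul_inv, mul_self_sqrt (by positivity)]
      rw [e2, mul_inv (2 * π), e3, mul_inv]
      ring
    simp only [e1]
    rw [lintegral_const_mul _ (by fun_prop), ProbabilityTheory.lintegral_gaussianPDFReal_eq_one _ hvv0, mul_one]
  let f : ℝ → ℝ := (Ici (0:ℝ)).indicator fun x => exp (-1 * x)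
  have hfi : Integrable f := by
    rw [integrable_indicator_iff measurableSet_Ici, integrableOn_Ici_iff_integrableOn_Ioi]
    exact integrableOn_exp_mul_Ioi (by norm_num) 0
  have hfint : ∫ x, f x = 1 := by
    rw [integral_indicator measurableSet_Ici, integral_Ici_eq_integral_Ioi,
      integral_exp_mul_Ioi (by norm_num) 0]
    simp
  have hlim : ∫ x : ℝ, cc * f x = 1 / √(2 * π) := by
    rw [integral_const_mul, hfint, hcc]; ring
  rw [← hlim]
  let R : ℝ → ℝ → ℝ := fun s x => cc * f x * exp (-(x ^ 2 / 2) / s ^ 2)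
  have hf0 : ∀ x, 0 ≤ f x := fun x => indicator_nonneg (fun x _ => (exp_pos _).le) x
  have hfm : Measurable f := (by fun_prop : Measurable fun x : ℝ => exp (-1 * x)).indicator measurableSet_Ici
  have hR : ∀ s : ℝ, 0 < s → (μ {z | z.1 ≤ -s}).toReal * s ^ 1 * exp (1 ^ 2 * s ^ 2 / 2) =
      ∫ x, R s x := by
    intro s hs
    rw [hmarg s, ← integral_indicator measurableSet_Iic]
    set G := indicator (Iic (-s)) d with hG
    have e2 : ∫ x, G (-s - s⁻¹ * x) = s * ∫ z, G z := by
      rw [Measure.integral_comp_mul_left (fun x => G (-s - x)) s⁻¹,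
        integral_sub_left_eq_self]
      simp [abs_of_pos hs]
    rw [pow_one, mul_comm (∫ z, G z), ← e2, mul_comm, ← integral_const_mul]
    congr 1
    ext x
    have hmem : (-s - s⁻¹ * x) ∈ Iic (-s) ↔ 0 ≤ x := by
      simp [hs]
    by_cases hx : 0 ≤ x
    · rw [hG, indicator_of_mem (hmem.2 hx)]
      simp only [R, f, d]
      rw [indicator_of_mem (by exact hx)]
      rw [mul_left_comm, mul_assoc, ← Real.exp_add, ← Real.exp_add]
      congr 2
      field_simp
      ring
    · rw [hG, indicator_of_notMem (by rw [hmem]; exact hx)]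
      have : f x = 0 := indicator_of_notMem (by exact hx) _
      simp only [R, this]; simp
  refine Tendsto.congr' (f₁ := fun s => ∫ x, R s x) ?_ ?_
  · filter_upwards [eventually_gt_atTop 0] with r hr using (hR r hr).symm
  apply tendsto_integral_filter_of_dominated_convergence (fun x => cc * f x)
  · refine Eventually.of_forall fun s => Measurable.aestronglyMeasurable ?_
    simp only [R]; fun_prop
  · refine Eventually.of_forall fun s => ae_of_all _ fun x => ?_
    have := hf0 x
    simp only [R]
    rw [norm_of_nonneg (by positivity)]
    apply mul_le_of_le_one_right (by positivity)
    rw [exp_le_one_iff, neg_div, neg_nonpos]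
    positivity
  · exact hfi.const_mul _
  · refine ae_of_all _ fun x => ?_
    simp only [R]
    nth_rewrite 2 [← mul_one (cc * f x)]
    apply Tendsto.const_mul
    rw [← Real.exp_zero]
    apply (Real.continuous_exp.tendsto _).comp
    exact tendsto_const_nhds.div_atTop (tendsto_pow_atTop two_ne_zero)

lemma cond_lem (p b θ : ℝ) (hp : 0 < p) (hb : 0 < b)
    {Ω : Type*} [MeasurableSpace Ω] (P : Measure Ω) [IsProbabilityMeasure P]
    (W M : Ω → ℝ) (hW : Measurable W) (hM : Measurable M)
    (hWlaw : Measure.map W P =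
      volume.withDensity fun w : ℝ => ENNReal.ofReal
        (if 0 < w then
          (b ^ 2 / 2) ^ p * w ^ (p - 1) * Real.exp (-(b ^ 2 / 2) * w) / Real.Gamma p
        else 0))
    (hindep : ProbabilityTheory.IndepFun W M P)
    (T : ℝ → ℝ) (hT : ∀ s, T s = (P {ω | M ω ≤ -s}).toReal) (y : ℝ) :
    (P {ω | θ * W ω + √(W ω) * M ω ≤ -y}).toReal =
      (b ^ 2 / 2) ^ p / Real.Gamma p *
      ∫ w in Ioi (0:ℝ), w ^ (p - 1) * exp (-(b ^ 2 / 2) * w) * T ((y + θ * w) / √w) := by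
  have hΓ : 0 < Real.Gamma p := Gamma_pos_of_pos hp
  have hTm : Measurable T := by
    have : Antitone T := by
      intro s t hst
      rw [hT, hT]
      apply ENNReal.toReal_mono (measure_ne_top _ _)
      apply measure_mono
      intro ω hω
      simp only [mem_ofPred_eq] at hω ⊢
      linarith
    exact this.measurable
  have hprod := (ProbabilityTheory.indepFun_iff_map_prod_eq_prod_map_map hW.aemeasurable
    hM.aemeasurable).1 hindep
  let S : Set (ℝ × ℝ) := {x | θ * x.1 + √x.1 * x.2 ≤ -y}
  have hS : MeasurableSet S := measurableSet_le (by fun_prop) measurable_const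
  have h1 : P {ω | θ * W ω + √(W ω) * M ω ≤ -y} = (Measure.map (fun ω => (W ω, M ω)) P) S := by
    rw [Measure.map_apply (hW.prodMk hM) hS]; rfl
  have : IsProbabilityMeasure (Measure.map M P) := Measure.isProbabilityMeasure_map hM.aemeasurable
  have hTe : ∀ s, Measure.map M P (Iic (-s)) = ENNReal.ofReal (T s) := by
    intro s
    rw [Measure.map_apply hM measurableSet_Iic, hT, ENNReal.ofReal_toReal (measure_ne_top _ _)]
    rfl
  have hT0 : ∀ s, 0 ≤ T s := fun s => by rw [hT]; exact ENNReal.toReal_nonneg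
  rw [h1, hprod, Measure.prod_apply hS, hWlaw, lintegral_withDensity_eq_lintegral_mul₀]
  · rw [← integral_const_mul, ← integral_indicator measurableSet_Ioi,
      integral_eq_lintegral_of_nonneg_ae]
    · congr 1
      apply lintegral_congr
      intro w
      by_cases hw : 0 < w
      · have hsec : Prod.mk w ⁻¹' S = Iic (-((y + θ * w) / √w)) := by
          ext z
          have hsw : 0 < √w := sqrt_pos.2 hw
          simp only [S, mem_preimage, mem_ofPred_eq, mem_Iic]
          rw [← neg_div, le_div_iff₀ hsw]
          constructor <;> intro h <;> linarith
        rw [indicator_of_mem (by exact hw), Pi.mul_apply, if_pos hw, hsec, hTe, ← ENNReal.ofReal_mul (by positivity)]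
        congr 1
        ring
      · rw [indicator_of_notMem (by exact hw), Pi.mul_apply, if_neg hw]
        simp
    · refine ae_of_all _ fun w => indicator_nonneg (fun w hw => ?_) w
      have hw' : 0 < w := hw
      have := hT0 ((y + θ * w) / √w)
      positivity
    · apply Measurable.aestronglyMeasurable
      apply Measurable.indicator _ measurableSet_Ioi
      fun_prop
  · apply Measurable.aemeasurable
    apply Measurable.ennreal_ofReal
    apply Measurable.ite measurableSet_Ioi <;> fun_prop
  · exact (measurable_measure_prodMk_left hS).aemeasurable

lemma conv_sqrt (I : ℝ → ℝ) (c p L : ℝ) (n : ℕ)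
    (h : Tendsto (fun r : ℝ => I (r ^ 2) * exp (c * r ^ 2) * r ^ n / r ^ (2 * p - 1)) atTop (nhds L)) :
    Tendsto (fun y : ℝ => I y * exp (c * y) * y ^ ((n : ℝ) / 2 - p + 1 / 2)) atTop (nhds L) := by
  have hs : Tendsto (fun y : ℝ => √y) atTop atTop := tendsto_sqrt_atTop
  refine (h.comp hs).congr' ?_
  filter_upwards [eventually_gt_atTop 0] with y hy
  simp only [Function.comp]
  have hr : 0 < √y := sqrt_pos.2 hy
  rw [sq_sqrt hy.le, mul_div_assoc, ← rpow_natCast, ← rpow_sub hr, sqrt_eq_rpow, ← rpow_mul hy.le]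
  ring_nf

lemma final_lem (p δ τ A B : ℝ) (hδ : 0 < δ) (hA : 0 < A) (F J : ℝ → ℝ)
    (hF : Tendsto (fun y : ℝ => F y * exp (δ * y) * y ^ (1 - p)) atTop (nhds A))
    (hJ : Tendsto (fun y : ℝ => J y * exp (τ * δ * y) * y ^ (3 / 2 - p)) atTop (nhds B)) :
    (∀ᶠ y in atTop, 0 < F y) ∧
    Tendsto (fun y => J y / (F y ^ τ * |log (F y)| ^ (p - 3 / 2 - (p - 1) * τ))) atTop
      (nhds (B / (A ^ τ * δ ^ (p - 3 / 2 - (p - 1) * τ)))) := by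
  have hFe : ∀ y : ℝ, 0 < y → F y = (F y * exp (δ * y) * y ^ (1 - p)) * exp (-(δ * y)) * y ^ (p - 1) := by
    intro y hy
    have h1 : y ^ (1 - p) * y ^ (p - 1) = 1 := by
      rw [← rpow_add hy]; simp
    have h2 : exp (δ * y) * exp (-(δ * y)) = 1 := by rw [← Real.exp_add]; simp
    calc F y = F y * (exp (δ * y) * exp (-(δ * y))) * (y ^ (1 - p) * y ^ (p - 1)) := by
          rw [h1, h2]; ring
      _ = _ := by ring
  set a : ℝ → ℝ := fun y => F y * exp (δ * y) * y ^ (1 - p) with ha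
  have hapos : ∀ᶠ y in atTop, 0 < a y := hF.eventually (lt_mem_nhds hA)
  refine ⟨?_, ?_⟩
  · filter_upwards [hapos, eventually_gt_atTop 0] with y h1 h2
    rw [hFe y h2]; positivity
  have hlog : Tendsto (fun y => |log (F y)| / y) atTop (nhds δ) := by
    have h1 : Tendsto (fun y => log (a y) / y) atTop (nhds 0) :=
      (hF.log hA.ne').div_atTop tendsto_id
    have h2 : Tendsto (fun y : ℝ => log y / y) atTop (nhds 0) := by
      have := Real.tendsto_pow_log_div_mul_add_atTop 1 0 1 one_ne_zero
      simpa using this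
    have h3 : Tendsto (fun y => |log (a y) / y - δ + (p - 1) * (log y / y)|) atTop
        (nhds |0 - δ + (p - 1) * 0|) := ((h1.sub_const δ).add (h2.const_mul (p - 1))).abs
    rw [show |0 - δ + (p - 1) * 0| = δ by simp [abs_of_pos hδ]] at h3
    refine h3.congr' ?_
    filter_upwards [hapos, eventually_gt_atTop 0] with y h1 h2
    have hlg : log (F y) = log (a y) - δ * y + (p - 1) * log y := by
      have h5 : F y = a y * exp (-(δ * y)) * y ^ (p - 1) := hFe y h2
      rw [h5, log_mul (by positivity) (by positivity), log_mul (by positivity) (by positivity),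
        log_exp, log_rpow h2]
      ring
    have h6 : log (a y) / y - δ + (p - 1) * (log y / y) = log (F y) / y := by
      rw [hlg]; field_simp
    rw [h6, abs_div, abs_of_pos h2]
  set e := p - 3 / 2 - (p - 1) * τ with he
  have hlim := hJ.div ((hF.rpow_const (p := τ) (Or.inl hA.ne')).mul
    (hlog.rpow_const (p := e) (Or.inl hδ.ne'))) (by positivity)
  refine hlim.congr' ?_
  filter_upwards [hapos, eventually_gt_atTop 0] with y h1 h2
  change J y * exp (τ * δ * y) * y ^ (3 / 2 - p) / (a y ^ τ * (|log (F y)| / y) ^ e) = _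
  have e1 : F y ^ τ = a y ^ τ * exp (-(τ * δ * y)) * y ^ ((p - 1) * τ) := by
    rw [hFe y h2]
    change (a y * exp (-(δ * y)) * y ^ (p - 1)) ^ τ = _
    rw [mul_rpow (by positivity) (by positivity), mul_rpow (by positivity) (by positivity),
      ← rpow_mul h2.le, ← Real.exp_mul]
    ring_nf
  rw [e1, div_rpow (abs_nonneg _) h2.le]
  have e2 : y ^ (3 / 2 - p) = (y ^ e)⁻¹ * (y ^ ((p - 1) * τ))⁻¹ := by
    rw [← rpow_neg h2.le, ← rpow_neg h2.le, ← rpow_add h2, he]; ring_nf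
  have e3 : exp (τ * δ * y) = (exp (-(τ * δ * y)))⁻¹ := by rw [← Real.exp_neg, neg_neg]
  rw [e2, e3]
  have : 0 < y ^ e := by positivity
  have : 0 < y ^ ((p - 1) * τ) := by positivity
  have : 0 < a y ^ τ := by positivity
  have := exp_pos (-(τ * δ * y))
  by_cases hz : |log (F y)| ^ e = 0
  · rw [hz]; simp
  · field_simp

lemma const_K (p b Kbar : ℝ) (hp : 0 < p) (hb : 0 < b)
    (hK : Kbar = 2 ^ (p - 1) * b ^ (-(2 * p)) * Real.Gamma p) :
    0 < Kbar ∧ (b ^ 2 / 2) ^ p / Real.Gamma p = 1 / (2 * Kbar) := by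
  have hΓ : 0 < Real.Gamma p := Gamma_pos_of_pos hp
  refine ⟨by rw [hK]; positivity, ?_⟩
  have e1 : (b ^ 2 / 2) ^ p = b ^ (2 * p) / 2 ^ p := by
    rw [div_rpow (by positivity) (by positivity), ← rpow_two, ← rpow_mul hb.le]
  have e2 : (2:ℝ) ^ p = 2 ^ (p - 1) * 2 := by rw [← rpow_add_one (by norm_num)]; ring_nf
  rw [e1, hK, rpow_neg hb.le, e2]
  have : 0 < b ^ (2 * p) := by positivity
  field_simp

lemma const_A (p θ b c δ Kbar : ℝ) (hb : 0 < b) (hδ : 0 < δ) (hK : 0 < Kbar)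
    (hc : c = √(θ ^ 2 + b ^ 2)) :
    1 / (2 * Kbar) * ((1 / c) ^ p * (1 / √(2 * π) * (√(1 / c) * c / δ) ^ 1) * √(2 * π / (1 * c))) =
      (2 * Kbar * (θ ^ 2 + b ^ 2) ^ (p / 2) * δ)⁻¹ := by
  have hc0 : 0 < c := by rw [hc]; positivity
  have e1 : (θ ^ 2 + b ^ 2) ^ (p / 2) = c ^ p := by
    rw [hc, sqrt_eq_rpow, ← rpow_mul (by positivity)]; ring_nf
  have e2 : √(2 * π / (1 * c)) = √(2 * π) / √c := by
    rw [one_mul, sqrt_div (by positivity)]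
  have e3 : √(1 / c) = 1 / √c := by rw [sqrt_div (by positivity), sqrt_one]
  have e4 : c = √c * √c := (mul_self_sqrt hc0.le).symm
  have e5 : (1 / c) ^ p = 1 / c ^ p := by rw [div_rpow (by positivity) hc0.le, one_rpow]
  rw [e1, e2, e3, e5]
  have h1 : 0 < √c := sqrt_pos.2 hc0
  have h2 : 0 < √(2 * π) := by positivity
  have h3 : 0 < c ^ p := by positivity
  field_simp
  rw [sq]; exact e4

lemma const_B (p α k β γ Kbar : ℝ) (hα : 0 < α) (hβ : 0 < β) (hγ : 0 < γ) (hK : 0 < Kbar)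
    (hk : k = √(1 + α ^ 2)) :
    1 / (2 * Kbar) * ((k / β) ^ p * (1 / (π * α * k ^ 2) * (√(k / β) * β / γ) ^ 2) * √(2 * π / (k * β))) =
      (1 + α ^ 2) ^ ((2 * p - 3) / 4) / (√(2 * π) * Kbar * β ^ (p - 1 / 2) * α * γ ^ 2) := by
  have hk0 : 0 < k := by rw [hk]; positivity
  have e1 : (1 + α ^ 2) ^ ((2 * p - 3) / 4) = k ^ p / (k * √k) := by
    have : k * √k = k ^ (3 / 2 : ℝ) := by
      rw [sqrt_eq_rpow, ← rpow_one_add' hk0.le (by norm_num)]; norm_num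
    rw [this, ← rpow_sub hk0, hk, sqrt_eq_rpow, ← rpow_mul (by positivity)]; ring_nf
  have e2 : β ^ (p - 1 / 2) = β ^ p / √β := by
    rw [rpow_sub hβ, sqrt_eq_rpow]
  have e3 : √(2 * π / (k * β)) = √(2 * π) / (√k * √β) := by
    rw [sqrt_div (by positivity), sqrt_mul hk0.le]
  have e4 : (√(k / β) * β / γ) ^ 2 = k * β / γ ^ 2 := by
    rw [div_pow, mul_pow, sq_sqrt (by positivity)]; field_simp
  have e5 : (k / β) ^ p = k ^ p / β ^ p := div_rpow hk0.le hβ.le _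
  have e6 : √(2 * π) ^ 2 = 2 * π := sq_sqrt (by positivity)
  have e7 : √β ^ 2 = β := sq_sqrt hβ.le
  rw [e1, e2, e3, e4, e5]
  have h1 : 0 < √k := sqrt_pos.2 hk0
  have h2 : 0 < √(2 * π) := by positivity
  have h3 : 0 < k ^ p := by positivity
  have h4 : 0 < β ^ p := by positivity
  have h5 : 0 < √β := sqrt_pos.2 hβ
  field_simp
  rw [e6, e7]; ring

theorem stmt_17 (p b θ ρ : ℝ) (hp : 0 < p) (hb : 0 < b) (hρ : ρ ∈ Set.Ioo (-1 : ℝ) 1)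
    {Ω : Type*} [MeasurableSpace Ω] (P : Measure Ω) [IsProbabilityMeasure P]
    (W Z₁ Z₂ : Ω → ℝ) (hW : Measurable W) (hZ : Measurable fun ω => (Z₁ ω, Z₂ ω))
    (hWlaw : Measure.map W P =
      volume.withDensity fun w : ℝ => ENNReal.ofReal
        (if 0 < w then
          (b ^ 2 / 2) ^ p * w ^ (p - 1) * Real.exp (-(b ^ 2 / 2) * w) / Real.Gamma p
        else 0))
    (hZlaw : Measure.map (fun ω => (Z₁ ω, Z₂ ω)) P =
      volume.withDensity fun z : ℝ × ℝ => ENNReal.ofReal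
        ((2 * Real.pi * Real.sqrt (1 - ρ ^ 2))⁻¹ *
          Real.exp (-(z.1 ^ 2 - 2 * ρ * z.1 * z.2 + z.2 ^ 2) / (2 * (1 - ρ ^ 2)))))
    (hindep : ProbabilityTheory.IndepFun W (fun ω => (Z₁ ω, Z₂ ω)) P)
    (X₁ X₂ : Ω → ℝ)
    (hX₁ : ∀ ω, X₁ ω = θ * W ω + Real.sqrt (W ω) * Z₁ ω)
    (hX₂ : ∀ ω, X₂ ω = θ * W ω + Real.sqrt (W ω) * Z₂ ω)
    (F Finv : ℝ → ℝ)
    (hF : ∀ x, F x = (P {ω | X₁ ω ≤ x}).toReal)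
    (hFmarg : ∀ x, F x = (P {ω | X₂ ω ≤ x}).toReal)
    (hFinv : ∀ u ∈ Ioo (0 : ℝ) 1, F (Finv u) = u)
    (α β γ δ τ Kbar A C₁ C₂ : ℝ)
    (hα : α = Real.sqrt ((1 - ρ) / (1 + ρ)))
    (hβ : β = Real.sqrt (θ ^ 2 * (1 + α ^ 2) + b ^ 2))
    (hγ : γ = β + θ * Real.sqrt (1 + α ^ 2))
    (hδ : δ = θ + Real.sqrt (θ ^ 2 + b ^ 2))
    (hτ : τ = Real.sqrt (1 + α ^ 2) * γ / δ)
    (hK : Kbar = 2 ^ (p - 1) * b ^ (-(2 * p)) * Real.Gamma p)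
    (hA : A = (2 * Kbar * (θ ^ 2 + b ^ 2) ^ (p / 2) * δ)⁻¹)
    (hC₁ : C₁ = (1 + α ^ 2) ^ ((2 * p - 3) / 4) /
      (Real.sqrt (2 * Real.pi) * Kbar * β ^ (p - 1 / 2) * α * γ ^ 2 * δ ^ (p - 3 / 2)))
    (hC₂ : C₂ = A ^ (-τ) * δ ^ ((p - 1) * τ)) :
    Tendsto
      (fun u => (P {ω | X₁ ω ≤ Finv u ∧ X₂ ω ≤ Finv u}).toReal /
        (u ^ τ * |Real.log u| ^ (p - 3 / 2 - (p - 1) * τ)))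
      (nhdsWithin 0 (Ioi 0)) (nhds (C₁ * C₂)) := by
  have hρ' := hρ
  obtain ⟨hρ1, hρ2⟩ := hρ'
  have h1ρ : 0 < 1 + ρ := by linarith
  have h2ρ : 0 < 1 - ρ := by linarith
  have hα0 : 0 < α := by rw [hα]; positivity
  have hα2 : 1 + α ^ 2 = 2 / (1 + ρ) := by
    rw [hα, sq_sqrt (by positivity)]; field_simp; ring
  obtain ⟨k, hk⟩ : ∃ k, k = √(1 + α ^ 2) := ⟨_, rfl⟩
  have hk0 : 0 < k := by rw [hk]; positivity
  have hk2 : k ^ 2 = 1 + α ^ 2 := by rw [hk]; exact sq_sqrt (by positivity)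
  have hZ1 : Measurable Z₁ := hZ.fst
  have hZ2 : Measurable Z₂ := hZ.snd
  have hMm : Measurable fun ω => max (Z₁ ω) (Z₂ ω) := hZ1.max hZ2
  obtain ⟨hK0, hKe⟩ := const_K p b Kbar hp hb hK
  -- the two tail functions
  let T₁ : ℝ → ℝ := fun s => (P {ω | Z₁ ω ≤ -s}).toReal
  let T₂ : ℝ → ℝ := fun s => (P {ω | max (Z₁ ω) (Z₂ ω) ≤ -s}).toReal
  have hgen : ∀ M : Ω → ℝ, Measurable (fun s : ℝ => (P {ω | M ω ≤ -s}).toReal) := by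
    intro M
    have : Antitone (fun s : ℝ => (P {ω | M ω ≤ -s}).toReal) := by
      intro s t hst
      apply ENNReal.toReal_mono (measure_ne_top _ _)
      apply measure_mono
      intro ω hω
      simp only [mem_ofPred_eq] at hω ⊢
      linarith
    exact this.measurable
  have hle1 : ∀ S : Set Ω, (P S).toReal ≤ 1 := fun S =>
    ENNReal.toReal_le_of_le_ofReal zero_le_one (by simpa using prob_le_one)
  have ht1 : Tendsto (fun s : ℝ => T₁ s * s ^ 1 * exp (1 ^ 2 * s ^ 2 / 2)) atTop
      (nhds (1 / √(2 * π))) := by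
    refine (tail_one ρ hρ _ hZlaw).congr fun s => ?_
    rw [Measure.map_apply hZ (measurableSet_le measurable_fst measurable_const)]
    rfl
  have ht2 : Tendsto (fun s : ℝ => T₂ s * s ^ 2 * exp (k ^ 2 * s ^ 2 / 2)) atTop
      (nhds (1 / (π * α * k ^ 2))) := by
    refine (tail_two ρ k α hρ (hk2.trans hα2) hα _ hZlaw).congr fun s => ?_
    rw [Measure.map_apply hZ (measurableSet_le (by fun_prop) measurable_const)]
    rfl
  have hδ' : δ = √(θ ^ 2 * 1 ^ 2 + b ^ 2) + θ * 1 := by rw [hδ]; ring_nf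
  have hβ' : β = √(θ ^ 2 * k ^ 2 + b ^ 2) := by rw [hβ, hk2]
  have hγ' : γ = β + θ * k := by rw [hγ, hk]
  obtain ⟨hc0, hδ0, hL1⟩ := laplace p b θ 1 _ δ _ 1 hb one_pos rfl hδ' T₁ (hgen _)
    (fun s => ENNReal.toReal_nonneg) (fun s => hle1 _) ht1
  obtain ⟨hβ0, hγ0, hL2⟩ := laplace p b θ k β γ _ 2 hb hk0 hβ' hγ' T₂ (hgen _)
    (fun s => ENNReal.toReal_nonneg) (fun s => hle1 _) ht2
  let J : ℝ → ℝ := fun y => (P {ω | X₁ ω ≤ -y ∧ X₂ ω ≤ -y}).toReal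
  have hind1 : ProbabilityTheory.IndepFun W Z₁ P := hindep.comp measurable_id measurable_fst
  have hind2 : ProbabilityTheory.IndepFun W (fun ω => max (Z₁ ω) (Z₂ ω)) P :=
    hindep.comp (φ := id) (ψ := fun z : ℝ × ℝ => max z.1 z.2) measurable_id (by fun_prop)
  have hFy : ∀ y, F (-y) = 1 / (2 * Kbar) *
      ∫ w in Ioi (0:ℝ), w ^ (p - 1) * exp (-(b ^ 2 / 2) * w) * T₁ ((y + θ * w) / √w) := by
    intro y
    rw [hF, ← hKe, ← cond_lem p b θ hp hb P W Z₁ hW hZ1 hWlaw hind1 T₁ (fun _ => rfl) y]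
    simp only [hX₁]
  have hJy : ∀ y, J y = 1 / (2 * Kbar) *
      ∫ w in Ioi (0:ℝ), w ^ (p - 1) * exp (-(b ^ 2 / 2) * w) * T₂ ((y + θ * w) / √w) := by
    intro y
    rw [← hKe, ← cond_lem p b θ hp hb P W _ hW hMm hWlaw hind2 T₂ (fun _ => rfl) y]
    simp only [J, hX₁, hX₂]
    congr 2
    ext ω
    simp only [mem_ofPred_eq]
    rw [mul_max_of_nonneg _ _ (sqrt_nonneg _), ← max_add_add_left, max_le_iff]
  have hFl : Tendsto (fun y : ℝ => F (-y) * exp (δ * y) * y ^ (1 - p)) atTop (nhds A) := by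
    have h := (hL1.const_mul (1 / (2 * Kbar)))
    rw [const_A p θ b _ δ Kbar hb hδ0 hK0 (by simp), ← hA] at h
    have h' := conv_sqrt (fun y => F (-y)) δ p A 1 (h.congr fun r => by
      simp only [hFy, one_mul]; ring)
    convert h' using 4
    push_cast; ring
  have hτδ : τ * δ = k * γ := by rw [hτ, ← hk]; field_simp
  obtain ⟨B, hB⟩ : ∃ B, B = (1 + α ^ 2) ^ ((2 * p - 3) / 4) /
    (√(2 * π) * Kbar * β ^ (p - 1 / 2) * α * γ ^ 2) := ⟨_, rfl⟩
  have hJl : Tendsto (fun y : ℝ => J y * exp (τ * δ * y) * y ^ (3 / 2 - p)) atTop (nhds B) := by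
    have h := (hL2.const_mul (1 / (2 * Kbar)))
    rw [const_B p α k β γ Kbar hα0 hβ0 hγ0 hK0 hk, ← hB] at h
    have h' := conv_sqrt J (k * γ) p B 2 (h.congr fun r => by
      simp only [hJy]; ring)
    rw [hτδ]
    convert h' using 4
    push_cast; ring
  have hA0 : 0 < A := by rw [hA]; positivity
  obtain ⟨hFpos, hmain⟩ := final_lem p δ τ A B hδ0 hA0 (fun y => F (-y)) J hFl hJl
  have hconst : B / (A ^ τ * δ ^ (p - 3 / 2 - (p - 1) * τ)) = C₁ * C₂ := by
    rw [hC₁, hC₂, hB, rpow_neg hA0.le, rpow_sub hδ0]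
    have h1 : 0 < A ^ τ := by positivity
    have h2 : 0 < δ ^ (p - 3 / 2) := by positivity
    have h3 : 0 < δ ^ ((p - 1) * τ) := by positivity
    have h4 : 0 < β ^ (p - 1 / 2) := by positivity
    field_simp
  rw [hconst] at hmain
  have hFmono : Monotone F := by
    intro x y hxy
    rw [hF, hF]
    apply ENNReal.toReal_mono (measure_ne_top _ _)
    apply measure_mono
    intro ω hω
    simp only [mem_ofPred_eq] at hω ⊢
    linarith
  have hu01 : ∀ᶠ u : ℝ in nhdsWithin 0 (Ioi 0), u ∈ Ioo (0:ℝ) 1 :=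
    Ioo_mem_nhdsGT one_pos
  have hy : Tendsto (fun u => - Finv u) (nhdsWithin 0 (Ioi 0)) atTop := by
    rw [tendsto_atTop]
    intro m
    obtain ⟨y, hy1, hy2⟩ := (hFpos.and (eventually_ge_atTop m)).exists
    filter_upwards [hu01, Ioo_mem_nhdsGT hy1] with u hu hu2
    by_contra hcon
    push Not at hcon
    have h5 : F (-y) ≤ F (Finv u) := hFmono (by linarith)
    rw [hFinv u hu] at h5
    linarith [hu2.2]
  refine (hmain.comp hy).congr' ?_
  filter_upwards [hu01] with u hu
  simp only [Function.comp, J, neg_neg, hFinv u hu]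
end

section
/- Let θ ∈ ℝ, α > 0, b > 0, and set β = √(θ²(1+α²)+b²), γ = β + θ·√(1+α²), δ = θ + √(θ²+b²), and τ = √(1+α²)·γ/δ. Then δ > 0, γ > 0, and τ > 1. -/
/-- The tail order τ = √(1+α²)·γ/δ of the equi-skew GH copula, where
β = √(θ²(1+α²)+b²), γ = β + θ√(1+α²) and δ = θ + √(θ²+b²), satisfies δ > 0, γ > 0 and
τ > 1. -/
theorem stmt_18 (θ α b : ℝ) (hα : 0 < α) (hb : 0 < b)
    (β γ δ τ : ℝ)
    (hβ : β = Real.sqrt (θ ^ 2 * (1 + α ^ 2) + b ^ 2))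
    (hγ : γ = β + θ * Real.sqrt (1 + α ^ 2))
    (hδ : δ = θ + Real.sqrt (θ ^ 2 + b ^ 2))
    (hτ : τ = Real.sqrt (1 + α ^ 2) * γ / δ) :
    0 < δ ∧ 0 < γ ∧ 1 < τ := by
  obtain ⟨s, hs⟩ : ∃ s, s = Real.sqrt (1 + α ^ 2) := ⟨_, rfl⟩
  obtain ⟨r, hr⟩ : ∃ r, r = Real.sqrt (θ ^ 2 + b ^ 2) := ⟨_, rfl⟩
  rw [← hs] at hγ hτ
  rw [← hr] at hδ
  have hb2 : 0 < b ^ 2 := by positivity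
  have ha2 : 0 < α ^ 2 := by positivity
  have hs0 : 0 < s := by rw [hs]; positivity
  have hr0 : 0 < r := by rw [hr]; positivity
  have hβ0 : 0 < β := by rw [hβ]; positivity
  have hs2 : s ^ 2 = 1 + α ^ 2 := by rw [hs]; exact Real.sq_sqrt (by positivity)
  have hr2 : r ^ 2 = θ ^ 2 + b ^ 2 := by rw [hr]; exact Real.sq_sqrt (by positivity)
  have hβ2 : β ^ 2 = θ ^ 2 * s ^ 2 + b ^ 2 := by
    rw [hβ, hs2]; exact Real.sq_sqrt (by positivity)
  have h1 : |θ| < r := abs_lt_of_sq_lt_sq (by linarith) hr0.le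
  have h2 : |θ * s| < β := abs_lt_of_sq_lt_sq (by rw [mul_pow]; linarith) hβ0.le
  rw [abs_lt] at h1 h2
  have hδ0 : 0 < δ := by linarith [h1.1]
  have hγ0 : 0 < γ := by linarith [h2.1]
  have h3 : β < s * r := by
    apply lt_of_pow_lt_pow_left₀ 2 (by positivity)
    rw [mul_pow, hβ2, hr2, hs2]
    nlinarith [mul_pos ha2 hb2]
  refine ⟨hδ0, hγ0, ?_⟩
  rw [hτ, lt_div_iff₀ hδ0, one_mul]
  have e1 : γ * (β - θ * s) = b ^ 2 := by rw [hγ]; linear_combination hβ2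
  have e2 : δ * (r - θ) = b ^ 2 := by rw [hδ]; linear_combination hr2
  have h4 : 0 < γ * δ * (s * r - β) := mul_pos (mul_pos hγ0 hδ0) (sub_pos.mpr h3)
  have h5 : γ * δ * (s * r - β) = (s * γ - δ) * b ^ 2 := by
    linear_combination s * γ * e2 - δ * e1
  rw [h5] at h4
  linarith [(mul_pos_iff_of_pos_right hb2).mp h4]
end
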